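/- Let p be an odd prime, e = p, I = Z/pZ, and take the multicharge κ = (0) (level ℓ = 1, Λ = Λ_0). Then the group algebra Z_(p)S_n of the symmetric group S_n over the localisation Z_(p) of Z at the prime p is generated as a Z_(p)-algebra by elements f_i (i ∈ I^n), ψ_1,…,ψ_{n−1}, y_1,…,y_n subject only to the relations: y_1 f_i = 0 if i_1 = 0 and f_i = 0 if i_1 ≠ 0 (the cyclotomic relation (y_1)^{(Λ,α_{i_1})} f_i = 0); f_i f_j = δ_{ij} f_i; Σ_{i∈I^n} f_i = 1; y_r f_i = f_i y_r; ψ_r f_i = f_{s_r·i} ψ_r; y_r y_s = y_s y_r; ψ_r y_{r+1} f_i = (y_r ψ_r + δ_{i_r i_{r+1}}) f_i; y_{r+1} ψ_r f_i = (ψ_r y_r + δ_{i_r i_{r+1}}) f_i; ψ_r y_s = y_s ψ_r for s ≠ r,r+1; ψ_r ψ_s = ψ_s ψ_r for |r−s| > 1; ψ_r² f_i equals (y_r − y_{r+1}) f_i if i_r → i_{r+1} ≠ 0, (y_r + p − y_{r+1}) f_i if i_r → i_{r+1} = 0, (y_{r+1} − y_r) f_i if 0 ≠ i_r ← i_{r+1},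 (y_{r+1} + p − y_r) f_i if 0 = i_r ← i_{r+1}, 0 if i_r = i_{r+1}, and f_i otherwise; and (ψ_r ψ_{r+1} ψ_r − ψ_{r+1} ψ_r ψ_{r+1}) f_i equals −f_i if i_{r+2} = i_r → i_{r+1}, f_i if i_{r+2} = i_r ← i_{r+1}, and 0 otherwise. That is, Z_(p)S_n is isomorphic as a Z_(p)-algebra to the algebra presented by these generators and relations. -/

import Mathlib

open scoped BigOperators
open scoped Classical

namespace Paper

/-! ## Quantum integers -/

/-- The quantum integer `[d]_x` in a field, for `d ∈ ℤ`. -/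
noncomputable def qint {K : Type*} [Field K] (x : K) (d : ℤ) : K :=
  if 0 ≤ d then ∑ k ∈ Finset.range d.toNat, x ^ k
  else -∑ k ∈ Finset.range (-d).toNat, x ^ (-((k : ℤ) + 1))

/-- The quantum integer `[d]_t` in a commutative ring, for an invertible `t` and `d ∈ ℤ`. -/
def qintU {O : Type*} [CommRing O] (t : Oˣ) (d : ℤ) : O :=
  if 0 ≤ d then ∑ k ∈ Finset.range d.toNat, (t : O) ^ k
  else -∑ k ∈ Finset.range (-d).toNat, ((t ^ (-((k : ℤ) + 1)) : Oˣ) : O)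

/-! ## Nodes, multipartitions and standard tableaux -/

/-- A node `(l, r, c)`: component `l`, row `r`, column `c` (all `0`-based). -/
abbrev Node : Type := ℕ × ℕ × ℕ

/-- `nodeBelow A B` holds when `B` is strictly below `A`, i.e. `A < B` lexicographically. -/
def nodeBelow (A B : Node) : Prop :=
  A.1 < B.1 ∨ (A.1 = B.1 ∧ (A.2.1 < B.2.1 ∨ (A.2.1 = B.2.1 ∧ A.2.2 < B.2.2)))

/-- An `ℓ`-multipartition of `n`. -/
structure Multipartition (ℓ n : ℕ) : Type where
  part : ℕ → ℕ → ℕ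
  comp_bound : ∀ l, ℓ ≤ l → ∀ r, part l r = 0
  antitone : ∀ l, Antitone (part l)
  row_bound : ∀ l r, n ≤ r → part l r = 0
  size : (∑ l ∈ Finset.range ℓ, ∑ r ∈ Finset.range n, part l r) = n

/-- The diagram of a multipartition. -/
def Multipartition.diagram {ℓ n : ℕ} (μ : Multipartition ℓ n) : Set Node :=
  {A | A.2.2 < μ.part A.1 A.2.1}

/-- A standard tableau: a bijection from the diagram of its shape onto `{1, …, n}`
that increases along rows and down columns of each component (it takes the value
`0` off the diagram, so that it is determined by its entries). -/
structure StdTableau (ℓ n : ℕ) : Type where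
  shape : Multipartition ℓ n
  entry : Node → ℕ
  entry_zero : ∀ A, A ∉ shape.diagram → entry A = 0
  bijOn : Set.BijOn entry shape.diagram (Set.Icc 1 n)
  row_inc : ∀ l r c, (l, r, c + 1) ∈ shape.diagram → entry (l, r, c) < entry (l, r, c + 1)
  col_inc : ∀ l r c, (l, r + 1, c) ∈ shape.diagram → entry (l, r, c) < entry (l, r + 1, c)

/-- The node of a standard tableau containing the entry `k`. -/
noncomputable def StdTableau.node {ℓ n : ℕ} (T : StdTableau ℓ n) (k : ℕ) : Node :=
  Function.invFunOn T.entry T.shape.diagram k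

/-- The content `c_k(T) = κ_l + c - r` of the entry `k` in the tableau `T`
(`1 ≤ k ≤ n`). -/
noncomputable def content {ℓ n : ℕ} (κ : ℕ → ℤ) (T : StdTableau ℓ n) (k : ℕ) : ℤ :=
  κ (T.node k).1 + ((T.node k).2.2 : ℤ) - ((T.node k).2.1 : ℤ)

/-- The residue sequence of a standard tableau, in `I^n` with `I = ℤ/eℤ`. -/
noncomputable def resSeq {ℓ n : ℕ} (e : ℕ) (κ : ℕ → ℤ) (T : StdTableau ℓ n) :
    Fin n → ZMod e :=
  fun k => ((content κ T (k.1 + 1) : ℤ) : ZMod e)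

/-- The residue of a node. -/
def resNode (e : ℕ) (κ : ℕ → ℤ) (A : Node) : ZMod e :=
  ((κ A.1 + (A.2.2 : ℤ) - (A.2.1 : ℤ) : ℤ) : ZMod e)

/-- A set of nodes is the diagram of a multipartition (with at most `ℓ` components)
iff it is finite and downward closed in rows and columns. -/
def IsDiagramSet (ℓ : ℕ) (S : Set Node) : Prop :=
  S.Finite ∧ (∀ A ∈ S, A.1 < ℓ) ∧
    (∀ l r c, (l, r, c + 1) ∈ S → (l, r, c) ∈ S) ∧
    (∀ l r c, (l, r + 1, c) ∈ S → (l, r, c) ∈ S)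

/-- `A` is an addable node of the diagram `S`. -/
def Addable (ℓ : ℕ) (S : Set Node) (A : Node) : Prop :=
  A ∉ S ∧ IsDiagramSet ℓ (S ∪ {A})

/-- `A` is a removable node of the diagram `S`. -/
def Removable (ℓ : ℕ) (S : Set Node) (A : Node) : Prop :=
  A ∈ S ∧ IsDiagramSet ℓ (S \ {A})

/-- `d_A(S)`: the number of addable nodes of `S` of the same residue as `A` strictly
below `A`, minus the number of removable ones. -/
noncomputable def dNode (ℓ e : ℕ) (κ : ℕ → ℤ) (S : Set Node) (A : Node) : ℤ :=
  (Set.ncard {B | Addable ℓ S B ∧ resNode e κ B = resNode e κ A ∧ nodeBelow A B} : ℤ) -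
    (Set.ncard {B | Removable ℓ S B ∧ resNode e κ B = resNode e κ A ∧ nodeBelow A B} : ℤ)

/-- The Brundan–Kleshchev–Wang degree `deg_e(T)` of a standard tableau, written as the
telescoping sum of the recursion `deg_e(T) = deg_e(T↓(n-1)) + d_A(Shape(T))`. -/
noncomputable def degE {ℓ n : ℕ} (e : ℕ) (κ : ℕ → ℤ) (T : StdTableau ℓ n) : ℤ :=
  ∑ m ∈ Finset.Icc 1 n,
    dNode ℓ e κ {A | A ∈ T.shape.diagram ∧ T.entry A ≤ m} (T.node m)

/-- The restriction of the diagram of `T` to entries `≤ m` (the diagram of `Shape(T↓m)`). -/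
def restDiag {ℓ n : ℕ} (T : StdTableau ℓ n) (m : ℕ) : Set Node :=
  {A | A ∈ T.shape.diagram ∧ T.entry A ≤ m}

/-- Dominance order on standard tableaux: `domTab S T` iff `S ⊵ T`. -/
def domTab {ℓ n : ℕ} (S T : StdTableau ℓ n) : Prop :=
  ∀ m l i : ℕ,
    Set.ncard {A | A ∈ restDiag T m ∧ (A.1 < l ∨ (A.1 = l ∧ A.2.1 ≤ i))} ≤
      Set.ncard {A | A ∈ restDiag S m ∧ (A.1 < l ∨ (A.1 = l ∧ A.2.1 ≤ i))}

/-- Interchange the entries `r` and `r + 1` in an entry function. -/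
def swapEntry (f : Node → ℕ) (r : ℕ) : Node → ℕ :=
  fun A => if f A = r then r + 1 else if f A = r + 1 then r else f A

/-- `ρ_r(T) = c_r(T) - c_{r+1}(T)`, the axial distance. -/
noncomputable def rhoTab {ℓ n : ℕ} (κ : ℕ → ℤ) (T : StdTableau ℓ n) (r : ℕ) : ℤ :=
  content κ T r - content κ T (r + 1)

/-- The entry function of the row-reading initial tableau `t^λ`. -/
noncomputable def tlamEntry {ℓ n : ℕ} (μ : Multipartition ℓ n) (A : Node) : ℕ :=
  if A ∈ μ.diagram then
    (∑ l ∈ Finset.range A.1, ∑ r ∈ Finset.range n, μ.part l r) +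
      (∑ r ∈ Finset.range A.2.1, μ.part A.1 r) + A.2.2 + 1
  else 0

/-- The finite set of possible contents of standard tableaux of size `n`. -/
noncomputable def contFinset (ℓ n : ℕ) (κ : ℕ → ℤ) : Finset ℤ :=
  ((Finset.range ℓ ×ˢ Finset.range n ×ˢ Finset.range n).image
      (fun x => κ x.1 + (x.2.2 : ℤ) - (x.2.1 : ℤ))).filter
    (fun c => ∃ T : StdTableau ℓ n, ∃ k, 1 ≤ k ∧ k ≤ n ∧ content κ T k = c)

/-- The standard tableau (if any) obtained from `T` by interchanging the entries
`r` and `r + 1`; i.e. `T·s_r` if it is standard, and `none` otherwise. -/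
noncomputable def oSwapO {ℓ n : ℕ} (T : StdTableau ℓ n) (r : ℕ) :
    Option (StdTableau ℓ n) :=
  if h : ∃ V : StdTableau ℓ n, V.entry = swapEntry T.entry r then some (Classical.choose h)
  else none

/-- `oSwap` extended to `Option`. -/
noncomputable def oSwap {ℓ n : ℕ} (X : Option (StdTableau ℓ n)) (r : ℕ) :
    Option (StdTableau ℓ n) :=
  X.bind fun T => oSwapO T r

/-- Evaluate a seminormal coefficient system on an optional tableau (by `0` if none). -/
noncomputable def aE {ℓ n : ℕ} {K : Type*} [Field K] (α : ℕ → StdTableau ℓ n → K) (r : ℕ)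
    (X : Option (StdTableau ℓ n)) : K :=
  X.elim 0 (α r)

/-! ## Separation and idempotent subrings -/

/-- `(K, t)` separates `Std(P_n)` (field version):
`[n]!_t ∏_{1 ≤ l < m ≤ ℓ} ∏_{-n < d < n} [κ_l - κ_m + d]_t ≠ 0`. -/
def SeparatesF {K : Type*} [Field K] (t : Kˣ) (n ℓ : ℕ) (κ : ℕ → ℤ) : Prop :=
  ((∏ d ∈ Finset.Icc 1 n, qint (t : K) (d : ℤ)) *
      ∏ l ∈ Finset.range ℓ, ∏ m ∈ Finset.Ioo l ℓ,
        ∏ d ∈ Finset.Ioo (-(n : ℤ)) (n : ℤ), qint (t : K) (κ l - κ m + d)) ≠ 0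

/-- `(O, t)` separates `Std(P_n)` (subring version): the separation element is a unit. -/
def SeparatesU {O : Type*} [CommRing O] (t : Oˣ) (n ℓ : ℕ) (κ : ℕ → ℤ) : Prop :=
  IsUnit ((∏ d ∈ Finset.Icc 1 n, qintU t (d : ℤ)) *
      ∏ l ∈ Finset.range ℓ, ∏ m ∈ Finset.Ioo l ℓ,
        ∏ d ∈ Finset.Ioo (-(n : ℤ)) (n : ℤ), qintU t (κ l - κ m + d))

/-- `(O, t)` is an `e`-idempotent subring of the field `K`. -/
def IsIdempotentSubring {K : Type*} [Field K] (O : Subring K) (t : Oˣ) (e n ℓ : ℕ)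
    (κ : ℕ → ℤ) : Prop :=
  SeparatesU t n ℓ κ ∧
    (∀ k : ℤ, ¬(e : ℤ) ∣ k → IsUnit (qintU t k)) ∧
    (∀ k : ℤ, (e : ℤ) ∣ k → qintU t k ∈ Ideal.jacobson (⊥ : Ideal O))

/-! ## The cyclotomic Hecke algebra, by generators and relations -/

/-- Generators `L_1, …, L_n`, `T_1, …, T_{n-1}` (here `0`-based). -/
inductive HeckeGen (n : ℕ) : Type
  | L : Fin n → HeckeGen n
  | T : Fin (n - 1) → HeckeGen n

/-- The position `r` of the pair `(r, r+1)` interchanged by the `r`-th transposition. -/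
def pL {n : ℕ} (r : Fin (n - 1)) : Fin n := ⟨r.1, by have := r.2; omega⟩

/-- The position `r + 1` of the pair interchanged by the `r`-th transposition. -/
def pR {n : ℕ} (r : Fin (n - 1)) : Fin n := ⟨r.1 + 1, by have := r.2; omega⟩

/-- The position `r + 2`, used in braid relations. -/
def pM {n : ℕ} (r : Fin (n - 1)) (hr : r.1 + 1 < n - 1) : Fin n := ⟨r.1 + 2, by omega⟩

/-- The free algebra generator `L_k`. -/
def hL (R : Type*) [CommRing R] {n : ℕ} (k : Fin n) : FreeAlgebra R (HeckeGen n) :=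
  FreeAlgebra.ι R (HeckeGen.L k)

/-- The free algebra generator `T_r`. -/
def hT (R : Type*) [CommRing R] {n : ℕ} (r : Fin (n - 1)) : FreeAlgebra R (HeckeGen n) :=
  FreeAlgebra.ι R (HeckeGen.T r)

/-- The defining relations of the integral cyclotomic Hecke algebra `H_n(R, t, κ)`. -/
inductive HeckeRel (R : Type*) [CommRing R] (t : Rˣ) (n ℓ : ℕ) (κ : ℕ → ℤ) :
    FreeAlgebra R (HeckeGen n) → FreeAlgebra R (HeckeGen n) → Prop
  | cyc (h : 0 < n) :
      HeckeRel R t n ℓ κ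
        (((List.range ℓ).map fun l =>
          hL R (⟨0, h⟩ : Fin n) - algebraMap R _ (qintU t (κ l))).prod) 0
  | quad (r : Fin (n - 1)) :
      HeckeRel R t n ℓ κ ((hT R r + 1) * (hT R r - algebraMap R _ (t : R))) 0
  | LL (k m : Fin n) : HeckeRel R t n ℓ κ (hL R k * hL R m) (hL R m * hL R k)
  | TTfar (r s : Fin (n - 1)) (h : r.1 + 1 < s.1 ∨ s.1 + 1 < r.1) :
      HeckeRel R t n ℓ κ (hT R r * hT R s) (hT R s * hT R r)
  | braid (r s : Fin (n - 1)) (h : s.1 = r.1 + 1) :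
      HeckeRel R t n ℓ κ (hT R r * hT R s * hT R r) (hT R s * hT R r * hT R s)
  | TL (r : Fin (n - 1)) (k : Fin n) (h : k.1 ≠ r.1 ∧ k.1 ≠ r.1 + 1) :
      HeckeRel R t n ℓ κ (hT R r * hL R k) (hL R k * hT R r)
  | LT (r : Fin (n - 1)) :
      HeckeRel R t n ℓ κ (hL R (pR r) * (hT R r - algebraMap R _ (t : R) + 1))
        (hT R r * hL R (pL r) + 1)

/-- The integral cyclotomic Hecke algebra of type `A`, `H_n(R, t, κ)`. -/
noncomputable abbrev CycHecke (R : Type*) [CommRing R] (t : Rˣ) (n ℓ : ℕ) (κ : ℕ → ℤ) :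
    Type _ :=
  RingQuot (HeckeRel R t n ℓ κ)

/-- The generator `L_k` of the cyclotomic Hecke algebra. -/
noncomputable def Lgen (R : Type*) [CommRing R] (t : Rˣ) (n ℓ : ℕ) (κ : ℕ → ℤ)
    (k : Fin n) : CycHecke R t n ℓ κ :=
  RingQuot.mkAlgHom R (HeckeRel R t n ℓ κ) (hL R k)

/-- The generator `T_r` of the cyclotomic Hecke algebra. -/
noncomputable def Tgen (R : Type*) [CommRing R] (t : Rˣ) (n ℓ : ℕ) (κ : ℕ → ℤ)
    (r : Fin (n - 1)) : CycHecke R t n ℓ κ :=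
  RingQuot.mkAlgHom R (HeckeRel R t n ℓ κ) (hT R r)

end Paper
/-! ## Quiver Hecke (KLR) algebras, by generators and relations -/

namespace Paper

/-- Generators `e(i)` (`i ∈ I^n`), `ψ_1, …, ψ_{n-1}`, `y_1, …, y_n` (here `0`-based). -/
inductive KLRGen (n e : ℕ) : Type
  | idem : (Fin n → ZMod e) → KLRGen n e
  | psi : Fin (n - 1) → KLRGen n e
  | y : Fin n → KLRGen n e

/-- The free algebra generator `e(i)`. -/
def kE (R : Type*) [CommRing R] {n e : ℕ} (i : Fin n → ZMod e) :
    FreeAlgebra R (KLRGen n e) :=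
  FreeAlgebra.ι R (KLRGen.idem i)

/-- The free algebra generator `ψ_r`. -/
def kPsi (R : Type*) [CommRing R] {n e : ℕ} (r : Fin (n - 1)) :
    FreeAlgebra R (KLRGen n e) :=
  FreeAlgebra.ι R (KLRGen.psi r)

/-- The free algebra generator `y_k`. -/
def kY (R : Type*) [CommRing R] {n e : ℕ} (k : Fin n) : FreeAlgebra R (KLRGen n e) :=
  FreeAlgebra.ι R (KLRGen.y k)

/-- `s_r · i`: interchange the entries of `i` at positions `r` and `r + 1`. -/
def swapSeq {n e : ℕ} (i : Fin n → ZMod e) (r : Fin (n - 1)) : Fin n → ZMod e :=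
  fun k => if k = pL r then i (pR r) else if k = pR r then i (pL r) else i k

/-- The defining relations of the cyclotomic quiver Hecke algebra `R_n^Λ(R)` where
`Λ = Σ_l Λ_{κ_l mod e}`. -/
inductive KLRRel (R : Type*) [CommRing R] (n e ℓ : ℕ) [NeZero e] (κ : ℕ → ℤ) :
    FreeAlgebra R (KLRGen n e) → FreeAlgebra R (KLRGen n e) → Prop
  | cyc (h : 0 < n) (i : Fin n → ZMod e) :
      KLRRel R n e ℓ κ
        ((kY R (⟨0, h⟩ : Fin n)) ^
            (((Finset.range ℓ).filter fun l => ((κ l : ZMod e) = i ⟨0, h⟩)).card) *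
          kE R i) 0
  | orth (i j : Fin n → ZMod e) (h : i ≠ j) : KLRRel R n e ℓ κ (kE R i * kE R j) 0
  | idem (i : Fin n → ZMod e) : KLRRel R n e ℓ κ (kE R i * kE R i) (kE R i)
  | complete : KLRRel R n e ℓ κ (∑ i : Fin n → ZMod e, kE R i) 1
  | yE (k : Fin n) (i : Fin n → ZMod e) :
      KLRRel R n e ℓ κ (kY R k * kE R i) (kE R i * kY R k)
  | psiE (r : Fin (n - 1)) (i : Fin n → ZMod e) :
      KLRRel R n e ℓ κ (kPsi R r * kE R i) (kE R (swapSeq i r) * kPsi R r)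
  | yy (k m : Fin n) : KLRRel R n e ℓ κ (kY R k * kY R m) (kY R m * kY R k)
  | psiyEq (r : Fin (n - 1)) (i : Fin n → ZMod e) (h : i (pL r) = i (pR r)) :
      KLRRel R n e ℓ κ (kPsi R r * kY R (pR r) * kE R i)
        ((kY R (pL r) * kPsi R r + 1) * kE R i)
  | psiyNe (r : Fin (n - 1)) (i : Fin n → ZMod e) (h : i (pL r) ≠ i (pR r)) :
      KLRRel R n e ℓ κ (kPsi R r * kY R (pR r) * kE R i)
        (kY R (pL r) * kPsi R r * kE R i)
  | ypsiEq (r : Fin (n - 1)) (i : Fin n → ZMod e) (h : i (pL r) = i (pR r)) :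
      KLRRel R n e ℓ κ (kY R (pR r) * kPsi R r * kE R i)
        ((kPsi R r * kY R (pL r) + 1) * kE R i)
  | ypsiNe (r : Fin (n - 1)) (i : Fin n → ZMod e) (h : i (pL r) ≠ i (pR r)) :
      KLRRel R n e ℓ κ (kY R (pR r) * kPsi R r * kE R i)
        (kPsi R r * kY R (pL r) * kE R i)
  | psiyFar (r : Fin (n - 1)) (k : Fin n) (h : k.1 ≠ r.1 ∧ k.1 ≠ r.1 + 1) :
      KLRRel R n e ℓ κ (kPsi R r * kY R k) (kY R k * kPsi R r)
  | psipsiFar (r s : Fin (n - 1)) (h : r.1 + 1 < s.1 ∨ s.1 + 1 < r.1) :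
      KLRRel R n e ℓ κ (kPsi R r * kPsi R s) (kPsi R s * kPsi R r)
  | quadEq (r : Fin (n - 1)) (i : Fin n → ZMod e) (h : i (pL r) = i (pR r)) :
      KLRRel R n e ℓ κ (kPsi R r ^ 2 * kE R i) 0
  | quadR (r : Fin (n - 1)) (i : Fin n → ZMod e)
      (h1 : i (pR r) = i (pL r) + 1) (h2 : i (pL r) ≠ i (pR r) + 1) :
      KLRRel R n e ℓ κ (kPsi R r ^ 2 * kE R i) ((kY R (pL r) - kY R (pR r)) * kE R i)
  | quadL (r : Fin (n - 1)) (i : Fin n → ZMod e)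
      (h1 : i (pL r) = i (pR r) + 1) (h2 : i (pR r) ≠ i (pL r) + 1) :
      KLRRel R n e ℓ κ (kPsi R r ^ 2 * kE R i) ((kY R (pR r) - kY R (pL r)) * kE R i)
  | quadBoth (r : Fin (n - 1)) (i : Fin n → ZMod e)
      (h1 : i (pR r) = i (pL r) + 1) (h2 : i (pL r) = i (pR r) + 1) :
      KLRRel R n e ℓ κ (kPsi R r ^ 2 * kE R i)
        ((kY R (pR r) - kY R (pL r)) * (kY R (pL r) - kY R (pR r)) * kE R i)
  | quadNone (r : Fin (n - 1)) (i : Fin n → ZMod e) (h1 : i (pL r) ≠ i (pR r))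
      (h2 : i (pR r) ≠ i (pL r) + 1) (h3 : i (pL r) ≠ i (pR r) + 1) :
      KLRRel R n e ℓ κ (kPsi R r ^ 2 * kE R i) (kE R i)
  | braidR (r : Fin (n - 1)) (hr : r.1 + 1 < n - 1) (i : Fin n → ZMod e)
      (h0 : i (pM r hr) = i (pL r)) (h1 : i (pR r) = i (pL r) + 1)
      (h2 : i (pL r) ≠ i (pR r) + 1) :
      KLRRel R n e ℓ κ (kPsi R r * kPsi R ⟨r.1 + 1, hr⟩ * kPsi R r * kE R i)
        ((kPsi R ⟨r.1 + 1, hr⟩ * kPsi R r * kPsi R ⟨r.1 + 1, hr⟩ - 1) * kE R i)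
  | braidL (r : Fin (n - 1)) (hr : r.1 + 1 < n - 1) (i : Fin n → ZMod e)
      (h0 : i (pM r hr) = i (pL r)) (h1 : i (pL r) = i (pR r) + 1)
      (h2 : i (pR r) ≠ i (pL r) + 1) :
      KLRRel R n e ℓ κ (kPsi R r * kPsi R ⟨r.1 + 1, hr⟩ * kPsi R r * kE R i)
        ((kPsi R ⟨r.1 + 1, hr⟩ * kPsi R r * kPsi R ⟨r.1 + 1, hr⟩ + 1) * kE R i)
  | braidBoth (r : Fin (n - 1)) (hr : r.1 + 1 < n - 1) (i : Fin n → ZMod e)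
      (h0 : i (pM r hr) = i (pL r)) (h1 : i (pR r) = i (pL r) + 1)
      (h2 : i (pL r) = i (pR r) + 1) :
      KLRRel R n e ℓ κ (kPsi R r * kPsi R ⟨r.1 + 1, hr⟩ * kPsi R r * kE R i)
        ((kPsi R ⟨r.1 + 1, hr⟩ * kPsi R r * kPsi R ⟨r.1 + 1, hr⟩ +
            kY R (pL r) - 2 * kY R (pR r) + kY R (pM r hr)) * kE R i)
  | braidNone (r : Fin (n - 1)) (hr : r.1 + 1 < n - 1) (i : Fin n → ZMod e)
      (h : ¬(i (pM r hr) = i (pL r) ∧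
        (i (pR r) = i (pL r) + 1 ∨ i (pL r) = i (pR r) + 1))) :
      KLRRel R n e ℓ κ (kPsi R r * kPsi R ⟨r.1 + 1, hr⟩ * kPsi R r * kE R i)
        (kPsi R ⟨r.1 + 1, hr⟩ * kPsi R r * kPsi R ⟨r.1 + 1, hr⟩ * kE R i)

/-- The cyclotomic quiver Hecke algebra `R_n^Λ(R)`, `Λ = Σ_l Λ_{κ_l mod e}`. -/
noncomputable abbrev KLR (R : Type*) [CommRing R] (n e ℓ : ℕ) [NeZero e] (κ : ℕ → ℤ) :
    Type _ :=
  RingQuot (KLRRel R n e ℓ κ)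

/-- The generator `e(i)` of the cyclotomic quiver Hecke algebra. -/
noncomputable def KeGen (R : Type*) [CommRing R] (n e ℓ : ℕ) [NeZero e] (κ : ℕ → ℤ)
    (i : Fin n → ZMod e) : KLR R n e ℓ κ :=
  RingQuot.mkAlgHom R (KLRRel R n e ℓ κ) (kE R i)

/-- The generator `ψ_r` of the cyclotomic quiver Hecke algebra. -/
noncomputable def KpsiGen (R : Type*) [CommRing R] (n e ℓ : ℕ) [NeZero e] (κ : ℕ → ℤ)
    (r : Fin (n - 1)) : KLR R n e ℓ κ :=
  RingQuot.mkAlgHom R (KLRRel R n e ℓ κ) (kPsi R r)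

/-- The generator `y_k` of the cyclotomic quiver Hecke algebra. -/
noncomputable def KyGen (R : Type*) [CommRing R] (n e ℓ : ℕ) [NeZero e] (κ : ℕ → ℤ)
    (k : Fin n) : KLR R n e ℓ κ :=
  RingQuot.mkAlgHom R (KLRRel R n e ℓ κ) (kY R k)

end Paper
/-! ## The deformed cyclotomic quiver Hecke algebra -/

namespace Paper

/-- `y_k^⟨d⟩ = t^d y_k + [d]_t` in the free algebra. -/
def ydot (R : Type*) [CommRing R] (t : Rˣ) {n e : ℕ} (d : ℤ) (k : Fin n) :
    FreeAlgebra R (KLRGen n e) :=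
  algebraMap R _ ((t ^ d : Rˣ) : R) * kY R k + algebraMap R _ (qintU t d)

/-- `ρ_r(i) = î_r - î_{r+1}` for `i ∈ I^n`. -/
def rhoI {n e : ℕ} (i : Fin n → ZMod e) (r : Fin (n - 1)) : ℤ :=
  ((i (pL r)).val : ℤ) - ((i (pR r)).val : ℤ)

/-- The defining relations of the deformed cyclotomic quiver Hecke algebra `R_n(O)`. -/
inductive DefKLRRel (R : Type*) [CommRing R] (t : Rˣ) (n e ℓ : ℕ) [NeZero e] (κ : ℕ → ℤ) :
    FreeAlgebra R (KLRGen n e) → FreeAlgebra R (KLRGen n e) → Prop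
  | cyc (h : 0 < n) (i : Fin n → ZMod e) :
      DefKLRRel R t n e ℓ κ
        ((((List.range ℓ).map fun l =>
            if ((κ l : ZMod e) = i ⟨0, h⟩) then
              kY R (⟨0, h⟩ : Fin n) -
                algebraMap R _ (qintU t (κ l - ((i ⟨0, h⟩).val : ℤ)))
            else 1).prod) * kE R i) 0
  | orth (i j : Fin n → ZMod e) (h : i ≠ j) : DefKLRRel R t n e ℓ κ (kE R i * kE R j) 0
  | idem (i : Fin n → ZMod e) : DefKLRRel R t n e ℓ κ (kE R i * kE R i) (kE R i)
  | complete : DefKLRRel R t n e ℓ κ (∑ i : Fin n → ZMod e, kE R i) 1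
  | yE (k : Fin n) (i : Fin n → ZMod e) :
      DefKLRRel R t n e ℓ κ (kY R k * kE R i) (kE R i * kY R k)
  | psiE (r : Fin (n - 1)) (i : Fin n → ZMod e) :
      DefKLRRel R t n e ℓ κ (kPsi R r * kE R i) (kE R (swapSeq i r) * kPsi R r)
  | yy (k m : Fin n) : DefKLRRel R t n e ℓ κ (kY R k * kY R m) (kY R m * kY R k)
  | psiyEq (r : Fin (n - 1)) (i : Fin n → ZMod e) (h : i (pL r) = i (pR r)) :
      DefKLRRel R t n e ℓ κ (kPsi R r * kY R (pR r) * kE R i)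
        ((kY R (pL r) * kPsi R r + 1) * kE R i)
  | psiyNe (r : Fin (n - 1)) (i : Fin n → ZMod e) (h : i (pL r) ≠ i (pR r)) :
      DefKLRRel R t n e ℓ κ (kPsi R r * kY R (pR r) * kE R i)
        (kY R (pL r) * kPsi R r * kE R i)
  | ypsiEq (r : Fin (n - 1)) (i : Fin n → ZMod e) (h : i (pL r) = i (pR r)) :
      DefKLRRel R t n e ℓ κ (kY R (pR r) * kPsi R r * kE R i)
        ((kPsi R r * kY R (pL r) + 1) * kE R i)
  | ypsiNe (r : Fin (n - 1)) (i : Fin n → ZMod e) (h : i (pL r) ≠ i (pR r)) :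
      DefKLRRel R t n e ℓ κ (kY R (pR r) * kPsi R r * kE R i)
        (kPsi R r * kY R (pL r) * kE R i)
  | psiyFar (r : Fin (n - 1)) (k : Fin n) (h : k.1 ≠ r.1 ∧ k.1 ≠ r.1 + 1) :
      DefKLRRel R t n e ℓ κ (kPsi R r * kY R k) (kY R k * kPsi R r)
  | psipsiFar (r s : Fin (n - 1)) (h : r.1 + 1 < s.1 ∨ s.1 + 1 < r.1) :
      DefKLRRel R t n e ℓ κ (kPsi R r * kPsi R s) (kPsi R s * kPsi R r)
  | quadEq (r : Fin (n - 1)) (i : Fin n → ZMod e) (h : i (pL r) = i (pR r)) :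
      DefKLRRel R t n e ℓ κ (kPsi R r ^ 2 * kE R i) 0
  | quadR (r : Fin (n - 1)) (i : Fin n → ZMod e)
      (h1 : i (pR r) = i (pL r) + 1) (h2 : i (pL r) ≠ i (pR r) + 1) :
      DefKLRRel R t n e ℓ κ (kPsi R r ^ 2 * kE R i)
        ((ydot R t (1 + rhoI i r) (pL r) - kY R (pR r)) * kE R i)
  | quadL (r : Fin (n - 1)) (i : Fin n → ZMod e)
      (h1 : i (pL r) = i (pR r) + 1) (h2 : i (pR r) ≠ i (pL r) + 1) :
      DefKLRRel R t n e ℓ κ (kPsi R r ^ 2 * kE R i)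
        ((ydot R t (1 - rhoI i r) (pR r) - kY R (pL r)) * kE R i)
  | quadBoth (r : Fin (n - 1)) (i : Fin n → ZMod e)
      (h1 : i (pR r) = i (pL r) + 1) (h2 : i (pL r) = i (pR r) + 1) :
      DefKLRRel R t n e ℓ κ (kPsi R r ^ 2 * kE R i)
        ((ydot R t (1 + rhoI i r) (pL r) - kY R (pR r)) *
          (ydot R t (1 - rhoI i r) (pR r) - kY R (pL r)) * kE R i)
  | quadNone (r : Fin (n - 1)) (i : Fin n → ZMod e) (h1 : i (pL r) ≠ i (pR r))
      (h2 : i (pR r) ≠ i (pL r) + 1) (h3 : i (pL r) ≠ i (pR r) + 1) :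
      DefKLRRel R t n e ℓ κ (kPsi R r ^ 2 * kE R i) (kE R i)
  | braidBoth (r : Fin (n - 1)) (hr : r.1 + 1 < n - 1) (i : Fin n → ZMod e)
      (h0 : i (pM r hr) = i (pL r)) (h1 : i (pR r) = i (pL r) + 1)
      (h2 : i (pL r) = i (pR r) + 1) :
      DefKLRRel R t n e ℓ κ
        ((kPsi R r * kPsi R ⟨r.1 + 1, hr⟩ * kPsi R r -
            kPsi R ⟨r.1 + 1, hr⟩ * kPsi R r * kPsi R ⟨r.1 + 1, hr⟩) * kE R i)
        ((ydot R t (1 + rhoI i r) (pL r) + ydot R t (1 + rhoI i r) (pM r hr) -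
            ydot R t (1 + rhoI i r) (pR r) - ydot R t (1 - rhoI i r) (pR r)) * kE R i)
  | braidR (r : Fin (n - 1)) (hr : r.1 + 1 < n - 1) (i : Fin n → ZMod e)
      (h0 : i (pM r hr) = i (pL r)) (h1 : i (pR r) = i (pL r) + 1)
      (h2 : i (pL r) ≠ i (pR r) + 1) :
      DefKLRRel R t n e ℓ κ
        ((kPsi R r * kPsi R ⟨r.1 + 1, hr⟩ * kPsi R r -
            kPsi R ⟨r.1 + 1, hr⟩ * kPsi R r * kPsi R ⟨r.1 + 1, hr⟩) * kE R i)
        (algebraMap R _ (-(((t ^ (1 + rhoI i r) : Rˣ) : R))) * kE R i)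
  | braidL (r : Fin (n - 1)) (hr : r.1 + 1 < n - 1) (i : Fin n → ZMod e)
      (h0 : i (pM r hr) = i (pL r)) (h1 : i (pL r) = i (pR r) + 1)
      (h2 : i (pR r) ≠ i (pL r) + 1) :
      DefKLRRel R t n e ℓ κ
        ((kPsi R r * kPsi R ⟨r.1 + 1, hr⟩ * kPsi R r -
            kPsi R ⟨r.1 + 1, hr⟩ * kPsi R r * kPsi R ⟨r.1 + 1, hr⟩) * kE R i)
        (kE R i)
  | braidNone (r : Fin (n - 1)) (hr : r.1 + 1 < n - 1) (i : Fin n → ZMod e)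
      (h : ¬(i (pM r hr) = i (pL r) ∧
        (i (pR r) = i (pL r) + 1 ∨ i (pL r) = i (pR r) + 1))) :
      DefKLRRel R t n e ℓ κ
        ((kPsi R r * kPsi R ⟨r.1 + 1, hr⟩ * kPsi R r -
            kPsi R ⟨r.1 + 1, hr⟩ * kPsi R r * kPsi R ⟨r.1 + 1, hr⟩) * kE R i) 0

/-- The deformed cyclotomic quiver Hecke algebra `R_n(R)`. -/
noncomputable abbrev DefKLR (R : Type*) [CommRing R] (t : Rˣ) (n e ℓ : ℕ) [NeZero e]
    (κ : ℕ → ℤ) : Type _ :=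
  RingQuot (DefKLRRel R t n e ℓ κ)

/-- The generator `f_i` of the deformed cyclotomic quiver Hecke algebra. -/
noncomputable def DfGen (R : Type*) [CommRing R] (t : Rˣ) (n e ℓ : ℕ) [NeZero e]
    (κ : ℕ → ℤ) (i : Fin n → ZMod e) : DefKLR R t n e ℓ κ :=
  RingQuot.mkAlgHom R (DefKLRRel R t n e ℓ κ) (kE R i)

/-- The generator `ψ_r` of the deformed cyclotomic quiver Hecke algebra. -/
noncomputable def DpsiGen (R : Type*) [CommRing R] (t : Rˣ) (n e ℓ : ℕ) [NeZero e]
    (κ : ℕ → ℤ) (r : Fin (n - 1)) : DefKLR R t n e ℓ κ :=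
  RingQuot.mkAlgHom R (DefKLRRel R t n e ℓ κ) (kPsi R r)

/-- The generator `y_k` of the deformed cyclotomic quiver Hecke algebra. -/
noncomputable def DyGen (R : Type*) [CommRing R] (t : Rˣ) (n e ℓ : ℕ) [NeZero e]
    (κ : ℕ → ℤ) (k : Fin n) : DefKLR R t n e ℓ κ :=
  RingQuot.mkAlgHom R (DefKLRRel R t n e ℓ κ) (kY R k)

/-! ## Seminormal idempotents -/

/-- The seminormal idempotent `F_T` of the semisimple cyclotomic Hecke algebra:
`F_T = ∏_{k=1}^n ∏_{c ∈ Cont(n), [c_k(T)] ≠ [c]} (L_k - [c]) / ([c_k(T)] - [c])`. -/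
noncomputable def Fidem (K : Type*) [Field K] (tK : Kˣ) (n ℓ : ℕ) (κ : ℕ → ℤ)
    (T : StdTableau ℓ n) : CycHecke K tK n ℓ κ :=
  ((List.finRange n).map (fun k =>
    (((contFinset ℓ n κ).sort (· ≤ ·)).map (fun c =>
      if qint (tK : K) (content κ T (k.1 + 1)) ≠ qint (tK : K) c then
        (Lgen K tK n ℓ κ k - algebraMap K _ (qint (tK : K) c)) *
          algebraMap K _ ((qint (tK : K) (content κ T (k.1 + 1)) - qint (tK : K) c)⁻¹)
      else 1)).prod)).prod

/-- The residue idempotent `f_i = Σ_{T ∈ Std(i)} F_T`. -/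
noncomputable def fres (K : Type*) [Field K] (tK : Kˣ) (n ℓ e : ℕ) (κ : ℕ → ℤ)
    (i : Fin n → ZMod e) : CycHecke K tK n ℓ κ :=
  ∑ᶠ T : {T : StdTableau ℓ n // resSeq e κ T = i}, Fidem K tK n ℓ κ T.1

/-- The simultaneous two-sided eigenspace `H_{S,T}` of the Jucys–Murphy elements. -/
noncomputable def eigSub (K : Type*) [Field K] (tK : Kˣ) (n ℓ : ℕ) (κ : ℕ → ℤ)
    (S T : StdTableau ℓ n) : Submodule K (CycHecke K tK n ℓ κ) where
  carrier := {h | ∀ k : Fin n,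
      Lgen K tK n ℓ κ k * h = qint (tK : K) (content κ S (k.1 + 1)) • h ∧
      h * Lgen K tK n ℓ κ k = qint (tK : K) (content κ T (k.1 + 1)) • h}
  add_mem' := by
    intro a b ha hb
    intro k
    obtain ⟨h1, h2⟩ := ha k
    obtain ⟨h3, h4⟩ := hb k
    exact ⟨by rw [mul_add, h1, h3, smul_add], by rw [add_mul, h2, h4, smul_add]⟩
  zero_mem' := by intro k; simp
  smul_mem' := by
    intro c a ha
    intro k
    obtain ⟨h1, h2⟩ := ha k
    constructor
    · rw [mul_smul_comm, h1, smul_comm]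
    · rw [smul_mul_assoc, h2, smul_comm]

end Paper

namespace Paper

/-- The defining relations, over `ℤ_(p)`, of the KLR-style presentation of the group
algebra of the symmetric group (level `ℓ = 1`, multicharge `κ = (0)`, `Λ = Λ_0`,
`e = p` an odd prime). -/
inductive S1Rel (R : Type*) [CommRing R] (n p : ℕ) [NeZero p] :
    FreeAlgebra R (KLRGen n p) → FreeAlgebra R (KLRGen n p) → Prop
  | cyc0 (h : 0 < n) (i : Fin n → ZMod p) (hi : i ⟨0, h⟩ = 0) :
      S1Rel R n p (kY R (⟨0, h⟩ : Fin n) * kE R i) 0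
  | cyc1 (h : 0 < n) (i : Fin n → ZMod p) (hi : i ⟨0, h⟩ ≠ 0) :
      S1Rel R n p (kE R i) 0
  | orth (i j : Fin n → ZMod p) (h : i ≠ j) : S1Rel R n p (kE R i * kE R j) 0
  | idem (i : Fin n → ZMod p) : S1Rel R n p (kE R i * kE R i) (kE R i)
  | complete : S1Rel R n p (∑ i : Fin n → ZMod p, kE R i) 1
  | yE (k : Fin n) (i : Fin n → ZMod p) : S1Rel R n p (kY R k * kE R i) (kE R i * kY R k)
  | psiE (r : Fin (n - 1)) (i : Fin n → ZMod p) :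
      S1Rel R n p (kPsi R r * kE R i) (kE R (swapSeq i r) * kPsi R r)
  | yy (k m : Fin n) : S1Rel R n p (kY R k * kY R m) (kY R m * kY R k)
  | psiyEq (r : Fin (n - 1)) (i : Fin n → ZMod p) (h : i (pL r) = i (pR r)) :
      S1Rel R n p (kPsi R r * kY R (pR r) * kE R i) ((kY R (pL r) * kPsi R r + 1) * kE R i)
  | psiyNe (r : Fin (n - 1)) (i : Fin n → ZMod p) (h : i (pL r) ≠ i (pR r)) :
      S1Rel R n p (kPsi R r * kY R (pR r) * kE R i) (kY R (pL r) * kPsi R r * kE R i)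
  | ypsiEq (r : Fin (n - 1)) (i : Fin n → ZMod p) (h : i (pL r) = i (pR r)) :
      S1Rel R n p (kY R (pR r) * kPsi R r * kE R i) ((kPsi R r * kY R (pL r) + 1) * kE R i)
  | ypsiNe (r : Fin (n - 1)) (i : Fin n → ZMod p) (h : i (pL r) ≠ i (pR r)) :
      S1Rel R n p (kY R (pR r) * kPsi R r * kE R i) (kPsi R r * kY R (pL r) * kE R i)
  | psiyFar (r : Fin (n - 1)) (k : Fin n) (h : k.1 ≠ r.1 ∧ k.1 ≠ r.1 + 1) :
      S1Rel R n p (kPsi R r * kY R k) (kY R k * kPsi R r)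
  | psipsiFar (r s : Fin (n - 1)) (h : r.1 + 1 < s.1 ∨ s.1 + 1 < r.1) :
      S1Rel R n p (kPsi R r * kPsi R s) (kPsi R s * kPsi R r)
  | quadEq (r : Fin (n - 1)) (i : Fin n → ZMod p) (h : i (pL r) = i (pR r)) :
      S1Rel R n p (kPsi R r ^ 2 * kE R i) 0
  | quadRne (r : Fin (n - 1)) (i : Fin n → ZMod p)
      (h1 : i (pR r) = i (pL r) + 1) (h2 : i (pR r) ≠ 0) :
      S1Rel R n p (kPsi R r ^ 2 * kE R i) ((kY R (pL r) - kY R (pR r)) * kE R i)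
  | quadR0 (r : Fin (n - 1)) (i : Fin n → ZMod p)
      (h1 : i (pR r) = i (pL r) + 1) (h2 : i (pR r) = 0) :
      S1Rel R n p (kPsi R r ^ 2 * kE R i)
        ((kY R (pL r) + (p : FreeAlgebra R (KLRGen n p)) - kY R (pR r)) * kE R i)
  | quadLne (r : Fin (n - 1)) (i : Fin n → ZMod p)
      (h1 : i (pL r) = i (pR r) + 1) (h2 : i (pL r) ≠ 0) :
      S1Rel R n p (kPsi R r ^ 2 * kE R i) ((kY R (pR r) - kY R (pL r)) * kE R i)
  | quadL0 (r : Fin (n - 1)) (i : Fin n → ZMod p)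
      (h1 : i (pL r) = i (pR r) + 1) (h2 : i (pL r) = 0) :
      S1Rel R n p (kPsi R r ^ 2 * kE R i)
        ((kY R (pR r) + (p : FreeAlgebra R (KLRGen n p)) - kY R (pL r)) * kE R i)
  | quadNone (r : Fin (n - 1)) (i : Fin n → ZMod p) (h1 : i (pL r) ≠ i (pR r))
      (h2 : i (pR r) ≠ i (pL r) + 1) (h3 : i (pL r) ≠ i (pR r) + 1) :
      S1Rel R n p (kPsi R r ^ 2 * kE R i) (kE R i)
  | braidR (r : Fin (n - 1)) (hr : r.1 + 1 < n - 1) (i : Fin n → ZMod p)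
      (h0 : i (pM r hr) = i (pL r)) (h1 : i (pR r) = i (pL r) + 1) :
      S1Rel R n p
        ((kPsi R r * kPsi R ⟨r.1 + 1, hr⟩ * kPsi R r -
            kPsi R ⟨r.1 + 1, hr⟩ * kPsi R r * kPsi R ⟨r.1 + 1, hr⟩) * kE R i)
        (-(kE R i))
  | braidL (r : Fin (n - 1)) (hr : r.1 + 1 < n - 1) (i : Fin n → ZMod p)
      (h0 : i (pM r hr) = i (pL r)) (h1 : i (pL r) = i (pR r) + 1) :
      S1Rel R n p
        ((kPsi R r * kPsi R ⟨r.1 + 1, hr⟩ * kPsi R r -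
            kPsi R ⟨r.1 + 1, hr⟩ * kPsi R r * kPsi R ⟨r.1 + 1, hr⟩) * kE R i)
        (kE R i)
  | braidNone (r : Fin (n - 1)) (hr : r.1 + 1 < n - 1) (i : Fin n → ZMod p)
      (h : ¬(i (pM r hr) = i (pL r) ∧
        (i (pR r) = i (pL r) + 1 ∨ i (pL r) = i (pR r) + 1))) :
      S1Rel R n p
        ((kPsi R r * kPsi R ⟨r.1 + 1, hr⟩ * kPsi R r -
            kPsi R ⟨r.1 + 1, hr⟩ * kPsi R r * kPsi R ⟨r.1 + 1, hr⟩) * kE R i) 0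

section SecP1

/-- The descending word `t_{k+l-1} ⋯ t_{k+1} t_k`. -/
def descWord {G : Type*} [Group G] (t : ℕ → G) (k : ℕ) : ℕ → G
  | 0 => 1
  | l + 1 => t (k + l) * descWord t k l

theorem descWord_right {G : Type*} [Group G] (t : ℕ → G) (k l : ℕ) :
    descWord t k (l + 1) = descWord t (k + 1) l * t k := by
  induction l with
  | zero => simp [descWord]
  | succ l ih =>
    rw [descWord, ih, descWord, ← mul_assoc]
    congr 3
    omega

theorem descWord_comm {G : Type*} [Group G] (t : ℕ → G) (k l : ℕ) (g : G)
    (h : ∀ j, k ≤ j → j < k + l → g * t j = t j * g) :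
    descWord t k l * g = g * descWord t k l := by
  induction l with
  | zero => simp [descWord]
  | succ l ih =>
    rw [descWord, mul_assoc, ih (fun j h1 h2 => h j h1 (by omega)), ← mul_assoc,
      ← h (k + l) (by omega) (by omega), mul_assoc]

theorem descWord_split {G : Type*} [Group G] (t : ℕ → G) (k l m : ℕ) :
    descWord t k (l + m) = descWord t (k + l) m * descWord t k l := by
  induction m with
  | zero => simp [descWord]
  | succ m ih =>
    rw [← add_assoc, descWord, ih, descWord, mul_assoc, add_assoc]

/-- Normal forms in the group generated by `t_0, …, t_{m-1}`. -/
def nfSet {G : Type*} [Group G] (t : ℕ → G) : ℕ → Set G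
  | 0 => {1}
  | m + 1 => (fun x : G × ℕ => x.1 * descWord t (m + 1 - x.2) x.2) ''
      (nfSet t m ×ˢ Set.Iio (m + 2))

theorem nfSet_finite {G : Type*} [Group G] (t : ℕ → G) (m : ℕ) :
    (nfSet t m).Finite ∧ (nfSet t m).ncard ≤ (m + 1).factorial := by
  induction m with
  | zero => simp [nfSet]
  | succ m ih =>
    have hf : (nfSet t m ×ˢ Set.Iio (m + 2)).Finite := ih.1.prod (Set.finite_Iio _)
    refine ⟨hf.image _, (Set.ncard_image_le hf).trans ?_⟩
    rw [Set.ncard_prod, Nat.factorial_succ (m + 1), mul_comm]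
    have : (Set.Iio (m + 2)).ncard = m + 2 := by
      rw [Set.ncard_eq_toFinset_card']; simp
    rw [this]
    exact Nat.mul_le_mul_left _ ih.2

theorem nfSet_one {G : Type*} [Group G] (t : ℕ → G) (m : ℕ) : (1 : G) ∈ nfSet t m := by
  induction m with
  | zero => simp [nfSet]
  | succ m ih => exact ⟨(1, 0), ⟨ih, by simp⟩, by simp [descWord]⟩

theorem nfSet_mul {G : Type*} [Group G] (t : ℕ → G) (m : ℕ)
    (sq : ∀ r, r < m → t r * t r = 1)
    (br : ∀ r, r + 1 < m → t r * t (r + 1) * t r = t (r + 1) * t r * t (r + 1))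
    (far : ∀ r u, r + 1 < u → u < m → t r * t u = t u * t r)
    (g : G) (hg : g ∈ nfSet t m) (j : ℕ) (hj : j < m) : g * t j ∈ nfSet t m := by
  induction m generalizing g j with
  | zero => omega
  | succ m ih =>
    have ih' := ih (fun r h => sq r (by omega)) (fun r h => br r (by omega))
      (fun r u h h' => far r u h (by omega))
    obtain ⟨⟨a, l⟩, ⟨ha, hl⟩, rfl⟩ := hg
    simp only [Set.mem_Iio] at hl ha ⊢
    by_cases h1 : j + 1 < m + 1 - l
    · refine ⟨(a * t j, l), ⟨ih' a ha j (by omega), hl⟩, ?_⟩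
      simp only
      rw [mul_assoc, mul_assoc, descWord_comm]
      intro u hu hu'
      exact far j u (by omega) (by omega)
    by_cases h2 : j + 1 = m + 1 - l
    · refine ⟨(a, l + 1), ⟨ha, by simp; omega⟩, ?_⟩
      simp only
      have e : m + 1 - (l + 1) = j := by omega
      rw [e, descWord_right, mul_assoc, h2]
    by_cases h3 : j = m + 1 - l
    · refine ⟨(a, l - 1), ⟨ha, by simp; omega⟩, ?_⟩
      simp only
      obtain ⟨l, rfl⟩ : ∃ l', l = l' + 1 := ⟨l - 1, by omega⟩
      rw [← h3, descWord_right, mul_assoc, mul_assoc, sq j hj]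
      simp only [Nat.add_sub_cancel, mul_one]
      congr 2
      omega
    · obtain ⟨k, hk⟩ : ∃ k, k = m + 1 - l := ⟨_, rfl⟩
      rw [← hk] at h1 h2 h3 ⊢
      -- here `k < j ≤ m`
      obtain ⟨d, hd⟩ : ∃ d, j = k + d + 1 := ⟨j - k - 1, by omega⟩
      obtain ⟨b, hb⟩ : ∃ b, l = d + 1 + 1 + b := ⟨m - j, by omega⟩
      have key : descWord t k l * t j = t (k + d) * descWord t k l := by
        rw [hb, descWord_split, descWord, descWord]
        have c1 : descWord t k d * t j = t j * descWord t k d := by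
          apply descWord_comm
          intro u hu hu'
          exact (far u j (by omega) hj).symm
        have c2 : descWord t (k + (d + 1 + 1)) b * t (k + d)
            = t (k + d) * descWord t (k + (d + 1 + 1)) b := by
          apply descWord_comm
          intro u hu hu'
          exact far (k + d) u (by omega) (by omega)
        have c3 := br (k + d) (by omega)
        have e : k + (d + 1) = k + d + 1 := by omega
        rw [e, mul_assoc, mul_assoc, mul_assoc, c1, ← mul_assoc (t (k + d)), hd,
          ← mul_assoc (t (k + d + 1)), ← mul_assoc (t (k + d + 1)), ← c3,
          ← mul_assoc (t (k + d)), ← c2]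
        simp only [mul_assoc]
      refine ⟨(a * t (k + d), l), ⟨ih' a ha (k + d) (by omega), hl⟩, ?_⟩
      simp only
      rw [← hk, mul_assoc, mul_assoc, key]

theorem swap_rel_sq {n : ℕ} (r : ℕ) (h : r + 1 < n) :
    Equiv.swap (⟨r, by omega⟩ : Fin n) ⟨r + 1, h⟩ * Equiv.swap ⟨r, by omega⟩ ⟨r + 1, h⟩ = 1 := by
  simp

theorem swap_rel_far {n : ℕ} (r t : ℕ) (h : r + 1 < t) (h' : t + 1 < n) :
    Equiv.swap (⟨r, by omega⟩ : Fin n) ⟨r + 1, by omega⟩ * Equiv.swap ⟨t, by omega⟩ ⟨t + 1, h'⟩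
     = Equiv.swap ⟨t, by omega⟩ ⟨t + 1, h'⟩ *
        Equiv.swap (⟨r, by omega⟩ : Fin n) ⟨r + 1, by omega⟩ := by
  refine Equiv.Perm.Disjoint.commute ?_
  intro x
  by_cases h1 : x.1 = r ∨ x.1 = r + 1
  · right
    apply Equiv.swap_apply_of_ne_of_ne <;> (rw [Ne, Fin.ext_iff]; simp only; omega)
  · left
    apply Equiv.swap_apply_of_ne_of_ne <;> (rw [Ne, Fin.ext_iff]; simp only; omega)

theorem swap_rel_braid {n : ℕ} (r : ℕ) (h : r + 2 < n) :
    Equiv.swap (⟨r, by omega⟩ : Fin n) ⟨r + 1, by omega⟩ *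
      Equiv.swap ⟨r + 1, by omega⟩ ⟨r + 1 + 1, h⟩ *
      Equiv.swap (⟨r, by omega⟩ : Fin n) ⟨r + 1, by omega⟩
     = Equiv.swap ⟨r + 1, by omega⟩ ⟨r + 1 + 1, h⟩ *
        Equiv.swap (⟨r, by omega⟩ : Fin n) ⟨r + 1, by omega⟩ *
        Equiv.swap ⟨r + 1, by omega⟩ ⟨r + 1 + 1, h⟩ := by
  have key : ∀ a b c : Fin n, a ≠ b → a ≠ c → b ≠ c →
      Equiv.swap a b * Equiv.swap b c * Equiv.swap a b
        = Equiv.swap b c * Equiv.swap a b * Equiv.swap b c := by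
    intro a b c h1 h2 h3
    rw [Equiv.swap_mul_swap_mul_swap h1 h2, Equiv.swap_comm a b, Equiv.swap_comm b c,
      Equiv.swap_mul_swap_mul_swap h3.symm h2.symm, Equiv.swap_comm]
  apply key
  all_goals (rw [Ne, Fin.ext_iff]; simp only; omega)

/-- Adjacent transpositions generate the symmetric group. -/
theorem perm_induction {n : ℕ} (S : Submonoid (Equiv.Perm (Fin n)))
    (h : ∀ r (hr : r + 1 < n), Equiv.swap (⟨r, by omega⟩ : Fin n) ⟨r + 1, hr⟩ ∈ S) : S = ⊤ := by
  cases n with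
  | zero =>
    rw [eq_top_iff]
    intro x _
    rw [Subsingleton.elim x 1]
    exact S.one_mem
  | succ n =>
    rw [eq_top_iff, ← Equiv.Perm.mclosure_swap_castSucc_succ, Submonoid.closure_le]
    rintro _ ⟨i, rfl⟩
    exact h i.1 (by omega)

/-- The Coxeter presentation of the symmetric group, as a universal property. -/
theorem perm_lift {M : Type*} [Group M] (n : ℕ) (s : ℕ → M)
    (sq : ∀ r, r + 1 < n → s r * s r = 1)
    (br : ∀ r, r + 2 < n → s r * s (r + 1) * s r = s (r + 1) * s r * s (r + 1))
    (far : ∀ r t, r + 1 < t → t + 1 < n → s r * s t = s t * s r) :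
    ∃ φ : Equiv.Perm (Fin n) →* M, ∀ r (h : r + 1 < n),
      φ (Equiv.swap ⟨r, by omega⟩ ⟨r + 1, h⟩) = s r := by
  classical
  let σ : ℕ → Equiv.Perm (Fin n) := fun r =>
    if h : r + 1 < n then Equiv.swap ⟨r, by omega⟩ ⟨r + 1, h⟩ else 1
  let t : ℕ → M × Equiv.Perm (Fin n) := fun r => (s r, σ r)
  have hσ : ∀ r (h : r + 1 < n), σ r = Equiv.swap ⟨r, by omega⟩ ⟨r + 1, h⟩ := by
    intro r h; simp [σ, h]
  have tsq : ∀ r, r < n - 1 → t r * t r = 1 := by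
    intro r h
    ext1
    · exact sq r (by omega)
    · simp only [t, Prod.snd_mul]; rw [hσ r (by omega)]; exact swap_rel_sq r _
  have tbr : ∀ r, r + 1 < n - 1 → t r * t (r + 1) * t r = t (r + 1) * t r * t (r + 1) := by
    intro r h
    ext1
    · exact br r (by omega)
    · simp only [t, Prod.snd_mul]; rw [hσ r (by omega), hσ (r+1) (by omega)]
      exact swap_rel_braid r (by omega)
  have tfar : ∀ r u, r + 1 < u → u < n - 1 → t r * t u = t u * t r := by
    intro r u h h'
    ext1
    · exact far r u h (by omega)
    · simp only [t, Prod.snd_mul]; rw [hσ r (by omega), hσ u (by omega)]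
      exact swap_rel_far r u h (by omega)
  let Γ := Submonoid.closure (t '' Set.Iio (n - 1))
  have hΓ : (Γ : Set (M × Equiv.Perm (Fin n))) ⊆ nfSet t (n - 1) := by
    intro x hx
    induction hx using Submonoid.closure_induction_right with
    | one => exact nfSet_one t _
    | mul_right x hx y hy ih =>
      obtain ⟨j, hj, rfl⟩ := hy
      exact nfSet_mul t (n - 1) tsq tbr tfar x ih j hj
  have hfin : (Γ : Set (M × Equiv.Perm (Fin n))).Finite := (nfSet_finite t (n-1)).1.subset hΓ
  have hcard : (Γ : Set (M × Equiv.Perm (Fin n))).ncard ≤ n.factorial := by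
    refine (Set.ncard_le_ncard hΓ (nfSet_finite t (n-1)).1).trans
      ((nfSet_finite t (n-1)).2.trans ?_)
    rcases n with _ | n
    · simp
    · simp
  have : Finite Γ := hfin
  let π : Γ →* Equiv.Perm (Fin n) := (MonoidHom.snd _ _).comp Γ.subtype
  have hsurj : Function.Surjective π := by
    rw [← MonoidHom.mrange_eq_top]
    apply perm_induction
    intro r hr
    refine ⟨⟨t r, Submonoid.subset_closure ⟨r, by simp; omega, rfl⟩⟩, ?_⟩
    exact hσ r hr
  have hbij : Function.Bijective π := by
    have := Fintype.ofFinite Γ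
    rw [Fintype.bijective_iff_surjective_and_card]
    refine ⟨hsurj, le_antisymm ?_ (Fintype.card_le_of_surjective _ hsurj)⟩
    rw [Fintype.card_perm, Fintype.card_fin]
    refine le_trans (le_of_eq ?_) hcard
    rw [← Nat.card_eq_fintype_card]
    rfl
  let e := MulEquiv.ofBijective π hbij
  refine ⟨((MonoidHom.fst _ _).comp Γ.subtype).comp e.symm.toMonoidHom, ?_⟩
  intro r h
  have : e.symm (Equiv.swap ⟨r, by omega⟩ ⟨r + 1, h⟩)
      = ⟨t r, Submonoid.subset_closure ⟨r, by simp; omega, rfl⟩⟩ := by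
    rw [MulEquiv.symm_apply_eq]
    exact (hσ r h).symm
  simp [this, t]

end SecP1

section SecP2

theorem expand3 {A B : Type*} [Ring A] [CommRing B] (f : B →+* A) (s1 s2 ψ1 ψ2 : A)
    (w12 w13 w23 w21 c12 c13 c23 c21 a b a' b' a'' b'' d Q : B)
    (h1 : s1 = ψ1 * f w12 - f c12) (h2 : s2 = ψ2 * f w23 - f c23)
    (R1 : f w23 * ψ1 = ψ1 * f w13 + f a) (R2 : f c23 * ψ1 = ψ1 * f c13 - f b)
    (R3 : f w12 * ψ2 = ψ2 * f w13 + f a') (R4 : f c12 * ψ2 = ψ2 * f c13 - f b')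
    (R5 : f w13 * ψ1 = ψ1 * f w23 - f a) (R6 : f a' * ψ1 = ψ1 * f a'')
    (R7 : f w12 * ψ1 = ψ1 * f w21 + f (2 * d)) (R8 : f c13 * ψ1 = ψ1 * f c23 + f b)
    (R9 : f b' * ψ1 = ψ1 * f b'') (R10 : f c12 * ψ1 = ψ1 * f c21) (R11 : ψ1 * ψ1 = f Q) :
    s1 * s2 * s1 = ψ1 * ψ2 * ψ1 * f (w12 * w13 * w23)
      + ψ1 * ψ2 * f (- a * w13 * w12 + w13 * (a * w12 - w23 * c12))
      + ψ2 * ψ1 * f (- c23 * w13 * w12)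
      + ψ1 * f (a' * (a * w12 - w23 * c12) - 2 * d * c13 * w12 + w12 * (b * w12 + c23 * c12)
          + b'' * w13 * w12 + c21 * c13 * w12)
      + ψ2 * f (- b * w13 * w12 - c13 * (a * w12 - w23 * c12))
      + f (Q * a'' * w13 * w12 - Q * w21 * c13 * w12 + b' * (a * w12 - w23 * c12)
          - c12 * (b * w12 + c23 * c12)) := by
  have e : s2 * s1 = ψ2 * ψ1 * f (w13 * w12) + ψ2 * f (a * w12 - w23 * c12)
      - ψ1 * f (c13 * w12) + f (b * w12 + c23 * c12) := by
    calc s2 * s1 = ψ2 * (f w23 * ψ1) * f w12 - ψ2 * (f w23 * f c12) - (f c23 * ψ1) * f w12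
          + f c23 * f c12 := by rw [h1, h2]; noncomm_ring
      _ = _ := by
        rw [R1, R2]; simp only [map_add, map_sub, map_mul]; noncomm_ring
  generalize hβ : a * w12 - w23 * c12 = β at *
  generalize hγ : b * w12 + c23 * c12 = γ at *
  have cm : ∀ u v, f u * f v = f v * f u := fun u v => by rw [← map_mul, ← map_mul, mul_comm]
  calc s1 * s2 * s1 = s1 * (s2 * s1) := mul_assoc _ _ _
    _ = ψ1 * ((f w12 * ψ2) * ψ1) * f (w13 * w12) + ψ1 * (f w12 * ψ2) * f β
        - ψ1 * (f w12 * ψ1) * f (c13 * w12) + ψ1 * (f w12 * f γ)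
        - (f c12 * ψ2) * ψ1 * f (w13 * w12) - (f c12 * ψ2) * f β
        + (f c12 * ψ1) * f (c13 * w12) - f c12 * f γ := by
          rw [e, h1]; noncomm_ring
    _ = ψ1 * (ψ2 * (f w13 * ψ1) + f a' * ψ1) * f (w13 * w12) + ψ1 * (ψ2 * f w13 + f a') * f β
        - (ψ1 * ψ1 * f w21 + ψ1 * f (2 * d)) * f (c13 * w12) + ψ1 * (f w12 * f γ)
        - (ψ2 * (f c13 * ψ1) - f b' * ψ1) * f (w13 * w12) - (ψ2 * f c13 - f b') * f β
        + ψ1 * f c21 * f (c13 * w12) - f c12 * f γ := by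
          rw [R3, R4, R7, R10]; noncomm_ring
    _ = ψ1 * ψ2 * ψ1 * (f w23 * f (w13 * w12)) + ψ1 * ψ2 * (- (f a * f (w13 * w12)) + f w13 * f β)
        + ψ1 * ψ1 * (f a'' * f (w13 * w12) - f w21 * f (c13 * w12))
        + ψ1 * (f a' * f β - f (2 * d) * f (c13 * w12) + f w12 * f γ + f b'' * f (w13 * w12)
           + f c21 * f (c13 * w12))
        + ψ2 * ψ1 * (- (f c23 * f (w13 * w12)))
        + ψ2 * (- (f b * f (w13 * w12)) - f c13 * f β) + (f b' * f β - f c12 * f γ) := by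
          rw [R5, R6, R8, R9]; noncomm_ring
    _ = _ := by
      rw [R11]
      simp only [← map_mul, ← map_add, ← map_sub, ← map_neg]
      have e1 : w23 * (w13 * w12) = w12 * w13 * w23 := by ring
      have e2 : -(a * (w13 * w12)) + w13 * β = - a * w13 * w12 + w13 * β := by ring
      have e3 : (-(c23 * (w13 * w12))) = - c23 * w13 * w12 := by ring
      have e4 : (-(b * (w13 * w12)) - c13 * β) = - b * w13 * w12 - c13 * β := by ring
      have e5 : (a' * β - 2 * d * (c13 * w12) + w12 * γ + b'' * (w13 * w12) + c21 * (c13 * w12))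
        = a' * β - 2 * d * c13 * w12 + w12 * γ + b'' * w13 * w12 + c21 * c13 * w12 := by ring
      have e6 : f (Q * a'' * w13 * w12 - Q * w21 * c13 * w12 + b' * β - c12 * γ)
        = f (Q * (a'' * (w13 * w12) - w21 * (c13 * w12))) + f (b' * β - c12 * γ) := by
        rw [← map_add]; congr 1; ring
      rw [e1, e2, e3, e4, e5, e6]
      abel


theorem coef_one {K : Type*} [CommRing K] (x1 x2 x3 P12 P13 P23 l12 l13 l23 m12 m23 : K)
    (d12 d13 d23 : K)
    (h12 : P12 * (x1 - x2) = 1 - d12) (h13 : P13 * (x1 - x3) = 1 - d13)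
    (h23 : P23 * (x2 - x3) = 1 - d23)
    (q12 : P12 * d12 = 0) (q13 : P13 * d13 = 0) (q23 : P23 * d23 = 0)
    (hd : (d12 = 0 ∧ d13 = 0 ∧ d23 = 0) ∨
      (d12 = 1 ∧ d13 = 0 ∧ d23 = 0 ∧ l13 = l23 ∧ l12 = 0 ∧ m12 = 0) ∨
      (d12 = 0 ∧ d13 = 0 ∧ d23 = 1 ∧ l12 = l13 ∧ l23 = 0 ∧ m23 = 0) ∨
      (d12 = 0 ∧ d13 = 1 ∧ d23 = 0 ∧ l12 = m23 ∧ l23 = m12 ∧ l13 = 0) ∨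
      (d12 = 1 ∧ d13 = 1 ∧ d23 = 1 ∧ l12 = 0 ∧ l13 = 0 ∧ l23 = 0 ∧ m12 = 0 ∧ m23 = 0))
    (hl12 : l12 = 0 ∧ m12 = 0 ∨ l12 = 1 ∧ m12 = 0 ∨ l12 = 0 ∧ m12 = 1)
    (w12 w13 w23 c12 c13 c23 c21 a a' b b' β β' γ : K)
    (hw12 : w12 = 1 - l12 - P12 - (x1 - x2) * d12)
    (hw13 : w13 = 1 - l13 - P13 - (x1 - x3) * d13)
    (hw23 : w23 = 1 - l23 - P23 - (x2 - x3) * d23)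
    (hc12 : c12 = P12 + d12) (hc13 : c13 = P13 + d13) (hc23 : c23 = P23 + d23)
    (hc21 : c21 = -P12 + d12)
    (ha : a = P13 * P23 * d12 - d12 * d23) (ha' : a' = P12 * P13 * d23 - d12 * d23)
    (hb : b = P13 * P23 * d12) (hb' : b' = P12 * P13 * d23)
    (hβ : β = a * w12 - w23 * c12) (hβ' : β' = a' * w23 - w12 * c23)
    (hγ : γ = b * w12 + c23 * c12) :
    a' * β - 2 * d12 * c13 * w12 + w12 * γ - P12 * P23 * d13 * w13 * w12 + c21 * c13 * w12
      = - b' * w13 * w23 - c13 * β' := by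
  subst hw12 hw13 hw23 hc12 hc13 hc23 hc21 hβ hβ' hγ ha ha' hb hb'
  rcases hd with ⟨rfl, rfl, rfl⟩ | ⟨rfl, rfl, rfl, rfl, rfl, rfl⟩ | ⟨rfl, rfl, rfl, rfl, rfl, rfl⟩ |
    ⟨rfl, rfl, rfl, rfl, rfl, rfl⟩ | ⟨rfl, rfl, rfl, rfl, rfl, rfl, rfl, rfl⟩
  all_goals simp at *
  all_goals grind

theorem coef_zero {K : Type*} [CommRing K] (x1 x2 x3 P12 P13 P23 l12 l13 l23 m12 m23 : K)
    (d12 d13 d23 : K)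
    (h12 : P12 * (x1 - x2) = 1 - d12) (h13 : P13 * (x1 - x3) = 1 - d13)
    (h23 : P23 * (x2 - x3) = 1 - d23)
    (q12 : P12 * d12 = 0) (q13 : P13 * d13 = 0) (q23 : P23 * d23 = 0)
    (hd : (d12 = 0 ∧ d13 = 0 ∧ d23 = 0) ∨
      (d12 = 1 ∧ d13 = 0 ∧ d23 = 0 ∧ l13 = l23 ∧ l12 = 0 ∧ m12 = 0) ∨
      (d12 = 0 ∧ d13 = 0 ∧ d23 = 1 ∧ l12 = l13 ∧ l23 = 0 ∧ m23 = 0) ∨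
      (d12 = 0 ∧ d13 = 1 ∧ d23 = 0 ∧ l12 = m23 ∧ l23 = m12 ∧ l13 = 0) ∨
      (d12 = 1 ∧ d13 = 1 ∧ d23 = 1 ∧ l12 = 0 ∧ l13 = 0 ∧ l23 = 0 ∧ m12 = 0 ∧ m23 = 0))
    (hl12 : l12 = 0 ∧ m12 = 0 ∨ l12 = 1 ∧ m12 = 0 ∨ l12 = 0 ∧ m12 = 1)
    (hl23 : l23 = 0 ∧ m23 = 0 ∨ l23 = 1 ∧ m23 = 0 ∨ l23 = 0 ∧ m23 = 1)
    (w12 w13 w23 c12 c13 c23 w21 w32 a a' b b' β β' γ γ' Q12 Q23 : K)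
    (hw12 : w12 = 1 - l12 - P12 - (x1 - x2) * d12)
    (hw13 : w13 = 1 - l13 - P13 - (x1 - x3) * d13)
    (hw23 : w23 = 1 - l23 - P23 - (x2 - x3) * d23)
    (hw21 : w21 = 1 - m12 + P12 + (x1 - x2) * d12)
    (hw32 : w32 = 1 - m23 + P23 + (x2 - x3) * d23)
    (hc12 : c12 = P12 + d12) (hc13 : c13 = P13 + d13) (hc23 : c23 = P23 + d23)
    (ha : a = P13 * P23 * d12 - d12 * d23) (ha' : a' = P12 * P13 * d23 - d12 * d23)
    (hb : b = P13 * P23 * d12) (hb' : b' = P12 * P13 * d23)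
    (hβ : β = a * w12 - w23 * c12) (hβ' : β' = a' * w23 - w12 * c23)
    (hγ : γ = b * w12 + c23 * c12) (hγ' : γ' = b' * w23 + c12 * c23)
    (hQ12 : Q12 = 1 - d12 + (m12 - l12) * (x1 - x2))
    (hQ23 : Q23 = 1 - d23 + (m23 - l23) * (x2 - x3)) :
    (Q12 * (-(P12 * P23 * d13) - d12 * d13) * w13 * w12 - Q12 * w21 * c13 * w12 + b' * β - c12 * γ)
     - (Q23 * (-(P12 * P23 * d13) - d23 * d13) * w13 * w23 - Q23 * w32 * c13 * w23 + b * β' - c23 * γ')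
      = - (d13 * (l12 - m12)) * (w12 * w13 * w23) := by
  subst hw12 hw13 hw23 hc12 hc13 hc23 hw21 hw32 hβ hβ' hγ hγ' ha ha' hb hb' hQ12 hQ23
  rcases hd with ⟨rfl, rfl, rfl⟩ | ⟨rfl, rfl, rfl, rfl, rfl, rfl⟩ | ⟨rfl, rfl, rfl, rfl, rfl, rfl⟩ |
    ⟨rfl, rfl, rfl, rfl, rfl, rfl⟩ | ⟨rfl, rfl, rfl, rfl, rfl, rfl, rfl, rfl⟩
  all_goals simp at *
  · rcases hl12 with ⟨rfl, rfl⟩ | ⟨rfl, rfl⟩ | ⟨rfl, rfl⟩ <;>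
    rcases hl23 with ⟨rfl, rfl⟩ | ⟨rfl, rfl⟩ | ⟨rfl, rfl⟩ <;> grind
  · rcases hl23 with ⟨rfl, rfl⟩ | ⟨rfl, rfl⟩ | ⟨rfl, rfl⟩ <;> grind
  · rcases hl12 with ⟨rfl, rfl⟩ | ⟨rfl, rfl⟩ | ⟨rfl, rfl⟩ <;> grind
  · rcases hl12 with ⟨rfl, rfl⟩ | ⟨rfl, rfl⟩ | ⟨rfl, rfl⟩ <;> grind
  · grind

theorem move_P {A B : Type*} [Ring A] [CommRing B] (f : B →+* A) (ψ : A)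
    (P P' D D' d d' t : B) (h : f D * ψ = ψ * f D' + f t) (hd : f d * ψ = ψ * f d')
    (h1 : P * D = 1 - d) (h2 : P * d = 0) (h1' : P' * D' = 1 - d') (h2' : P' * d' = 0) :
    f P * ψ = ψ * f P' - f (P * t * P') := by
  have e1 : f (P * D) * ψ * f P' = f P * ψ * f (P' * D') + f (P * t * P') := by
    rw [map_mul, mul_assoc (f P), h, mul_comm P' D']
    simp only [map_mul]; noncomm_ring
  rw [h1, h1'] at e1
  have e2 : f (1 - d) * ψ = ψ * f (1 - d') := by
    simp only [map_sub, map_one, sub_mul, mul_sub, hd, one_mul, mul_one]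
  have e3 : f P * ψ * f (1 - d') = f P * ψ := by
    rw [mul_assoc, ← e2, ← mul_assoc, ← map_mul, mul_sub, h2, mul_one, sub_zero]
  have e4 : f (1 - d) * ψ * f P' = ψ * f P' := by
    rw [e2, mul_assoc, ← map_mul, sub_mul, mul_comm d', h2', one_mul, sub_zero]
  rw [e3, e4] at e1
  rw [e1]; abel

theorem moves3 {A B : Type*} [Ring A] [CommRing B] (f : B →+* A) (ψ : A)
    (D12 D13 D23 P12 P13 P23 d12 d13 d23 l12 l13 l23 m12 : B)
    (h12 : P12 * D12 = 1 - d12) (h13 : P13 * D13 = 1 - d13) (h23 : P23 * D23 = 1 - d23)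
    (q12 : P12 * d12 = 0) (q13 : P13 * d13 = 0) (q23 : P23 * d23 = 0)
    (dd : d12 * d13 = d12 * d23) (di : d12 * d12 = d12)
    (D1 : f D12 * ψ = ψ * f (-D12) + f (-2 * d12)) (D2 : f D13 * ψ = ψ * f D23 + f (-d12))
    (D3 : f D23 * ψ = ψ * f D13 + f d12)
    (d1 : f d12 * ψ = ψ * f d12) (d2 : f d13 * ψ = ψ * f d23) (d3 : f d23 * ψ = ψ * f d13)
    (l1 : f l12 * ψ = ψ * f m12) (l2 : f l13 * ψ = ψ * f l23) (l3 : f l23 * ψ = ψ * f l13)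
    (w12 w13 w23 w21 c12 c13 c23 c21 a b a' b' a'' b'' : B)
    (hw12 : w12 = 1 - l12 - P12 - D12 * d12)
    (hw13 : w13 = 1 - l13 - P13 - D13 * d13)
    (hw23 : w23 = 1 - l23 - P23 - D23 * d23)
    (hw21 : w21 = 1 - m12 + P12 + D12 * d12)
    (hc12 : c12 = P12 + d12) (hc13 : c13 = P13 + d13) (hc23 : c23 = P23 + d23)
    (hc21 : c21 = -P12 + d12)
    (ha : a = P13 * P23 * d12 - d12 * d23) (ha' : a' = P12 * P13 * d23 - d12 * d23)
    (hb : b = P13 * P23 * d12) (hb' : b' = P12 * P13 * d23)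
    (ha'' : a'' = -(P12 * P23 * d13) - d12 * d13) (hb'' : b'' = -(P12 * P23 * d13)) :
    f w23 * ψ = ψ * f w13 + f a ∧ f c23 * ψ = ψ * f c13 - f b ∧ 
    f w13 * ψ = ψ * f w23 - f a ∧ f a' * ψ = ψ * f a'' ∧
    f w12 * ψ = ψ * f w21 + f (2 * d12) ∧ f c13 * ψ = ψ * f c23 + f b ∧
    f b' * ψ = ψ * f b'' ∧ f c12 * ψ = ψ * f c21 := by
  have p1 : f P12 * ψ = ψ * f (-P12) := by
    rw [move_P f ψ P12 (-P12) D12 (-D12) d12 d12 _ D1 d1 h12 q12 (by rw [← h12]; ring)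
      (by rw [neg_mul, q12, neg_zero])]
    rw [show P12 * (-2 * d12) * (-P12) = (P12 * d12) * (2 * P12) by ring, q12]; simp
  have p2 : f P13 * ψ = ψ * f P23 + f b := by
    rw [move_P f ψ P13 P23 D13 D23 d13 d23 _ D2 d2 h13 q13 h23 q23, hb, sub_eq_add_neg, ← map_neg]
    congr 2; ring
  have p3 : f P23 * ψ = ψ * f P13 - f b := by
    rw [move_P f ψ P23 P13 D23 D13 d23 d13 _ D3 d3 h23 q23 h13 q13, hb]
    congr 2; ring
  have k1 : f (D12 * d12) * ψ = ψ * f (-(D12 * d12)) + f (-2 * d12) := by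
    rw [map_mul, mul_assoc, d1, ← mul_assoc, D1, add_mul, mul_assoc, ← map_mul, ← map_mul,
      mul_assoc (-2), di]
    congr 3
    ring
  have k2 : f (D13 * d13) * ψ = ψ * f (D23 * d23) - f (d12 * d23) := by
    rw [map_mul, mul_assoc, d2, ← mul_assoc, D2, add_mul, mul_assoc, ← map_mul, ← map_mul,
      sub_eq_add_neg, ← map_neg]
    congr 2; ring
  have k3 : f (D23 * d23) * ψ = ψ * f (D13 * d13) + f (d12 * d23) := by
    rw [map_mul, mul_assoc, d3, ← mul_assoc, D3, add_mul, mul_assoc, ← map_mul, ← map_mul, dd]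
  have k4 : f b' * ψ = ψ * f b'' := by
    rw [hb', map_mul, mul_assoc, d3, map_mul, ← mul_assoc, mul_assoc (f P12), p2, mul_add, ← mul_assoc, p1,
     hb, hb'', ← map_mul, show P12 * (P13 * P23 * d12) = (P12 * d12) * (P13 * P23) by ring, q12]
    simp [mul_assoc]
  have k5 : f (d12 * d23) * ψ = ψ * f (d12 * d13) := by
    rw [map_mul, mul_assoc, d3, ← mul_assoc, d1, map_mul, mul_assoc]
  refine ⟨?_, ?_, ?_, ?_, ?_, ?_, k4, ?_⟩
  · rw [hw23, hw13, ha, ← hb]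
    simp only [map_sub, map_one, sub_mul, mul_sub, one_mul, mul_one, l3, p3, k3]; abel
  · rw [hc23, hc13]; simp only [map_add, add_mul, mul_add, p3, d3]; abel
  · rw [hw23, hw13, ha, ← hb]
    simp only [map_sub, map_one, sub_mul, mul_sub, one_mul, mul_one, l2, p2, k2]; abel
  · rw [ha', ha'', ← hb', ← hb'', map_sub, sub_mul, k4, k5, map_sub, mul_sub]
  · rw [hw12, hw21]
    simp only [map_sub, map_one, sub_mul, mul_sub, one_mul, mul_one, l1, p1, k1, map_add, mul_add,
      map_neg, neg_mul, mul_neg]; abel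
  · rw [hc23, hc13]; simp only [map_add, add_mul, mul_add, p2, d2]; abel
  · rw [hc12, hc21]; simp only [map_add, add_mul, mul_add, p1, d1]


theorem braid_local {A B : Type*} [Ring A] [CommRing B] (f : B →+* A) (s1 s2 ψ1 ψ2 : A)
    (x1 x2 x3 P12 P13 P23 d12 d13 d23 l12 l13 l23 m12 m23 : B)
    (h12 : P12 * (x1 - x2) = 1 - d12) (h13 : P13 * (x1 - x3) = 1 - d13)
    (h23 : P23 * (x2 - x3) = 1 - d23)
    (q12 : P12 * d12 = 0) (q13 : P13 * d13 = 0) (q23 : P23 * d23 = 0)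
    (dd : d12 * d13 = d12 * d23) (dd' : d23 * d13 = d23 * d12)
    (di : d12 * d12 = d12) (di' : d23 * d23 = d23)
    (X1 : f x1 * ψ1 = ψ1 * f x2 - f d12) (X2 : f x2 * ψ1 = ψ1 * f x1 + f d12)
    (X3 : f x3 * ψ1 = ψ1 * f x3)
    (Y1 : f x1 * ψ2 = ψ2 * f x1)
    (Y2 : f x2 * ψ2 = ψ2 * f x3 - f d23) (Y3 : f x3 * ψ2 = ψ2 * f x2 + f d23)
    (d1 : f d12 * ψ1 = ψ1 * f d12) (d2 : f d13 * ψ1 = ψ1 * f d23) (d3 : f d23 * ψ1 = ψ1 * f d13)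
    (l1 : f l12 * ψ1 = ψ1 * f m12) (l2 : f l13 * ψ1 = ψ1 * f l23) (l3 : f l23 * ψ1 = ψ1 * f l13)
    (d1' : f d12 * ψ2 = ψ2 * f d13) (d2' : f d13 * ψ2 = ψ2 * f d12)
    (d3' : f d23 * ψ2 = ψ2 * f d23)
    (l1' : f l12 * ψ2 = ψ2 * f l13) (l2' : f l13 * ψ2 = ψ2 * f l12) (l3' : f l23 * ψ2 = ψ2 * f m23)
    (w12 w13 w23 : B)
    (hw12 : w12 = 1 - l12 - P12 - (x1 - x2) * d12)
    (hw13 : w13 = 1 - l13 - P13 - (x1 - x3) * d13)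
    (hw23 : w23 = 1 - l23 - P23 - (x2 - x3) * d23)
    (h1 : s1 = ψ1 * f w12 - f (P12 + d12)) (h2 : s2 = ψ2 * f w23 - f (P23 + d23))
    (Q1 : ψ1 * ψ1 = f (1 - d12 + (m12 - l12) * (x1 - x2)))
    (Q2 : ψ2 * ψ2 = f (1 - d23 + (m23 - l23) * (x2 - x3)))
    (comp : ∀ a b : B, (∀ (K : Type _) [CommRing K] (g : B →+* K),
      ((g d12 = 0 ∧ g d13 = 0 ∧ g d23 = 0) ∨
      (g d12 = 1 ∧ g d13 = 0 ∧ g d23 = 0 ∧ g l13 = g l23 ∧ g l12 = 0 ∧ g m12 = 0) ∨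
      (g d12 = 0 ∧ g d13 = 0 ∧ g d23 = 1 ∧ g l12 = g l13 ∧ g l23 = 0 ∧ g m23 = 0) ∨
      (g d12 = 0 ∧ g d13 = 1 ∧ g d23 = 0 ∧ g l12 = g m23 ∧ g l23 = g m12 ∧ g l13 = 0) ∨
      (g d12 = 1 ∧ g d13 = 1 ∧ g d23 = 1 ∧ g l12 = 0 ∧ g l13 = 0 ∧ g l23 = 0 ∧ g m12 = 0
        ∧ g m23 = 0)) →
      (g l12 = 0 ∧ g m12 = 0 ∨ g l12 = 1 ∧ g m12 = 0 ∨ g l12 = 0 ∧ g m12 = 1) →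
      (g l23 = 0 ∧ g m23 = 0 ∨ g l23 = 1 ∧ g m23 = 0 ∨ g l23 = 0 ∧ g m23 = 1) → g a = g b) →
      a = b) :
    s1 * s2 * s1 - s2 * s1 * s2 =
      (ψ1 * ψ2 * ψ1 - ψ2 * ψ1 * ψ2 - f (d13 * (l12 - m12))) * f (w12 * w13 * w23) := by
  obtain ⟨R1, R2, R5, R6, R7, R8, R9, R10⟩ := moves3 f ψ1 (x1 - x2) (x1 - x3) (x2 - x3) P12 P13 P23
    d12 d13 d23 l12 l13 l23 m12 h12 h13 h23 q12 q13 q23 dd di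
    (by simp only [map_sub, map_neg, map_mul, sub_mul, X1, X2, neg_sub, mul_sub, neg_mul]
        simp only [map_ofNat]; noncomm_ring)
    (by simp only [map_sub, map_neg, sub_mul, X1, X3, mul_sub]; noncomm_ring)
    (by simp only [map_sub, map_neg, sub_mul, X2, X3, mul_sub]; noncomm_ring)
    d1 d2 d3 l1 l2 l3 w12 w13 w23 _ _ _ _ _ _ _ _ _ _ _ hw12 hw13 hw23
    rfl rfl rfl rfl rfl rfl rfl rfl rfl rfl rfl
  obtain ⟨S1, S2, S5, S6, S7, S8, S9, S10⟩ := moves3 f ψ2 (x2 - x3) (x1 - x3) (x1 - x2) P23 P13 P12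
    d23 d13 d12 l23 l13 l12 m23 h23 h13 h12 q23 q13 q12 dd' di'
    (by simp only [map_sub, map_neg, map_mul, sub_mul, Y2, Y3, neg_sub, mul_sub, neg_mul]
        simp only [map_ofNat]; noncomm_ring)
    (by simp only [map_sub, map_neg, sub_mul, Y1, Y3, mul_sub]; noncomm_ring)
    (by simp only [map_sub, map_neg, sub_mul, Y1, Y2, mul_sub]; noncomm_ring)
    d3' d2' d1' l3' l2' l1' w23 w13 w12 _ _ _ _ _ _ _ _ _ _ _ hw23 hw13 hw12
    rfl rfl rfl rfl rfl rfl rfl rfl rfl rfl rfl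
  have e1 : P13 * P12 * d23 - d23 * d12 = P12 * P13 * d23 - d12 * d23 := by ring
  have e2 : P13 * P12 * d23 = P12 * P13 * d23 := by ring
  have e3 : P23 * P13 * d12 - d23 * d12 = P13 * P23 * d12 - d12 * d23 := by ring
  have e4 : P23 * P13 * d12 = P13 * P23 * d12 := by ring
  rw [e1] at S1 S5
  rw [e2] at S2 S8
  rw [e3] at S6
  rw [e4] at S9
  have A1 := expand3 f s1 s2 ψ1 ψ2 _ _ _ _ _ _ _ _ _ _ _ _ _ _ _ _ h1 h2 R1 R2 S1 S2 R5 R6 R7 R8 R9 R10 Q1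
  have A2 := expand3 f s2 s1 ψ2 ψ1 _ _ _ _ _ _ _ _ _ _ _ _ _ _ _ _ h2 h1 S1 S2 R1 R2 S5 S6 S7 S8 S9 S10 Q2
  rw [A1, A2]
  have C1 : (P12 * P13 * d23 - d12 * d23) * ((P13 * P23 * d12 - d12 * d23) * w12
      - w23 * (P12 + d12)) - 2 * d12 * (P13 + d13) * w12
      + w12 * (P13 * P23 * d12 * w12 + (P23 + d23) * (P12 + d12))
      - P12 * P23 * d13 * w13 * w12 + (-P12 + d12) * (P13 + d13) * w12
      = - (P12 * P13 * d23) * w13 * w23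
        - (P13 + d13) * ((P12 * P13 * d23 - d12 * d23) * w23 - w12 * (P23 + d23)) := by
    apply comp
    intro K _ g hd h12' h23'
    have := coef_one (g x1) (g x2) (g x3) (g P12) (g P13) (g P23) (g l12) (g l13) (g l23) (g m12)
      (g m23) (g d12) (g d13) (g d23) (by rw [← map_sub, ← map_mul, h12]; simp)
      (by rw [← map_sub, ← map_mul, h13]; simp) (by rw [← map_sub, ← map_mul, h23]; simp)
      (by rw [← map_mul, q12]; simp) (by rw [← map_mul, q13]; simp) (by rw [← map_mul, q23]; simp)
      hd h12' _ _ _ _ _ _ _ _ _ _ _ _ _ _ rfl rfl rfl rfl rfl rfl rfl rfl rfl rfl rfl rfl rfl rfl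
    have h2g : g 2 = 2 := map_ofNat g 2
    subst hw12 hw13 hw23
    simp only [map_mul, map_add, map_sub, map_neg, map_one, h2g]
    linear_combination this
  have C2 : (P13 * P23 * d12 - d12 * d23) * ((P12 * P13 * d23 - d12 * d23) * w23
      - w12 * (P23 + d23)) - 2 * d23 * (P13 + d13) * w23
      + w23 * (P12 * P13 * d23 * w23 + (P12 + d12) * (P23 + d23))
      - P12 * P23 * d13 * w13 * w23 + (-P23 + d23) * (P13 + d13) * w23
      = - (P13 * P23 * d12) * w13 * w12
        - (P13 + d13) * ((P13 * P23 * d12 - d12 * d23) * w12 - w23 * (P12 + d12)) := by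
    apply comp
    intro K _ g hd h12' h23'
    have := coef_one (-g x3) (-g x2) (-g x1) (g P23) (g P13) (g P12) (g l23) (g l13) (g l12) (g m23)
      (g m12) (g d23) (g d13) (g d12)
      (by rw [sub_neg_eq_add, neg_add_eq_sub, ← map_sub, ← map_mul, h23]; simp)
      (by rw [sub_neg_eq_add, neg_add_eq_sub, ← map_sub, ← map_mul, h13]; simp)
      (by rw [sub_neg_eq_add, neg_add_eq_sub, ← map_sub, ← map_mul, h12]; simp)
      (by rw [← map_mul, q23]; simp) (by rw [← map_mul, q13]; simp) (by rw [← map_mul, q12]; simp)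
      (by
        rcases hd with ⟨i1, i2, i3⟩ | ⟨i1, i2, i3, i4, i5, i6⟩ | ⟨i1, i2, i3, i4, i5, i6⟩ |
          ⟨i1, i2, i3, i4, i5, i6⟩ | ⟨i1, i2, i3, i4, i5, i6, i7, i8⟩
        · exact Or.inl ⟨i3, i2, i1⟩
        · exact Or.inr (Or.inr (Or.inl ⟨i3, i2, i1, i4.symm, i5, i6⟩))
        · exact Or.inr (Or.inl ⟨i3, i2, i1, i4.symm, i5, i6⟩)
        · exact Or.inr (Or.inr (Or.inr (Or.inl ⟨i3, i2, i1, i5, i4, i6⟩)))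
        · exact Or.inr (Or.inr (Or.inr (Or.inr ⟨i3, i2, i1, i6, i5, i4, i8, i7⟩))))
      h23' _ _ _ _ _ _ _ _ _ _ _ _ _ _ rfl rfl rfl rfl rfl rfl rfl rfl rfl rfl rfl rfl rfl rfl
    have h2g : g 2 = 2 := map_ofNat g 2
    subst hw12 hw13 hw23
    simp only [map_mul, map_add, map_sub, map_neg, map_one, h2g]
    linear_combination this
  have C3 : ((1 - d12 + (m12 - l12) * (x1 - x2)) * (-(P12 * P23 * d13) - d12 * d13) * w13 * w12
      - (1 - d12 + (m12 - l12) * (x1 - x2)) * (1 - m12 + P12 + (x1 - x2) * d12) * (P13 + d13) * w12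
      + P12 * P13 * d23 * ((P13 * P23 * d12 - d12 * d23) * w12 - w23 * (P12 + d12))
      - (P12 + d12) * (P13 * P23 * d12 * w12 + (P23 + d23) * (P12 + d12)))
      - ((1 - d23 + (m23 - l23) * (x2 - x3)) * (-(P12 * P23 * d13) - d23 * d13) * w13 * w23
      - (1 - d23 + (m23 - l23) * (x2 - x3)) * (1 - m23 + P23 + (x2 - x3) * d23) * (P13 + d13) * w23
      + P13 * P23 * d12 * ((P12 * P13 * d23 - d12 * d23) * w23 - w12 * (P23 + d23))
      - (P23 + d23) * (P12 * P13 * d23 * w23 + (P12 + d12) * (P23 + d23)))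
      = - (d13 * (l12 - m12)) * (w12 * w13 * w23) := by
    apply comp
    intro K _ g hd h12' h23'
    have := coef_zero (g x1) (g x2) (g x3) (g P12) (g P13) (g P23) (g l12) (g l13) (g l23) (g m12)
      (g m23) (g d12) (g d13) (g d23) (by rw [← map_sub, ← map_mul, h12]; simp)
      (by rw [← map_sub, ← map_mul, h13]; simp) (by rw [← map_sub, ← map_mul, h23]; simp)
      (by rw [← map_mul, q12]; simp) (by rw [← map_mul, q13]; simp) (by rw [← map_mul, q23]; simp)
      hd h12' h23' _ _ _ _ _ _ _ _ _ _ _ _ _ _ _ _ _ _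
      rfl rfl rfl rfl rfl rfl rfl rfl rfl rfl rfl rfl rfl rfl rfl rfl rfl rfl
    subst hw12 hw13 hw23
    simp only [map_mul, map_add, map_sub, map_neg, map_one]
    linear_combination this
  subst hw12 hw13 hw23
  have F : ∀ (M1 M2 M3 M4 : A) (u v u1 u1' u2 u2' u3 u3' u4 u4' u0 u0' k : B), u = v → u1 = u1' →
     u2 = u2' → u3 = u3' → u4 = u4' → u0 - u0' = - k * u →
     (M1 * f u + ψ1 * ψ2 * f u1 + ψ2 * ψ1 * f u2 + ψ1 * f u3 + ψ2 * f u4 + f u0)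
      - (M2 * f v + ψ2 * ψ1 * f u2' + ψ1 * ψ2 * f u1' + ψ2 * f u4' + ψ1 * f u3' + f u0') =
     (M1 - M2 - f k) * f u := by
    intro M1 M2 M3 M4 u v u1 u1' u2 u2' u3 u3' u4 u4' u0 u0' k g1 g2 g3 g4 g5 g6
    subst g1 g2 g3 g4 g5
    have g7 : f u0 = f u0' - f k * f u := by
      rw [← map_mul, ← map_sub]; congr 1; linear_combination g6
    rw [g7]; noncomm_ring
  apply F
  · exact 0
  · exact 0
  · ring
  · ring
  · ring
  · linear_combination C1
  · linear_combination -C2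
  · linear_combination C3

end SecP2

section SecP3

theorem quad_local {A B : Type*} [Ring A] [CommRing B] (f : B →+* A) (s ψ : A)
    (D P d l m w w' : B) (h : P * D = 1 - d) (q : P * d = 0) (di : d * d = d)
    (D1 : f D * ψ = ψ * f (-D) + f (-2 * d))
    (d1 : f d * ψ = ψ * f d) (l1 : f l * ψ = ψ * f m)
    (hw : w = 1 - l - P - D * d) (hw' : w' = 1 - m + P + D * d)
    (hQ : (1 - d + (m - l) * D) * (w' * w) + (P + d) * (P + d) = 1)
    (hs : s = ψ * f w - f (P + d)) :
    s * s - 1 = (ψ * ψ - f (1 - d + (m - l) * D)) * f (w' * w) := by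
  have p1 : f P * ψ = ψ * f (-P) := by
    rw [move_P f ψ P (-P) D (-D) d d _ D1 d1 h q (by rw [← h]; ring)
      (by rw [neg_mul, q, neg_zero])]
    rw [show P * (-2 * d) * (-P) = (P * d) * (2 * P) by ring, q]; simp
  have k1 : f (D * d) * ψ = ψ * f (-(D * d)) + f (-2 * d) := by
    rw [map_mul, mul_assoc, d1, ← mul_assoc, D1, add_mul, mul_assoc, ← map_mul, ← map_mul,
      mul_assoc (-2), di]
    congr 3
    ring
  have kw : f w * ψ = ψ * f w' + f (2 * d) := by
    rw [hw, hw']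
    simp only [map_sub, map_one, sub_mul, mul_sub, one_mul, mul_one, l1, p1, k1, map_add, mul_add,
      map_neg, neg_mul, mul_neg]; abel
  have kc : f (P + d) * ψ = ψ * f (-P + d) := by
    simp only [map_add, add_mul, mul_add, p1, d1]
  have e : s * s = ψ * (f w * ψ) * f w - ψ * (f w * f (P + d)) - (f (P + d) * ψ) * f w
      + f (P + d) * f (P + d) := by
    rw [hs]; noncomm_ring
  rw [e, kw, kc]
  have e2 : f (P + d) * f (P + d) = 1 - f (1 - d + (m - l) * D) * f (w' * w) := by
    rw [← map_mul, ← map_mul, ← map_one f, ← map_sub]; congr 1; linear_combination hQ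
  have e3 : f (2 * d) * f w - f w * f (P + d) - f (-P + d) * f w = 0 := by
    rw [← map_mul, ← map_mul, ← map_mul, ← map_sub, ← map_sub, ← map_zero f]; congr 1; ring
  calc _ = ψ * ψ * (f w' * f w) + ψ * (f (2 * d) * f w - f w * f (P + d) - f (-P + d) * f w)
        + f (P + d) * f (P + d) - 1 := by noncomm_ring
    _ = _ := by rw [e3, e2, ← map_mul]; noncomm_ring

theorem x_local {A B : Type*} [Ring A] [CommRing B] (f : B →+* A) (s ψ : A)
    (x1 x2 P d l w : B) (h : P * (x1 - x2) = 1 - d) (q : P * d = 0) (di : d * d = d)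
    (ld : l * d = 0)
    (hw : w = 1 - l - P - (x1 - x2) * d) (hs : s = ψ * f w - f (P + d)) :
    s * f x2 - f x1 * s - 1 = (ψ * f x2 - f x1 * ψ - f d) * f w ∧
    f x2 * s - s * f x1 - 1 = (f x2 * ψ - ψ * f x1 - f d) * f w := by
  have e : (P + d) * (x1 - x2) - 1 = - (d * w) := by
    rw [hw]; linear_combination h + (-1 : B) * ld - q - (x1 - x2) * di
  have e' : f (P + d) * f x1 - f (P + d) * f x2 - 1 = - (f d * f w) := by
    rw [← map_mul, ← map_mul, ← map_mul, ← map_sub, ← map_neg, ← map_one f, ← map_sub, ← e]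
    congr 1; ring
  have cm : ∀ u v, f u * f v = f v * f u := fun u v => by rw [← map_mul, ← map_mul, mul_comm]
  constructor
  · calc _ = ψ * (f w * f x2) - f x1 * ψ * f w - (f (P + d) * f x2 - f x1 * f (P + d)) - 1 := by
          rw [hs]; noncomm_ring
      _ = (ψ * f x2 - f x1 * ψ) * f w + (f (P + d) * f x1 - f (P + d) * f x2 - 1) := by
          rw [cm w, cm x1 (P + d)]; noncomm_ring
      _ = _ := by rw [e']; noncomm_ring
  · calc _ = f x2 * ψ * f w - ψ * (f w * f x1) + (f (P + d) * f x1 - f x2 * f (P + d) - 1) := by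
          rw [hs]; noncomm_ring
      _ = (f x2 * ψ - ψ * f x1) * f w + (f (P + d) * f x1 - f (P + d) * f x2 - 1) := by
          rw [cm w, cm x2 (P + d)]; noncomm_ring
      _ = _ := by rw [e']; noncomm_ring

theorem far_local {A B : Type*} [Ring A] [CommRing B] (f : B →+* A) (s t ψ φ : A) (w c w' c' : B)
    (hs : s = ψ * f w - f c) (ht : t = φ * f w' - f c')
    (h1 : f w * φ = φ * f w) (h2 : f c * φ = φ * f c)
    (h3 : f w' * ψ = ψ * f w') (h4 : f c' * ψ = ψ * f c') :
    s * t - t * s = (ψ * φ - φ * ψ) * f (w * w') := by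
  have cm : ∀ u v, f u * f v = f v * f u := fun u v => by rw [← map_mul, ← map_mul, mul_comm]
  have e1 : s * t = ψ * (f w * φ) * f w' - ψ * (f w * f c') - (f c * φ) * f w' + f c * f c' := by
    rw [hs, ht]; noncomm_ring
  have e2 : t * s = φ * (f w' * ψ) * f w - φ * (f w' * f c) - (f c' * ψ) * f w + f c' * f c := by
    rw [hs, ht]; noncomm_ring
  rw [e1, e2, h1, h2, h3, h4, cm w' c, cm c' c, cm w c', map_mul]
  have : φ * (ψ * f w') * f w = φ * ψ * (f w * f w') := by rw [cm w w']; noncomm_ring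
  rw [this]; noncomm_ring

end SecP3

section SecP4

universe uB
section BaseSec
variable {n p : ℕ} [NeZero p] {A : Type*} {B : Type uB} [Ring A] [CommRing B]

/-- `Σ_i g(i) E_i`. -/
def Tm (E : (Fin n → ZMod p) → B) (g : (Fin n → ZMod p) → ℤ) : B := ∑ i, (g i : B) * E i

/-- indicator of equal residues -/
def dlt (k l : Fin n) (i : Fin n → ZMod p) : ℤ := if i k = i l then 1 else 0

/-- indicator of `i_k = i_l + 1` -/
def lam (k l : Fin n) (i : Fin n → ZMod p) : ℤ := if i k = i l + 1 then 1 else 0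

theorem swapSeq_invol (r : Fin (n - 1)) :
    Function.Involutive (fun i : Fin n → ZMod p => swapSeq i r) := by
  intro i
  have h : pR r ≠ pL r := by intro h; have := congrArg Fin.val h; simp [pR, pL] at this
  funext k
  simp only [swapSeq]
  split_ifs with h1 h2 h2 <;> simp_all

theorem swapSeq_L (i : Fin n → ZMod p) (r : Fin (n - 1)) : swapSeq i r (pL r) = i (pR r) := by
  simp [swapSeq]

theorem pR_ne_pL (r : Fin (n - 1)) : pR r ≠ pL r := by
  intro h; have := congrArg Fin.val h; simp [pR, pL] at this

theorem swapSeq_R (i : Fin n → ZMod p) (r : Fin (n - 1)) : swapSeq i r (pR r) = i (pL r) := by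
  simp [swapSeq, pR_ne_pL]

theorem swapSeq_far (i : Fin n → ZMod p) (r : Fin (n - 1)) {k : Fin n} (h : k ≠ pL r)
    (h' : k ≠ pR r) : swapSeq i r k = i k := by
  simp [swapSeq, h, h']

structure BaseData (n p : ℕ) [NeZero p] (B : Type*) [CommRing B] where
  E : (Fin n → ZMod p) → B
  x : Fin n → B
  P : Fin n → Fin n → B
  one_ne : (1 : ZMod p) ≠ 0
  two_ne : (2 : ZMod p) ≠ 0
  idem : ∀ i, E i * E i = E i
  orth : ∀ i j, i ≠ j → E i * E j = 0
  total : ∑ i, E i = 1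
  hP : ∀ k l, P k l * (x k - x l) = 1 - Tm E (dlt k l)
  hPd : ∀ k l, P k l * Tm E (dlt k l) = 0
  hw : ∀ k l, IsUnit (1 - Tm E (lam k l) - P k l - (x k - x l) * Tm E (dlt k l))

namespace BaseData
variable (b : BaseData n p B)

def T (g : (Fin n → ZMod p) → ℤ) : B := Tm b.E g
def d (k l : Fin n) : B := b.T (dlt k l)
def l (k l : Fin n) : B := b.T (lam k l)
def w (k l : Fin n) : B := 1 - b.l k l - b.P k l - (b.x k - b.x l) * b.d k l
def c (k l : Fin n) : B := b.P k l + b.d k l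
def Q (k l : Fin n) : B := 1 - b.d k l + (b.l l k - b.l k l) * (b.x k - b.x l)

theorem T_E (g : (Fin n → ZMod p) → ℤ) (i) : b.T g * b.E i = (g i : B) * b.E i := by
  unfold T Tm
  rw [Finset.sum_mul, Finset.sum_eq_single i]
  · rw [mul_assoc, b.idem]
  · intro j _ hj; rw [mul_assoc, b.orth _ _ hj, mul_zero]
  · simp

theorem ext' {u v : B} (h : ∀ i, u * b.E i = v * b.E i) : u = v := by
  rw [← mul_one u, ← mul_one v, ← b.total, Finset.mul_sum, Finset.mul_sum]
  exact Finset.sum_congr rfl fun i _ => h i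

theorem comp {u v : B}
    (h : ∀ (i : Fin n → ZMod p) (K : Type uB) [CommRing K] (g : B →+* K),
      (∀ t, g (b.T t) = (t i : K)) → g u = g v) : u = v := by
  refine b.ext' fun i => ?_
  have := h i (B ⧸ Ideal.span {1 - b.E i}) (Ideal.Quotient.mk _) (by
    intro t
    have e : Ideal.Quotient.mk (Ideal.span {1 - b.E i}) (b.E i) = 1 := by
      rw [← map_one (Ideal.Quotient.mk _), eq_comm, Ideal.Quotient.eq]
      exact Ideal.mem_span_singleton_self _
    have e2 := congrArg (Ideal.Quotient.mk (Ideal.span {1 - b.E i})) (b.T_E t i)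
    rw [map_mul, map_mul, e, mul_one, mul_one, map_intCast] at e2
    exact e2)
  rw [Ideal.Quotient.eq, Ideal.mem_span_singleton'] at this
  obtain ⟨a, ha⟩ := this
  have : (u - v) * b.E i = 0 := by
    rw [← ha]; have := b.idem i; linear_combination (-a) * this
  linear_combination this

theorem d_idem (k l) : b.d k l * b.d k l = b.d k l := by
  apply b.comp; intro i K _ g hg
  simp only [d, map_mul, hg, dlt]; split_ifs <;> simp

theorem ld (k l) : b.l k l * b.d k l = 0 := by
  apply b.comp; intro i K _ g hg
  simp only [d, BaseData.l, map_mul, hg, dlt, lam, map_zero]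
  have := b.one_ne
  split_ifs with h1 h2 <;> simp_all

theorem d_symm (k l) : b.d k l = b.d l k := by
  apply b.comp; intro i K _ g hg
  simp only [d, hg, dlt, eq_comm]

theorem hP' (k l) : b.P k l * (b.x k - b.x l) = 1 - b.d k l := b.hP k l
theorem hPd' (k l) : b.P k l * b.d k l = 0 := b.hPd k l

theorem P_anti (k l) : b.P l k = - b.P k l := by
  have h1 := b.hP' k l
  have h2 := b.hP' l k
  have h3 := b.hPd' k l
  have h4 := b.hPd' l k
  rw [← b.d_symm] at h2 h4
  linear_combination (-b.P l k) * h1 - b.P k l * h2 + h3 + h4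

theorem w_symm (k l) : b.w l k = 1 - b.l l k + b.P k l + (b.x k - b.x l) * b.d k l := by
  unfold w; rw [b.P_anti, b.d_symm l k]; ring

theorem w_unit (k l) : IsUnit (b.w k l) := b.hw k l

theorem Q_id (k l) : b.Q k l * (b.w l k * b.w k l) + b.c k l * b.c k l = 1 := by
  rw [w_symm]
  apply b.comp; intro i K _ g hg
  have h1 := congrArg g (b.hP' k l)
  have h2 := congrArg g (b.hPd' k l)
  simp only [Q, w, c, d, BaseData.l, map_mul, map_sub, map_add, map_one, map_zero, hg, dlt, lam]
    at h1 h2 ⊢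
  generalize g (b.P k l) = P at *
  generalize g (b.x k) = x at *
  generalize g (b.x l) = y at *
  have t1 := b.one_ne
  have t2 := b.two_ne
  by_cases e1 : i k = i l
  · simp [e1, t1] at h1 h2 ⊢; simp [h2]
  · by_cases e2 : i k = i l + 1
    · have e3 : i l ≠ i k + 1 := by
        rw [e2]; intro h; apply t2; linear_combination - h
      simp [e2, t1] at h1 h2 e3 ⊢
      simp [e3]; linear_combination (-P - 1 ) * h1 * (-1)
    · by_cases e3 : i l = i k + 1
      · have e2 : i k ≠ i l + 1 := by
          rw [e3]; intro h; apply t2; linear_combination - h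
        simp [e3, t1] at h1 h2 e2 ⊢
        simp [e2]; linear_combination (1 - P) * h1
      · simp [e1, e2, e3] at h1 h2 ⊢; ring
end BaseData

/-- Moving rules for `ψ_r` past the commutative subalgebra. -/
structure Mov (b : BaseData n p B) (f : B →+* A) (ψ : A) (r : Fin (n - 1)) : Prop where
  hE : ∀ i, ψ * f (b.E i) = f (b.E (swapSeq i r)) * ψ
  x1 : ψ * f (b.x (pR r)) = f (b.x (pL r)) * ψ + f (b.d (pL r) (pR r))
  x2 : f (b.x (pR r)) * ψ = ψ * f (b.x (pL r)) + f (b.d (pL r) (pR r))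
  x3 : ∀ k, k ≠ pL r → k ≠ pR r → ψ * f (b.x k) = f (b.x k) * ψ

namespace Mov
variable {b : BaseData n p B} {f : B →+* A} {ψ : A} {r : Fin (n - 1)} 

theorem hT (m : Mov b f ψ r) (g : (Fin n → ZMod p) → ℤ) :
    f (b.T g) * ψ = ψ * f (b.T (fun i => g (swapSeq i r))) := by
  simp only [BaseData.T, Tm, map_sum, Finset.sum_mul, Finset.mul_sum, map_mul, map_intCast]
  refine Fintype.sum_equiv (swapSeq_invol r).toPerm _ _ fun i => ?_
  have := m.hE (swapSeq i r)
  have e : swapSeq (swapSeq i r) r = i := swapSeq_invol r i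
  rw [e] at this
  simp only [Function.Involutive.coe_toPerm, e, mul_assoc, ← this]
  rw [← mul_assoc, ← mul_assoc, (Int.cast_commute _ ψ).eq]

theorem hT' (m : Mov b f ψ r) {g h : (Fin n → ZMod p) → ℤ} (e : ∀ i, g (swapSeq i r) = h i) :
    f (b.T g) * ψ = ψ * f (b.T h) := by
  rw [m.hT]; simp only [e]

theorem x1' (m : Mov b f ψ r) :
    f (b.x (pL r)) * ψ = ψ * f (b.x (pR r)) - f (b.d (pL r) (pR r)) := by
  rw [m.x1]; abel

theorem hD (m : Mov b f ψ r) : f (b.x (pL r) - b.x (pR r)) * ψ =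
    ψ * f (-(b.x (pL r) - b.x (pR r))) + f (-2 * b.d (pL r) (pR r)) := by
  simp only [map_sub, map_neg, map_mul, sub_mul, m.x1', m.x2, neg_sub, mul_sub, neg_mul]
  simp only [map_ofNat]; noncomm_ring

theorem quad_iff (m : Mov b f ψ r) {s : A}
    (hs : s = ψ * f (b.w (pL r) (pR r)) - f (b.c (pL r) (pR r))) :
    s * s = 1 ↔ ψ * ψ = f (b.Q (pL r) (pR r)) := by
  have key := quad_local f s ψ (b.x (pL r) - b.x (pR r)) (b.P (pL r) (pR r)) (b.d (pL r) (pR r))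
    (b.l (pL r) (pR r)) (b.l (pR r) (pL r)) (b.w (pL r) (pR r)) (b.w (pR r) (pL r))
    (b.hP' _ _) (b.hPd' _ _) (b.d_idem _ _) m.hD
    (m.hT' (by intro i; simp only [dlt, swapSeq_L, swapSeq_R, eq_comm]))
    (m.hT' (by intro i; simp only [lam, swapSeq_L, swapSeq_R]))
    rfl (b.w_symm _ _) (b.Q_id _ _) hs
  have hu : IsUnit (f (b.w (pR r) (pL r) * b.w (pL r) (pR r))) :=
    ((b.w_unit _ _).mul (b.w_unit _ _)).map f
  rw [← sub_eq_zero, key, hu.mul_left_eq_zero, sub_eq_zero]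
  rfl

theorem far_P (m : Mov b f ψ r) {k l : Fin n} (k1 : k ≠ pL r) (k2 : k ≠ pR r) (l1 : l ≠ pL r)
    (l2 : l ≠ pR r) : f (b.w k l) * ψ = ψ * f (b.w k l) ∧ f (b.c k l) * ψ = ψ * f (b.c k l) := by
  have hd : f (b.d k l) * ψ = ψ * f (b.d k l) :=
    m.hT' (by intro i; simp only [dlt, swapSeq_far i r k1 k2, swapSeq_far i r l1 l2])
  have hl : f (b.l k l) * ψ = ψ * f (b.l k l) :=
    m.hT' (by intro i; simp only [lam, swapSeq_far i r k1 k2, swapSeq_far i r l1 l2])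
  have hD : f (b.x k - b.x l) * ψ = ψ * f (b.x k - b.x l) := by
    rw [map_sub, sub_mul, mul_sub, m.x3 k k1 k2, m.x3 l l1 l2]
  have hP : f (b.P k l) * ψ = ψ * f (b.P k l) := by
    have := move_P f ψ (b.P k l) (b.P k l) _ _ _ _ 0 (by rw [hD, map_zero, add_zero]) hd
      (b.hP' k l) (b.hPd' k l) (b.hP' k l) (b.hPd' k l)
    simpa using this
  constructor
  · have e : f ((b.x k - b.x l) * b.d k l) * ψ = ψ * f ((b.x k - b.x l) * b.d k l) := by
      rw [map_mul, mul_assoc, hd, ← mul_assoc, hD, mul_assoc]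
    simp only [BaseData.w, map_sub f _ (_ * _), map_sub f _ (b.P k l), map_sub f _ (b.l k l),
      map_one, sub_mul _ _ ψ, mul_sub ψ, one_mul, mul_one, hl, hP, e]
  · simp only [BaseData.c, map_add, add_mul, mul_add, hd, hP]

theorem far_iff {φ : A} {t : Fin (n - 1)} (m : Mov b f ψ r) (m' : Mov b f φ t)
    (hrt : r.1 + 1 < t.1) {s s' : A}
    (hs : s = ψ * f (b.w (pL r) (pR r)) - f (b.c (pL r) (pR r)))
    (hs' : s' = φ * f (b.w (pL t) (pR t)) - f (b.c (pL t) (pR t))) :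
    s * s' = s' * s ↔ ψ * φ = φ * ψ := by
  have k1 : pL r ≠ pL t := by intro h; have := congrArg Fin.val h; simp [pL] at this; omega
  have k2 : pL r ≠ pR t := by intro h; have := congrArg Fin.val h; simp [pL, pR] at this; omega
  have k3 : pR r ≠ pL t := by intro h; have := congrArg Fin.val h; simp [pL, pR] at this; omega
  have k4 : pR r ≠ pR t := by intro h; have := congrArg Fin.val h; simp [pR] at this; omega
  have a1 := m'.far_P k1 k2 k3 k4
  have a2 := m.far_P k1.symm k3.symm k2.symm k4.symm
  have key := far_local f s s' ψ φ _ _ _ _ hs hs' a1.1 a1.2 a2.1 a2.2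
  have hu : IsUnit (f (b.w (pL r) (pR r) * b.w (pL t) (pR t))) :=
    ((b.w_unit _ _).mul (b.w_unit _ _)).map f
  rw [← sub_eq_zero, key, hu.mul_left_eq_zero, sub_eq_zero]

theorem braid_iff {φ : A} {hr : r.1 + 1 < n - 1} (m : Mov b f ψ r) (m' : Mov b f φ ⟨r.1 + 1, hr⟩)
    {s s' : A}
    (hs : s = ψ * f (b.w (pL r) (pR r)) - f (b.c (pL r) (pR r)))
    (hs' : s' = φ * f (b.w (pR r) (pM r hr)) - f (b.c (pR r) (pM r hr)))
    (q : ψ * ψ = f (b.Q (pL r) (pR r))) (q' : φ * φ = f (b.Q (pR r) (pM r hr))) :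
    s * s' * s = s' * s * s' ↔ ψ * φ * ψ - φ * ψ * φ =
      f (b.d (pL r) (pM r hr) * (b.l (pL r) (pR r) - b.l (pR r) (pL r))) := by
  have k12 : pR r ≠ pL r := pR_ne_pL r
  have k31 : pM r hr ≠ pL r := by
    intro h; have := congrArg Fin.val h; simp [pM, pL] at this
  have k32 : pM r hr ≠ pR r := by
    intro h; have := congrArg Fin.val h; simp [pM, pR] at this
  have eL : pL (⟨r.1 + 1, hr⟩ : Fin (n - 1)) = pR r := rfl
  have eR : pR (⟨r.1 + 1, hr⟩ : Fin (n - 1)) = pM r hr := rfl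
  have z1 : ∀ i : Fin n → ZMod p, swapSeq i r (pM r hr) = i (pM r hr) :=
    fun i => swapSeq_far i r k31 k32
  have z2 : ∀ i : Fin n → ZMod p, swapSeq i ⟨r.1 + 1, hr⟩ (pL r) = i (pL r) :=
    fun i => swapSeq_far i _ (by rw [eL]; exact k12.symm) (by rw [eR]; exact k31.symm)
  have z3 : ∀ i : Fin n → ZMod p, swapSeq i ⟨r.1 + 1, hr⟩ (pR r) = i (pM r hr) :=
    fun i => swapSeq_L i _
  have z4 : ∀ i : Fin n → ZMod p, swapSeq i ⟨r.1 + 1, hr⟩ (pM r hr) = i (pR r) :=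
    fun i => swapSeq_R i _
  have key := braid_local f s s' ψ φ (b.x (pL r)) (b.x (pR r)) (b.x (pM r hr))
    (b.P (pL r) (pR r)) (b.P (pL r) (pM r hr)) (b.P (pR r) (pM r hr))
    (b.d (pL r) (pR r)) (b.d (pL r) (pM r hr)) (b.d (pR r) (pM r hr))
    (b.l (pL r) (pR r)) (b.l (pL r) (pM r hr)) (b.l (pR r) (pM r hr))
    (b.l (pR r) (pL r)) (b.l (pM r hr) (pR r))
    (b.hP' _ _) (b.hP' _ _) (b.hP' _ _) (b.hPd' _ _) (b.hPd' _ _) (b.hPd' _ _)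
    (by
      apply b.comp; intro i K _ g hg
      simp only [BaseData.d, map_mul, hg, dlt]; split_ifs <;> simp_all)
    (by
      apply b.comp; intro i K _ g hg
      simp only [BaseData.d, map_mul, hg, dlt]; split_ifs <;> simp_all)
    (b.d_idem _ _) (b.d_idem _ _) m.x1' m.x2 (m.x3 _ k31 k32).symm
    (m'.x3 _ (by rw [eL]; exact k12.symm) (by rw [eR]; exact k31.symm)).symm m'.x1' m'.x2
    (m.hT' (by intro i; simp only [dlt, swapSeq_L, swapSeq_R, eq_comm]))
    (m.hT' (by intro i; simp only [dlt, swapSeq_L, swapSeq_R, z1]))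
    (m.hT' (by intro i; simp only [dlt, swapSeq_L, swapSeq_R, z1]))
    (m.hT' (by intro i; simp only [lam, swapSeq_L, swapSeq_R]))
    (m.hT' (by intro i; simp only [lam, swapSeq_L, swapSeq_R, z1]))
    (m.hT' (by intro i; simp only [lam, swapSeq_L, swapSeq_R, z1]))
    (m'.hT' (by intro i; simp only [dlt, z2, z3, z4]))
    (m'.hT' (by intro i; simp only [dlt, z2, z3, z4]))
    (m'.hT' (by intro i; simp only [dlt, z2, z3, z4, eq_comm]))
    (m'.hT' (by intro i; simp only [lam, z2, z3, z4]))
    (m'.hT' (by intro i; simp only [lam, z2, z3, z4]))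
    (m'.hT' (by intro i; simp only [lam, z2, z3, z4]))
    (b.w (pL r) (pR r)) (b.w (pL r) (pM r hr)) (b.w (pR r) (pM r hr)) rfl rfl rfl hs hs' q q'
    (by
      intro u v h
      apply b.comp; intro i K _ g hg
      have t1 := b.one_ne
      have t2 := b.two_ne
      have t3 : ∀ a c : ZMod p, a = c + 1 → c = a + 1 → False := fun a c h h' =>
        t2 (by linear_combination - h - h')
      have t4 : ∀ a c : ZMod p, a = c + 1 → a = c → False := fun a c h h' =>
        t1 (by linear_combination h' - h)
      refine h K g ?_ ?_ ?_
      · simp only [BaseData.d, BaseData.l, hg, dlt, lam]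
        by_cases e1 : i (pL r) = i (pR r)
        · by_cases e2 : i (pR r) = i (pM r hr)
          · simp [e1, e2, t1]
          · simp [e1, e2, t1]
        · by_cases e2 : i (pR r) = i (pM r hr)
          · rw [e2] at e1; simp [e1, e2, t1]
          · by_cases e3 : i (pL r) = i (pM r hr)
            · rw [e3] at e1; simp [e1, e2, e3, t1]
            · simp [e1, e2, e3]
      · simp only [BaseData.l, hg, lam]
        split_ifs with e1 e2 <;> simp_all
      · simp only [BaseData.l, hg, lam]
        split_ifs with e1 e2 <;> simp_all)
  have hu : IsUnit (f (b.w (pL r) (pR r) * b.w (pL r) (pM r hr) * b.w (pR r) (pM r hr))) :=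
    (((b.w_unit _ _).mul (b.w_unit _ _)).mul (b.w_unit _ _)).map f
  rw [← sub_eq_zero, key, hu.mul_left_eq_zero, sub_eq_zero]
end Mov
end BaseSec

end SecP4

section SecP5a

/-- The properties of `ℤ_(p)` that are used. -/
structure LocHyp (p : ℕ) (R : Type) [CommRing R] : Prop where
  prime : p.Prime
  odd : Odd p
  dom : IsDomain R
  unit : ∀ c : ℤ, ¬ (p : ℤ) ∣ c → IsUnit (c : R)
  max : ∀ m : Ideal R, m.IsMaximal → (p : R) ∈ m

theorem locHyp_of (p : ℕ) (hp : p.Prime) (hodd : Odd p) (Zp : Type) [CommRing Zp] [Algebra ℤ Zp]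
    (S : Submonoid ℤ) (hS : (S : Set ℤ) = {x | ¬ (p : ℤ) ∣ x}) [IsLocalization S Zp] :
    LocHyp p Zp := by
  have hpz : Prime (p : ℤ) := Nat.prime_iff_prime_int.mp hp
  have hmem : ∀ x : ℤ, x ∈ S ↔ ¬ (p : ℤ) ∣ x := fun x => by
    rw [← SetLike.mem_coe, hS]; rfl
  refine ⟨hp, hodd, ?_, ?_, ?_⟩
  · refine IsLocalization.isDomain_of_le_nonZeroDivisors (R := ℤ) (S := Zp) (M := S) ?_
    intro x hx
    rw [mem_nonZeroDivisors_iff_ne_zero]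
    rintro rfl
    exact (hmem 0).1 hx (dvd_zero _)
  · intro c hc
    have := IsLocalization.map_units Zp (⟨c, (hmem c).2 hc⟩ : S)
    simpa using this
  · intro m hm
    haveI : (Ideal.span {(p : ℤ)}).IsPrime := by
      rw [Ideal.span_singleton_prime (by exact_mod_cast hp.ne_zero)]; exact hpz
    have hS' : S = (Ideal.span {(p : ℤ)}).primeCompl := by
      ext x
      rw [hmem, Ideal.mem_primeCompl_iff, Ideal.mem_span_singleton]
    subst hS'
    haveI : IsLocalization.AtPrime Zp (Ideal.span {(p : ℤ)}) := ‹_›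
    haveI := IsLocalization.AtPrime.isLocalRing Zp (Ideal.span {(p : ℤ)})
    have h1 := IsLocalRing.eq_maximalIdeal hm
    have h2 := (IsLocalization.AtPrime.to_map_mem_maximal_iff Zp (Ideal.span {(p : ℤ)}) (p : ℤ)).2
      (Ideal.mem_span_singleton_self _)
    rw [h1]; simpa using h2

/-- Polynomial homs into noncommutative algebras from commuting families. -/
theorem exists_mvlift {σ : Type} {R A : Type} [CommRing R] [Ring A] [Algebra R A] (x : σ → A)
    (h : ∀ k l, x k * x l = x l * x k) :
    ∃ f : MvPolynomial σ R →ₐ[R] A, ∀ k, f (MvPolynomial.X k) = x k := by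
  letI : CommRing (Algebra.adjoin R (Set.range x)) := Algebra.adjoinCommRingOfComm R (by
    rintro _ ⟨k, rfl⟩ _ ⟨l, rfl⟩; exact h k l)
  let y : σ → Algebra.adjoin R (Set.range x) := fun k => ⟨x k, Algebra.subset_adjoin ⟨k, rfl⟩⟩
  refine ⟨(Algebra.adjoin R (Set.range x)).val.comp (MvPolynomial.aeval y), fun k => ?_⟩
  simp [y]

section Poly
variable (p : ℕ) [NeZero p] (R : Type) [CommRing R]
open Polynomial

/-- residue component of the polynomial -/
noncomputable def Ga (M : ℕ) (a : ZMod p) : R[X] :=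
  (∏ c ∈ (Finset.Icc (-(M : ℤ)) M).filter (fun c : ℤ => (c : ZMod p) = a), (X - C (c : R))) ^ M

noncomputable def GG (M : ℕ) : R[X] := ∏ a : ZMod p, Ga p R M a

variable {p R}

theorem Ga_dvd (M : ℕ) (a : ZMod p) : Ga p R M a ∣ GG p R M := Finset.dvd_prod_of_mem _ (by simp)

theorem Ga_monic (M : ℕ) (a : ZMod p) : (Ga p R M a).Monic :=
  (monic_prod_of_monic _ _ fun c _ => monic_X_sub_C _).pow _

theorem GG_monic (M : ℕ) : (GG p R M).Monic := monic_prod_of_monic _ _ fun a _ => Ga_monic M a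

theorem dvd_Ga (cs : Multiset ℤ) (a : ZMod p) (h : ∀ c ∈ cs, (c : ZMod p) = a) :
    ∃ M0 : ℕ, ∀ M, M0 ≤ M → (cs.map fun c : ℤ => (X - C (c : R))).prod ∣ Ga p R M a := by
  obtain ⟨K, hK⟩ : ∃ K : ℕ, ∀ c ∈ cs, c.natAbs ≤ K := by
    refine ⟨(cs.map Int.natAbs).sum, fun c hc => ?_⟩
    exact Multiset.single_le_sum (by simp) _ (Multiset.mem_map_of_mem _ hc)
  refine ⟨K + Multiset.card cs, fun M hM => ?_⟩
  have key : ∀ ds : Multiset ℤ, ds ≤ cs → (ds.map fun c : ℤ => (X - C (c : R))).prod ∣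
      (∏ c ∈ (Finset.Icc (-(M : ℤ)) M).filter (fun c : ℤ => (c : ZMod p) = a), (X - C (c : R))) ^
        (Multiset.card ds) := by
    intro ds
    induction ds using Multiset.induction with
    | empty => simp
    | cons c ds ih =>
      intro hle
      rw [Multiset.map_cons, Multiset.prod_cons, Multiset.card_cons, pow_succ']
      have hc : c ∈ cs := Multiset.mem_of_le hle (Multiset.mem_cons_self _ _)
      refine mul_dvd_mul ?_ (ih (le_trans (Multiset.le_cons_self _ _) hle))
      refine Finset.dvd_prod_of_mem (fun c : ℤ => (X - C (c : R))) ?_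
      rw [Finset.mem_filter, Finset.mem_Icc]
      have := hK c hc
      exact ⟨⟨by omega, by omega⟩, h c hc⟩
  exact (key cs le_rfl).trans (pow_dvd_pow _ (by omega))

theorem dvd_GG (cs : Multiset ℤ) :
    ∃ M0 : ℕ, ∀ M, M0 ≤ M → (cs.map fun c : ℤ => (X - C (c : R))).prod ∣ GG p R M := by
  choose M0 hM0 using fun a : ZMod p => dvd_Ga (R := R) (cs.filter fun c : ℤ => (c : ZMod p) = a) a
    (by intro c hc; exact (Multiset.mem_filter.1 hc).2)
  refine ⟨∑ a, M0 a, fun M hM => ?_⟩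
  have e : ∀ cs : Multiset ℤ, (cs.map fun c : ℤ => (X - C (c : R))).prod =
      ∏ a : ZMod p, ((cs.filter fun c : ℤ => (c : ZMod p) = a).map fun c : ℤ => (X - C (c : R))).prod := by
    intro cs
    induction cs using Multiset.induction with
    | empty => simp
    | cons c cs ih => 
      rw [Multiset.map_cons, Multiset.prod_cons, ih]
      simp only [Multiset.filter_cons, Multiset.map_add, Multiset.prod_add, Finset.prod_mul_distrib]
      congr 1
      rw [Finset.prod_eq_single (c : ZMod p)]
      · simp
      · intro b _ hb; simp [hb.symm]
      · simp
  rw [e]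
  refine Finset.prod_dvd_prod_of_dvd _ _ fun a _ => hM0 a M (le_trans ?_ hM)
  exact Finset.single_le_sum (f := M0) (fun _ _ => Nat.zero_le _) (Finset.mem_univ a)

theorem Ga_coprime (hR : LocHyp p R) (M : ℕ) {a b : ZMod p} (h : a ≠ b) :
    IsCoprime (Ga p R M a) (Ga p R M b) := by
  refine IsCoprime.pow (IsCoprime.prod_left fun c hc => IsCoprime.prod_right fun d hd => ?_)
  refine isCoprime_X_sub_C_of_isUnit_sub ?_
  rw [← Int.cast_sub]
  apply hR.unit
  intro hd'
  rw [Finset.mem_filter] at hc hd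
  apply h
  rw [← hc.2, ← hd.2, ← sub_eq_zero, ← Int.cast_sub]
  exact (ZMod.intCast_zmod_eq_zero_iff_dvd _ p).2 hd'

theorem exists_eps (hR : LocHyp p R) (M : ℕ) : ∃ ε : ZMod p → R[X],
    (∑ a, ε a = 1) ∧ (∀ a b, a ≠ b → GG p R M ∣ ε a * ε b) ∧
    (∀ a, GG p R M ∣ Ga p R M a * ε a) := by
  obtain ⟨μ, hμ⟩ := (exists_sum_eq_one_iff_pairwise_coprime (t := Finset.univ)
    (s := Ga p R M) Finset.univ_nonempty).2 (by
      intro a b hab; exact Ga_coprime hR M (fun h => hab (Subtype.ext h)))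
  refine ⟨fun a => μ a * ∏ j ∈ Finset.univ \ {a}, Ga p R M j, hμ, ?_, ?_⟩
  · intro a b hab
    have e : GG p R M = Ga p R M a * ∏ j ∈ Finset.univ \ {a}, Ga p R M j := by
      rw [GG, Finset.prod_eq_mul_prod_sdiff_singleton_of_mem (Finset.mem_univ a)]
    have : Ga p R M a ∣ ∏ j ∈ Finset.univ \ {b}, Ga p R M j :=
      Finset.dvd_prod_of_mem _ (by simp [hab])
    obtain ⟨q, hq⟩ := this
    simp only [hq, e]
    exact ⟨μ a * (μ b * q), by ring⟩
  · intro a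
    have e : GG p R M = Ga p R M a * ∏ j ∈ Finset.univ \ {a}, Ga p R M j := by
      rw [GG, Finset.prod_eq_mul_prod_sdiff_singleton_of_mem (Finset.mem_univ a)]
    rw [e]
    exact ⟨μ a, by ring⟩
end Poly

end SecP5a

section SecP5b

open Polynomial
variable {n p : ℕ} [NeZero p] {R : Type} [CommRing R]

theorem p_mem_max (hR : LocHyp p R) {B : Type} [CommRing B] [Algebra R B] [Algebra.IsIntegral R B]
    (m : Ideal B) [hm : m.IsMaximal] : (p : B) ∈ m := by
  have h1 := Ideal.isMaximal_comap_of_isIntegral_of_isMaximal (R := R) m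
  have h2 := hR.max _ h1
  rw [Ideal.mem_comap] at h2
  simpa using h2

theorem mkBase (hR : LocHyp p R) {B : Type} [CommRing B] [Algebra R B] [Algebra.IsIntegral R B]
    (M : ℕ) (x : Fin n → B) (e : Fin n → ZMod p → B) (h1 : ∀ k, ∑ a, e k a = 1)
    (h2 : ∀ k a b, a ≠ b → e k a * e k b = 0)
    (h3 : ∀ k a, aeval (x k) (Ga p R M a) * e k a = 0) :
    ∃ b : BaseData n p B, b.x = x ∧ b.E = fun i => ∏ k, e k (i k) := by
  have hp := hR.prime
  haveI : Fact p.Prime := ⟨hp⟩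
  set E : (Fin n → ZMod p) → B := fun i => ∏ k, e k (i k) with hE
  have tot : ∑ i, E i = 1 := by
    have := Finset.prod_univ_sum (fun _ : Fin n => (Finset.univ : Finset (ZMod p))) e
    rw [Fintype.piFinset_univ] at this
    rw [hE, ← this]; simp [h1]
  have orth : ∀ i j, i ≠ j → E i * E j = 0 := by
    intro i j hij
    obtain ⟨k, hk⟩ := Function.ne_iff.1 hij
    rw [hE]; simp only
    rw [← Finset.prod_mul_distrib]
    exact Finset.prod_eq_zero (Finset.mem_univ k) (h2 k _ _ hk)
  have idem : ∀ i, E i * E i = E i := by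
    intro i
    conv_rhs => rw [← mul_one (E i), ← tot, Finset.mul_sum]
    rw [Finset.sum_eq_single i]
    · intro j _ hj; exact orth _ _ hj.symm
    · simp
  have kill : ∀ i k, aeval (x k) (Ga p R M (i k)) * E i = 0 := by
    intro i k
    rw [hE]; simp only
    rw [← Finset.mul_prod_erase _ _ (Finset.mem_univ k), ← mul_assoc, h3, zero_mul]
  have one_ne : (1 : ZMod p) ≠ 0 := one_ne_zero
  have two_ne : (2 : ZMod p) ≠ 0 := by
    have : ((2 : ℕ) : ZMod p) ≠ 0 := by
      intro h
      rw [ZMod.natCast_eq_zero_iff] at h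
      have h2 := (Nat.prime_dvd_prime_iff_eq hp Nat.prime_two).1 h
      have h3 := hR.odd
      exact absurd (h2 ▸ h3) (by decide)
    simpa using this
  have unit_of : ∀ u : B, (∀ (K : Type) [Field K] (π : B →+* K) (φ : ZMod p →+* K) 
      (i : Fin n → ZMod p), (∀ k, π (x k) = φ (i k)) → (∀ g, π (Tm E g) = (g i : K)) → π u ≠ 0) →
      IsUnit u := by
    intro u hu
    by_contra hnu
    obtain ⟨m, hm, hum⟩ := exists_max_ideal_of_mem_nonunits hnu
    letI : Field (B ⧸ m) := Ideal.Quotient.field m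
    let π := Ideal.Quotient.mk m
    have hpK : (p : B ⧸ m) = 0 := by
      have := Ideal.Quotient.eq_zero_iff_mem.2 (p_mem_max hR m)
      simpa using this
    haveI : CharP (B ⧸ m) p := by
      refine (CharP.charP_iff_prime_eq_zero hp).2 hpK
    let φ : ZMod p →+* (B ⧸ m) := ZMod.castHom (dvd_refl p) _
    obtain ⟨i, hi⟩ : ∃ i, π (E i) ≠ 0 := by
      by_contra hcon
      push Not at hcon
      have := congrArg π tot
      rw [map_sum, map_one] at this
      simp [hcon] at this
    have hi1 : π (E i) = 1 := by
      have := congrArg π (idem i)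
      rw [map_mul] at this
      exact mul_left_cancel₀ hi (by rw [this, mul_one])
    refine hu (B ⧸ m) π φ i ?_ ?_ (Ideal.Quotient.eq_zero_iff_mem.2 hum)
    · intro k
      have := congrArg π (kill i k)
      rw [map_mul, hi1, mul_one, map_zero, Ga] at this
      simp only [map_pow, map_prod, map_sub, aeval_X, aeval_C, map_intCast] at this
      have := eq_zero_of_pow_eq_zero this
      obtain ⟨c, hc, hc'⟩ := Finset.prod_eq_zero_iff.1 this
      rw [Finset.mem_filter] at hc
      rw [← hc.2, map_intCast]
      exact sub_eq_zero.1 hc'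
    · intro g
      simp only [Tm, map_sum, map_mul, map_intCast]
      rw [Finset.sum_eq_single i]
      · rw [hi1, mul_one]
      · intro j _ hj
        have := congrArg π (orth j i hj)
        rw [map_mul, hi1, mul_one, map_zero] at this
        rw [this, mul_zero]
      · simp
  have TE : ∀ g i, Tm E g * E i = (g i : B) * E i := by
    intro g i
    unfold Tm
    rw [Finset.sum_mul, Finset.sum_eq_single i]
    · rw [mul_assoc, idem]
    · intro j _ hj; rw [mul_assoc, orth _ _ hj, mul_zero]
    · simp
  have Td : ∀ k l, Tm E (dlt k l) * Tm E (dlt k l) = Tm E (dlt k l) := by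
    intro k l
    conv_lhs => rw [show Tm E (dlt k l) * Tm E (dlt k l) = 
      Tm E (dlt k l) * ∑ i, (dlt k l i : B) * E i from rfl]
    rw [Finset.mul_sum, Tm]
    refine Finset.sum_congr rfl fun i _ => ?_
    rw [← mul_assoc, mul_comm _ ((dlt k l i : ℤ) : B), mul_assoc]
    show _ * (Tm E (dlt k l) * _) = _
    rw [TE]; simp only [dlt]; split_ifs <;> simp
  have hv : ∀ k l, IsUnit ((x k - x l) * (1 - Tm E (dlt k l)) + Tm E (dlt k l)) := by
    intro k l
    refine unit_of _ fun K _ π φ i hx hg => ?_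
    simp only [map_add, map_mul, map_sub, map_one, hg, hx, dlt]
    split_ifs with h
    · simp
    · simp [← map_sub, sub_eq_zero, h]
  choose v hv using hv
  have hP : ∀ k l, (↑(v k l)⁻¹ * (1 - Tm E (dlt k l))) * (x k - x l) = 1 - Tm E (dlt k l) := by
    intro k l
    have a : (v k l : B) * (1 - Tm E (dlt k l)) = (1 - Tm E (dlt k l)) * (x k - x l) := by
      rw [hv]; have := Td k l; linear_combination (x k - x l - 1) * this
    rw [mul_assoc, ← a, Units.inv_mul_cancel_left]
  have hPd : ∀ k l, (↑(v k l)⁻¹ * (1 - Tm E (dlt k l))) * Tm E (dlt k l) = 0 := by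
    intro k l
    have := Td k l; linear_combination (-(↑(v k l)⁻¹ : B)) * this
  refine ⟨⟨E, x, fun k l => ↑(v k l)⁻¹ * (1 - Tm E (dlt k l)), one_ne, two_ne, idem, orth, tot, hP,
    hPd, ?_⟩, rfl, rfl⟩
  intro k l
  refine unit_of _ fun K _ π φ i hx hg => ?_
  have a1 := congrArg π (hP k l)
  have a2 := congrArg π (hPd k l)
  rw [map_mul] at a1 a2
  simp only [map_sub, map_one, hg, hx, map_zero, map_mul π (_ - _)] at a1 a2 ⊢
  generalize π (↑(v k l)⁻¹ * (1 - Tm E (dlt k l))) = P at *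
  simp only [dlt, lam] at a1 a2 ⊢
  by_cases h : i k = i l
  · simp [h] at a1 a2 ⊢
    simp [a2]
  · by_cases h' : i k = i l + 1
    · simp [h'] at a1 a2 ⊢
      simp [a1]
    · simp [h, h'] at a1 a2 ⊢
      intro hcon
      have hP1 : P = 1 := by linear_combination -hcon
      rw [hP1, one_mul, ← map_sub, ← map_one φ] at a1
      exact h' (by linear_combination φ.injective a1)

end SecP5b

section SecP5c

open Polynomial
variable {n p : ℕ} [NeZero p] {R : Type} [CommRing R]

/-- Adjacent transposition of indices. -/
def sw (r : Fin (n - 1)) : Equiv.Perm (Fin n) := Equiv.swap (pL r) (pR r)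

theorem swapSeq_eq (i : Fin n → ZMod p) (r : Fin (n - 1)) : swapSeq i r = i ∘ sw r := by
  funext k
  simp only [swapSeq, sw, Function.comp, Equiv.swap_apply_def]
  split_ifs <;> rfl

/-- Polynomial-level rule for moving a degenerate Hecke generator. -/
theorem demazure {A : Type} [Ring A] [Algebra R A] (f : MvPolynomial (Fin n) R →ₐ[R] A) (s : A)
    (r : Fin (n - 1))
    (s1 : s * f (.X (pR r)) = f (.X (pL r)) * s + 1)
    (s2 : f (.X (pR r)) * s = s * f (.X (pL r)) + 1)
    (s3 : ∀ k, k ≠ pL r → k ≠ pR r → s * f (.X k) = f (.X k) * s) (F : MvPolynomial (Fin n) R) :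
    ∃ G, F - MvPolynomial.rename (sw r) F = (.X (pR r) - .X (pL r)) * G ∧
      s * f F = f (MvPolynomial.rename (sw r) F) * s + f G := by
  induction F using MvPolynomial.induction_on with
  | C a =>
    refine ⟨0, by simp, ?_⟩
    have : f (MvPolynomial.C a) = algebraMap R A a := by
      rw [← MvPolynomial.algebraMap_eq]; exact f.commutes a
    rw [MvPolynomial.rename_C, map_zero, add_zero, this, Algebra.commutes]
  | add F F' h h' =>
    obtain ⟨G, a, b⟩ := h
    obtain ⟨G', a', b'⟩ := h'
    refine ⟨G + G', ?_, ?_⟩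
    · rw [map_add, mul_add, ← a, ← a']; ring
    · rw [map_add, map_add, map_add, map_add, mul_add, b, b']; noncomm_ring
  | mul_X F k h =>
    obtain ⟨G, a, b⟩ := h
    have hX : ∃ g : MvPolynomial (Fin n) R, .X k - .X (sw r k) = (.X (pR r) - .X (pL r)) * g ∧
        s * f (.X k) = f (.X (sw r k)) * s + f g := by
      by_cases h1 : k = pL r
      · subst h1
        refine ⟨-1, ?_, ?_⟩
        · simp [sw]
        · simp only [sw, Equiv.swap_apply_left, s2]; simp
      · by_cases h2 : k = pR r
        · subst h2
          refine ⟨1, ?_, ?_⟩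
          · simp [sw]
          · simp only [sw, Equiv.swap_apply_right, s1]; simp
        · refine ⟨0, ?_, ?_⟩
          · simp [sw, Equiv.swap_apply_of_ne_of_ne h1 h2]
          · simp [sw, Equiv.swap_apply_of_ne_of_ne h1 h2, s3 k h1 h2]
    obtain ⟨g, c, d⟩ := hX
    refine ⟨MvPolynomial.rename (sw r) F * g + G * .X k, ?_, ?_⟩
    · rw [map_mul, MvPolynomial.rename_X]
      linear_combination (.X k) * a + MvPolynomial.rename (sw r) F * c
    · rw [map_mul, ← mul_assoc, b, map_mul (MvPolynomial.rename (sw r)), MvPolynomial.rename_X,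
        add_mul, mul_assoc, d, map_add, map_mul, map_mul f G, map_mul f _ g]
      noncomm_ring

theorem demazure_comm [IsDomain R] {A : Type} [Ring A] [Algebra R A]
    (f : MvPolynomial (Fin n) R →ₐ[R] A) (s : A)
    (r : Fin (n - 1))
    (s1 : s * f (.X (pR r)) = f (.X (pL r)) * s + 1)
    (s2 : f (.X (pR r)) * s = s * f (.X (pL r)) + 1)
    (s3 : ∀ k, k ≠ pL r → k ≠ pR r → s * f (.X k) = f (.X k) * s) (F : MvPolynomial (Fin n) R)
    (hF : MvPolynomial.rename (sw r) F = F) : s * f F = f F * s := by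
  obtain ⟨G, a, b⟩ := demazure f s r s1 s2 s3 F
  rw [hF, sub_self, eq_comm, mul_eq_zero, sub_eq_zero] at a
  have hG : G = 0 := by
    rcases a with a | a
    · exact absurd (MvPolynomial.X_injective a) (pR_ne_pL r)
    · exact a
  rw [b, hF, hG, map_zero, add_zero]

/-- intertwiner -/
theorem demazure_inter {A : Type} [Ring A] [Algebra R A]
    (f : MvPolynomial (Fin n) R →ₐ[R] A) (s : A)
    (r : Fin (n - 1))
    (s1 : s * f (.X (pR r)) = f (.X (pL r)) * s + 1)
    (s2 : f (.X (pR r)) * s = s * f (.X (pL r)) + 1)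
    (s3 : ∀ k, k ≠ pL r → k ≠ pR r → s * f (.X k) = f (.X k) * s) (F : MvPolynomial (Fin n) R) :
    (s * f (.X (pL r) - .X (pR r)) + 1) * f F =
      f (MvPolynomial.rename (sw r) F) * (s * f (.X (pL r) - .X (pR r)) + 1) := by
  obtain ⟨G, a, b⟩ := demazure f s r s1 s2 s3 F
  have e2 : (s * f (.X (pL r) - .X (pR r)) + 1) * f F 
      = s * f F * f (.X (pL r) - .X (pR r)) + f F := by
    rw [add_mul, one_mul, mul_assoc, mul_assoc, ← map_mul, ← map_mul, mul_comm F]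
  rw [e2, b]
  have e3 : f G * f (.X (pL r) - .X (pR r)) = f (MvPolynomial.rename (sw r) F) - f F := by
    rw [← map_mul, ← map_sub]; congr 1; linear_combination a
  rw [add_mul, e3]; noncomm_ring

/-- The base ring with its universal properties. -/
structure BasePack (n p : ℕ) [NeZero p] (R : Type) [CommRing R] (M : ℕ) where
  B : Type
  [ring : CommRing B]
  [alg : Algebra R B]
  b : BaseData n p B
  lift : ∀ (A : Type) [Ring A] [Algebra R A] (x : Fin n → A), (∀ k l, x k * x l = x l * x k) →
    (∀ k, aeval (x k) (GG p R M) = 0) → ∃ f : B →ₐ[R] A, ∀ k, f (b.x k) = x k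
  ext : ∀ (A : Type) [Ring A] [Algebra R A] (f g : B →ₐ[R] A), (∀ k, f (b.x k) = g (b.x k)) → f = g
  kill : ∀ i k, aeval (b.x k) (Ga p R M (i k)) * b.E i = 0
  emov : ∀ (A : Type) [Ring A] [Algebra R A] (f : B →ₐ[R] A) (s : A) (r : Fin (n - 1)),
    s * f (b.x (pR r)) = f (b.x (pL r)) * s + 1 →
    f (b.x (pR r)) * s = s * f (b.x (pL r)) + 1 →
    (∀ k, k ≠ pL r → k ≠ pR r → s * f (b.x k) = f (b.x k) * s) →
    ∀ i, (s + f (b.c (pL r) (pR r))) * f (b.E i) =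
      f (b.E (swapSeq i r)) * (s + f (b.c (pL r) (pR r)))

attribute [instance] BasePack.ring BasePack.alg

theorem exists_pack (hR : LocHyp p R) (n M : ℕ) : Nonempty (BasePack n p R M) := by
  obtain ⟨ε, hε1, hε2, hε3⟩ := exists_eps hR M
  haveI := hR.dom
  let I : Ideal (MvPolynomial (Fin n) R) :=
    Ideal.span (Set.range fun k => aeval (MvPolynomial.X k) (GG p R M))
  let B := MvPolynomial (Fin n) R ⧸ I
  let mk : MvPolynomial (Fin n) R →ₐ[R] B := Ideal.Quotient.mkₐ R I
  have mks : Function.Surjective mk := Ideal.Quotient.mk_surjective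
  let x : Fin n → B := fun k => mk (.X k)
  have mka : ∀ k (q : R[X]), mk (aeval (MvPolynomial.X k) q) = aeval (x k) q := by
    intro k q; exact (aeval_algHom_apply mk (MvPolynomial.X k) q).symm
  have hG : ∀ k, aeval (x k) (GG p R M) = 0 := by
    intro k
    rw [← mka]
    exact Ideal.Quotient.eq_zero_iff_mem.2 (Ideal.subset_span ⟨k, rfl⟩)
  have hG' : ∀ k q, GG p R M ∣ q → aeval (x k) q = 0 := by
    rintro k _ ⟨q, rfl⟩
    rw [map_mul, hG, zero_mul]
  haveI hIntegral : Algebra.IsIntegral R B := by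
    constructor
    intro z
    obtain ⟨F, rfl⟩ := mks z
    induction F using MvPolynomial.induction_on with
    | C a =>
      have : mk (MvPolynomial.C a) = algebraMap R B a := by
        rw [← MvPolynomial.algebraMap_eq]; exact mk.commutes a
      rw [this]; exact isIntegral_algebraMap
    | add F F' h h' => rw [map_add]; exact h.add h'
    | mul_X F k h =>
      rw [map_mul]
      exact h.mul ⟨GG p R M, GG_monic M, by rw [← aeval_def]; exact hG k⟩
  obtain ⟨b, hbx, hbE⟩ := mkBase hR M x (fun k a => aeval (x k) (ε a))
    (by intro k; rw [← map_sum, hε1, map_one])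
    (by intro k a b hab; rw [← map_mul]; exact hG' k _ (hε2 a b hab))
    (by intro k a; rw [← map_mul]; exact hG' k _ (hε3 a))
  have hbx' : ∀ k, b.x k = mk (.X k) := fun k => by rw [hbx]
  let E0 : (Fin n → ZMod p) → MvPolynomial (Fin n) R :=
    fun i => ∏ k, aeval (MvPolynomial.X k) (ε (i k))
  have hE0 : ∀ i, b.E i = mk (E0 i) := by
    intro i
    rw [hbE]; simp only [E0, map_prod, mka]
  have hren : ∀ i r, MvPolynomial.rename (sw r) (E0 i) = E0 (swapSeq i r) := by
    intro i r
    simp only [E0, map_prod]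
    refine Fintype.prod_equiv (sw r) _ _ fun k => ?_
    rw [← aeval_algHom_apply, MvPolynomial.rename_X, swapSeq_eq]
    simp [sw]
  refine ⟨⟨B, b, ?_, ?_, ?_, ?_⟩⟩
  · intro A _ _ y hy hy'
    obtain ⟨f, hf⟩ := exists_mvlift (R := R) y hy
    refine ⟨Ideal.Quotient.liftₐ I f ?_, ?_⟩
    · intro a ha
      have : I ≤ RingHom.ker f := by
        rw [Ideal.span_le]
        rintro _ ⟨k, rfl⟩
        show f _ = 0
        rw [← aeval_algHom_apply, hf, hy']
      exact this ha
    · intro k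
      rw [hbx']; exact hf k
  · intro A _ _ f g hfg
    have : f.comp mk = g.comp mk := by
      apply MvPolynomial.algHom_ext
      intro k
      have := hfg k
      rw [hbx'] at this
      exact this
    ext z
    obtain ⟨F, rfl⟩ := mks z
    exact DFunLike.congr_fun this F
  · intro i k
    rw [hbx, hbE]
    simp only
    rw [← Finset.mul_prod_erase _ _ (Finset.mem_univ k), ← mul_assoc, ← map_mul,
      hG' k _ (hε3 _), zero_mul]
  · intro A _ _ f s r s1 s2 s3 i
    simp only [hbx'] at s1 s2 s3
    have c1 := demazure_comm (f.comp mk) s r s1 s2 s3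
    have c2 := demazure_inter (f.comp mk) s r s1 s2 s3
    simp only [AlgHom.comp_apply] at c1 c2
    have hx : mk (.X (pL r) - .X (pR r)) = b.x (pL r) - b.x (pR r) := by
      rw [map_sub, hbx', hbx']
    simp only [hx] at c2
    set D := b.x (pL r) - b.x (pR r) with hD
    set δ := b.d (pL r) (pR r) with hδ
    set P := b.P (pL r) (pR r) with hP
    have hz : s + f (b.c (pL r) (pR r)) = (s * f D + 1) * f P + (s + 1) * f δ := by
      have := b.hP' (pL r) (pR r)
      rw [add_mul, add_mul, mul_assoc, ← map_mul, mul_comm D, this, BaseData.c, ← hP, ← hδ,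
        map_add, map_sub, map_one]; noncomm_ring
    have main : ∀ j, (s + f (b.c (pL r) (pR r))) * f (b.E j) = 
        f (b.E (swapSeq j r)) * ((s + f (b.c (pL r) (pR r))) * f (b.E j)) := by
      intro j
      have m1 : ((s * f D + 1) * f P) * f (b.E j) =
          f (b.E (swapSeq j r)) * (((s * f D + 1) * f P)) := by
        rw [mul_assoc, ← map_mul, mul_comm, map_mul, ← mul_assoc, hE0, c2, hren, ← hE0, mul_assoc]
      have m2 : ((s + 1) * f δ) * f (b.E j) = f (b.E (swapSeq j r)) * (((s + 1) * f δ) *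
          f (b.E j)) := by
        have hd : δ * b.E j = ((dlt (pL r) (pR r) j : ℤ) : B) * b.E j := b.T_E _ _
        by_cases hj : j (pL r) = j (pR r)
        · have hjs : swapSeq j r = j := by
            funext k
            simp only [swapSeq]
            split_ifs with h1 h2
            · rw [h1, hj]
            · rw [h2, hj]
            · rfl
          have := c1 (E0 j) (by rw [hren, hjs])
          rw [← hE0] at this
          have h1 : dlt (pL r) (pR r) j = 1 := by simp [dlt, hj]
          rw [hjs, mul_assoc, ← map_mul, hd, h1, Int.cast_one, one_mul]
          have h2 : f (b.E j) * f (b.E j) = f (b.E j) := by rw [← map_mul, b.idem]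
          rw [← mul_assoc, mul_add, ← this, add_mul, add_mul, mul_assoc s, h2, mul_one, h2, one_mul]
        · have h1 : dlt (pL r) (pR r) j = 0 := by simp [dlt, hj]
          rw [mul_assoc, ← map_mul, hd, h1]; simp
      have m3 : ((s * f D + 1) * f P) * f (b.E j) =
          f (b.E (swapSeq j r)) * (((s * f D + 1) * f P) * f (b.E j)) := by
        rw [← mul_assoc (f (b.E (swapSeq j r))), ← m1, mul_assoc _ (f (b.E j)), ← map_mul, b.idem]
      rw [hz, add_mul, mul_add, ← m2, ← m3]
    have key : f (b.E (swapSeq i r)) * (s + f (b.c (pL r) (pR r))) * 1 =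
        f (b.E (swapSeq i r)) * (s + f (b.c (pL r) (pR r))) * f (b.E i) := by
      rw [← map_one f, ← b.total, map_sum, Finset.mul_sum, Finset.sum_eq_single i]
      · intro j _ hj
        rw [mul_assoc, main j, ← mul_assoc, ← map_mul, b.orth, map_zero, zero_mul]
        intro h
        exact hj ((swapSeq_invol r).injective h.symm)
      · simp
    rw [mul_one] at key
    rw [key, mul_assoc, ← main]

end SecP5c

section SecP6

variable {n p : ℕ} [NeZero p] {R : Type} [CommRing R] {M : ℕ} {A : Type} [Ring A] [Algebra R A]

/-- Degenerate affine Hecke type data. -/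
structure SData (pk : BasePack n p R M) (f : pk.B →ₐ[R] A) (s : Fin (n - 1) → A) : Prop where
  x1 : ∀ r, s r * f (pk.b.x (pR r)) = f (pk.b.x (pL r)) * s r + 1
  x2 : ∀ r, f (pk.b.x (pR r)) * s r = s r * f (pk.b.x (pL r)) + 1
  x3 : ∀ r k, k ≠ pL r → k ≠ pR r → s r * f (pk.b.x k) = f (pk.b.x k) * s r
  sq : ∀ r, s r * s r = 1
  far : ∀ r t : Fin (n - 1), r.1 + 1 < t.1 → s r * s t = s t * s r
  br : ∀ (r : Fin (n - 1)) (hr : r.1 + 1 < n - 1),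
    s r * s ⟨r.1 + 1, hr⟩ * s r = s ⟨r.1 + 1, hr⟩ * s r * s ⟨r.1 + 1, hr⟩

/-- KLR type data. -/
structure KData (pk : BasePack n p R M) (f : pk.B →ₐ[R] A) (ψ : Fin (n - 1) → A) : Prop where
  mov : ∀ r, Mov pk.b (f : pk.B →+* A) (ψ r) r
  sq : ∀ r, ψ r * ψ r = f (pk.b.Q (pL r) (pR r))
  far : ∀ r t : Fin (n - 1), r.1 + 1 < t.1 → ψ r * ψ t = ψ t * ψ r
  br : ∀ (r : Fin (n - 1)) (hr : r.1 + 1 < n - 1),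
    ψ r * ψ ⟨r.1 + 1, hr⟩ * ψ r - ψ ⟨r.1 + 1, hr⟩ * ψ r * ψ ⟨r.1 + 1, hr⟩ =
      f (pk.b.d (pL r) (pM r hr) * (pk.b.l (pL r) (pR r) - pk.b.l (pR r) (pL r)))

/-- the linking relation between `s` and `ψ` -/
def Link (pk : BasePack n p R M) (f : pk.B →ₐ[R] A) (s ψ : Fin (n - 1) → A) : Prop :=
  ∀ r, s r = ψ r * f (pk.b.w (pL r) (pR r)) - f (pk.b.c (pL r) (pR r))

theorem link_exists_psi (pk : BasePack n p R M) (f : pk.B →ₐ[R] A) (s : Fin (n - 1) → A) :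
    ∃ ψ, Link pk f s ψ := by
  choose v hv using fun r : Fin (n - 1) => pk.b.w_unit (pL r) (pR r)
  refine ⟨fun r => (s r + f (pk.b.c (pL r) (pR r))) * f (↑(v r)⁻¹ : pk.B), fun r => ?_⟩
  rw [mul_assoc, ← map_mul, ← hv, Units.inv_mul, map_one, mul_one, add_sub_cancel_right]

theorem SData.toK {pk : BasePack n p R M} {f : pk.B →ₐ[R] A} {s ψ : Fin (n - 1) → A}
    (h : SData pk f s) (hl : Link pk f s ψ) : KData pk f ψ := by
  have hmov : ∀ r, Mov pk.b (f : pk.B →+* A) (ψ r) r := by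
    intro r
    have hu : IsUnit (f (pk.b.w (pL r) (pR r))) := (pk.b.w_unit _ _).map f
    have key := x_local (f : pk.B →+* A) (s r) (ψ r) (pk.b.x (pL r)) (pk.b.x (pR r))
      (pk.b.P (pL r) (pR r)) (pk.b.d (pL r) (pR r)) (pk.b.l (pL r) (pR r))
      (pk.b.w (pL r) (pR r)) (pk.b.hP' _ _) (pk.b.hPd' _ _) (pk.b.d_idem _ _) (pk.b.ld _ _) rfl
      (hl r)
    have hz : s r + f (pk.b.c (pL r) (pR r)) = ψ r * f (pk.b.w (pL r) (pR r)) := by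
      rw [hl r]; abel
    refine ⟨?_, ?_, ?_, ?_⟩
    · intro i
      have := pk.emov A f (s r) r (h.x1 r) (h.x2 r) (h.x3 r) i
      rw [hz, mul_assoc, ← map_mul, mul_comm, map_mul, ← mul_assoc, ← mul_assoc] at this
      exact hu.mul_right_cancel this
    · have k1 := key.1
      have e := h.x1 r
      simp only [RingHom.coe_coe] at k1 ⊢
      rw [e, add_sub_cancel_left, sub_self, eq_comm, hu.mul_left_eq_zero, sub_sub, sub_eq_zero] at k1
      exact k1
    · have k1 := key.2
      have e := h.x2 r
      simp only [RingHom.coe_coe] at k1 ⊢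
      rw [e, add_sub_cancel_left, sub_self, eq_comm, hu.mul_left_eq_zero, sub_sub, sub_eq_zero] at k1
      exact k1
    · intro k k1 k2
      have e := h.x3 r k k1 k2
      simp only [RingHom.coe_coe]
      apply hu.mul_right_cancel
      have e1 : ψ r * f (pk.b.x k) * f (pk.b.w (pL r) (pR r)) =
          (s r + f (pk.b.c (pL r) (pR r))) * f (pk.b.x k) := by
        rw [hz, mul_assoc, ← map_mul, mul_comm (pk.b.x k), map_mul, mul_assoc]
      rw [e1, mul_assoc, ← hz, add_mul, mul_add, e, ← map_mul, ← map_mul, mul_comm (pk.b.x k)]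
  have hsq : ∀ r, ψ r * ψ r = f (pk.b.Q (pL r) (pR r)) := fun r =>
    ((hmov r).quad_iff (hl r)).1 (h.sq r)
  refine ⟨hmov, hsq, ?_, ?_⟩
  · intro r t hrt
    exact ((hmov r).far_iff (hmov t) hrt (hl r) (hl t)).1 (h.far r t hrt)
  · intro r hr
    exact ((hmov r).braid_iff (hr := hr) (hmov _) (hl r) (hl ⟨r.1 + 1, hr⟩) (hsq r)
      (hsq ⟨r.1 + 1, hr⟩)).1 (h.br r hr)

theorem KData.toS {pk : BasePack n p R M} {f : pk.B →ₐ[R] A} {s ψ : Fin (n - 1) → A}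
    (h : KData pk f ψ) (hl : Link pk f s ψ) : SData pk f s := by
  have key := fun r => x_local (f : pk.B →+* A) (s r) (ψ r) (pk.b.x (pL r)) (pk.b.x (pR r))
      (pk.b.P (pL r) (pR r)) (pk.b.d (pL r) (pR r)) (pk.b.l (pL r) (pR r))
      (pk.b.w (pL r) (pR r)) (pk.b.hP' _ _) (pk.b.hPd' _ _) (pk.b.d_idem _ _) (pk.b.ld _ _) rfl
      (hl r)
  refine ⟨?_, ?_, ?_, ?_, ?_, ?_⟩
  · intro r
    have k1 := (key r).1
    rw [(h.mov r).x1, add_sub_cancel_left, sub_self, zero_mul, sub_sub, sub_eq_zero] at k1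
    exact k1
  · intro r
    have k1 := (key r).2
    rw [(h.mov r).x2, add_sub_cancel_left, sub_self, zero_mul, sub_sub, sub_eq_zero] at k1
    exact k1
  · intro r k k1 k2
    have := (h.mov r).x3 k k1 k2
    simp only [RingHom.coe_coe] at this
    rw [hl r, sub_mul, mul_sub, mul_assoc, ← map_mul, mul_comm, map_mul, ← mul_assoc, this,
      ← map_mul, ← map_mul, mul_comm (pk.b.x k), mul_assoc]
  · intro r
    exact ((h.mov r).quad_iff (hl r)).2 (h.sq r)
  · intro r t hrt
    exact ((h.mov r).far_iff (h.mov t) hrt (hl r) (hl t)).2 (h.far r t hrt)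
  · intro r hr
    exact ((h.mov r).braid_iff (hr := hr) (h.mov _) (hl r) (hl ⟨r.1 + 1, hr⟩) (h.sq r)
      (h.sq ⟨r.1 + 1, hr⟩)).2 (h.br r hr)

theorem SData.rec_x {pk : BasePack n p R M} {f : pk.B →ₐ[R] A} {s : Fin (n - 1) → A}
    (h : SData pk f s) (r : Fin (n - 1)) :
    f (pk.b.x (pR r)) = s r * f (pk.b.x (pL r)) * s r + s r := by
  have := congrArg (· * s r) (h.x2 r)
  simp only [mul_assoc, h.sq r, mul_one, add_mul, one_mul] at this
  rw [this, mul_assoc]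

/-- the residue of an index as an integer -/
def hat (k : Fin n) (i : Fin n → ZMod p) : ℤ := ((i k).val : ℤ)

/-- `y_k` inside the base ring -/
def BaseData.yy {B : Type} [CommRing B] (b : BaseData n p B) (k : Fin n) : B := b.x k - b.T (hat k)

theorem hat_succ (i : Fin n → ZMod p) (h1 : (1 : ZMod p) ≠ 0) (k l : Fin n) (h : i l = i k + 1) :
    (i l ≠ 0 → hat l i = hat k i + 1) ∧ (i l = 0 → hat k i = hat l i + p - 1) := by
  have hp : 1 < p := by
    by_contra hc
    have : p = 1 := by have := NeZero.ne p; omega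
    subst this
    exact h1 (Subsingleton.elim _ _)
  haveI : Fact (1 < p) := ⟨hp⟩
  have hv := ZMod.val_add (i k) 1
  rw [← h, ZMod.val_one] at hv
  have hk := ZMod.val_lt (i k)
  constructor
  · intro h0
    have h0' : (i l).val ≠ 0 := by rwa [Ne, ZMod.val_eq_zero]
    have : (i k).val + 1 < p := by
      by_contra hc
      have : (i k).val + 1 = p := by omega
      rw [this, Nat.mod_self] at hv
      exact h0' hv
    rw [Nat.mod_eq_of_lt this] at hv
    simp only [hat]; omega
  · intro h0
    rw [h0, ZMod.val_zero] at hv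
    have : (i k).val + 1 = p := by
      by_contra hc
      rw [Nat.mod_eq_of_lt (by omega)] at hv
      omega
    simp only [hat, h0, ZMod.val_zero]; omega

end SecP6

section SecP7

variable {n p : ℕ} [NeZero p] {R : Type} [CommRing R] {M : ℕ} {A : Type} [Ring A] [Algebra R A]

theorem BaseData.yy_E {B : Type} [CommRing B] (b : BaseData n p B) (k : Fin n) (i) :
    b.yy k * b.E i = (b.x k - ((hat k i : ℤ) : B)) * b.E i := by
  rw [BaseData.yy, sub_mul, b.T_E, sub_mul]

theorem KData.y1 {pk : BasePack n p R M} {f : pk.B →ₐ[R] A} {ψ : Fin (n - 1) → A}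
    (h : KData pk f ψ) (r) : ψ r * f (pk.b.yy (pR r)) =
      f (pk.b.yy (pL r)) * ψ r + f (pk.b.d (pL r) (pR r)) := by
  have h1 := (h.mov r).x1
  have h2 := (h.mov r).hT' (g := hat (pL r)) (h := hat (pR r)) (by
    intro i; simp only [hat, swapSeq_L])
  simp only [RingHom.coe_coe] at h1 h2
  rw [BaseData.yy, BaseData.yy, map_sub, map_sub, mul_sub, sub_mul, h1, h2]; abel

theorem KData.y2 {pk : BasePack n p R M} {f : pk.B →ₐ[R] A} {ψ : Fin (n - 1) → A}
    (h : KData pk f ψ) (r) : f (pk.b.yy (pR r)) * ψ r =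
      ψ r * f (pk.b.yy (pL r)) + f (pk.b.d (pL r) (pR r)) := by
  have h1 := (h.mov r).x2
  have h2 := (h.mov r).hT' (g := hat (pR r)) (h := hat (pL r)) (by
    intro i; simp only [hat, swapSeq_R])
  simp only [RingHom.coe_coe] at h1 h2
  rw [BaseData.yy, BaseData.yy, map_sub, map_sub, mul_sub, sub_mul, h1, h2]; abel

theorem KData.y3 {pk : BasePack n p R M} {f : pk.B →ₐ[R] A} {ψ : Fin (n - 1) → A}
    (h : KData pk f ψ) (r) (k) (k1 : k ≠ pL r) (k2 : k ≠ pR r) :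
    ψ r * f (pk.b.yy k) = f (pk.b.yy k) * ψ r := by
  have h1 := (h.mov r).x3 k k1 k2
  have h2 := (h.mov r).hT' (g := hat k) (h := hat k) (by
    intro i; simp only [hat, swapSeq_far i r k1 k2])
  simp only [RingHom.coe_coe] at h1 h2
  rw [BaseData.yy, map_sub, mul_sub, sub_mul, h1, h2]

theorem BaseData.d_E {B : Type} [CommRing B] (b : BaseData n p B) (k l : Fin n) (i) :
    b.d k l * b.E i = if i k = i l then b.E i else 0 := by
  rw [BaseData.d, b.T_E, dlt]; split_ifs <;> simp

theorem BaseData.l_E {B : Type} [CommRing B] (b : BaseData n p B) (k l : Fin n) (i) :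
    b.l k l * b.E i = if i k = i l + 1 then b.E i else 0 := by
  rw [BaseData.l, b.T_E, lam]; split_ifs <;> simp

theorem BaseData.not_both {B : Type} [CommRing B] (b : BaseData n p B) {a c : ZMod p}
    (h1 : a = c + 1) (h2 : c = a + 1) : False := b.two_ne (by linear_combination - h1 - h2)

theorem BaseData.not_eq {B : Type} [CommRing B] (b : BaseData n p B) {a c : ZMod p}
    (h1 : a = c + 1) (h2 : a = c) : False := b.one_ne (by linear_combination h2 - h1)

/-- The values of `Q` on the components. -/
theorem BaseData.Q_E {B : Type} [CommRing B] (b : BaseData n p B) (k l : Fin n) (i) :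
    (i k = i l → b.Q k l * b.E i = 0) ∧
    (i l = i k + 1 → i l ≠ 0 → b.Q k l * b.E i = (b.yy k - b.yy l) * b.E i) ∧
    (i l = i k + 1 → i l = 0 → b.Q k l * b.E i = (b.yy k + p - b.yy l) * b.E i) ∧
    (i k = i l + 1 → i k ≠ 0 → b.Q k l * b.E i = (b.yy l - b.yy k) * b.E i) ∧
    (i k = i l + 1 → i k = 0 → b.Q k l * b.E i = (b.yy l + p - b.yy k) * b.E i) ∧
    (i k ≠ i l → i l ≠ i k + 1 → i k ≠ i l + 1 → b.Q k l * b.E i = b.E i) := by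
  have e : b.Q k l * b.E i = b.E i - b.d k l * b.E i + (b.x k - b.x l) * (b.l l k * b.E i - 
      b.l k l * b.E i) := by unfold BaseData.Q; ring
  rw [e, b.d_E, b.l_E, b.l_E]
  have hyk := b.yy_E k i
  have hyl := b.yy_E l i
  refine ⟨?_, ?_, ?_, ?_, ?_, ?_⟩
  · intro h; simp [h, b.one_ne]
  · intro h h0
    have a1 : i k ≠ i l := fun h' => b.not_eq h h'.symm
    have a2 : i k ≠ i l + 1 := fun h' => b.not_both h h'
    have a3 := congrArg (Int.cast : ℤ → B) ((hat_succ i b.one_ne k l h).1 h0)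
    push_cast at a3
    rw [if_neg a1, if_neg a2, if_pos h]
    linear_combination hyl - hyk - b.E i * a3
  · intro h h0
    have a1 : i k ≠ i l := fun h' => b.not_eq h h'.symm
    have a2 : i k ≠ i l + 1 := fun h' => b.not_both h h'
    have a3 := congrArg (Int.cast : ℤ → B) ((hat_succ i b.one_ne k l h).2 h0)
    push_cast at a3
    rw [if_neg a1, if_neg a2, if_pos h]
    linear_combination hyl - hyk + b.E i * a3
  · intro h h0
    have a1 : i k ≠ i l := fun h' => b.not_eq h h'
    have a2 : i l ≠ i k + 1 := fun h' => b.not_both h h'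
    have a3 := congrArg (Int.cast : ℤ → B) ((hat_succ i b.one_ne l k h).1 h0)
    push_cast at a3
    rw [if_neg a1, if_neg a2, if_pos h]
    linear_combination hyk - hyl - b.E i * a3
  · intro h h0
    have a1 : i k ≠ i l := fun h' => b.not_eq h h'
    have a2 : i l ≠ i k + 1 := fun h' => b.not_both h h'
    have a3 := congrArg (Int.cast : ℤ → B) ((hat_succ i b.one_ne l k h).2 h0)
    push_cast at a3
    rw [if_neg a1, if_neg a2, if_pos h]
    linear_combination hyk - hyl + b.E i * a3
  · intro h h1 h2; simp [h, h1, h2]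

theorem BaseData.br_E {B : Type} [CommRing B] (b : BaseData n p B) (k l m : Fin n) (i) :
    (i m = i k → i l = i k + 1 → b.d k m * (b.l k l - b.l l k) * b.E i = - b.E i) ∧
    (i m = i k → i k = i l + 1 → b.d k m * (b.l k l - b.l l k) * b.E i = b.E i) ∧
    (¬ (i m = i k ∧ (i l = i k + 1 ∨ i k = i l + 1)) → 
      b.d k m * (b.l k l - b.l l k) * b.E i = 0) := by
  have e : b.d k m * (b.l k l - b.l l k) * b.E i = b.d k m * (b.l k l * b.E i - b.l l k * b.E i) := by
    ring
  rw [e, b.l_E, b.l_E]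
  refine ⟨?_, ?_, ?_⟩
  · intro h h1
    have a2 : i k ≠ i l + 1 := fun h' => b.not_both h1 h'
    rw [if_neg a2, if_pos h1, zero_sub, mul_neg, b.d_E, if_pos h.symm]
  · intro h h1
    have a2 : i l ≠ i k + 1 := fun h' => b.not_both h1 h'
    rw [if_neg a2, if_pos h1, sub_zero, b.d_E, if_pos h.symm]
  · intro h
    by_cases h1 : i m = i k
    · have h2 : i l ≠ i k + 1 := fun h' => h ⟨h1, Or.inl h'⟩
      have h3 : i k ≠ i l + 1 := fun h' => h ⟨h1, Or.inr h'⟩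
      rw [if_neg h2, if_neg h3, sub_self, mul_zero]
    · have h1' : ¬ i k = i m := fun h' => h1 h'.symm
      split_ifs <;> simp [b.d_E, h1']

def genMap (pk : BasePack n p R M) (f : pk.B →ₐ[R] A) (ψ : Fin (n - 1) → A) : KLRGen n p → A
  | .idem i => f (pk.b.E i)
  | .psi r => ψ r
  | .y k => f (pk.b.yy k)

theorem pack_E_zero (hR : LocHyp p R) (pk : BasePack n p R M) (f : pk.B →ₐ[R] A) (k : Fin n)
    (hk : f (pk.b.x k) = 0) (i : Fin n → ZMod p) (hi : i k ≠ 0) : f (pk.b.E i) = 0 := by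
  have h := congrArg f (pk.kill i k)
  rw [map_mul, map_zero, ← Polynomial.aeval_algHom_apply, hk] at h
  have hu : IsUnit ((Ga p R M (i k)).eval 0) := by
    rw [Ga, Polynomial.eval_pow, Polynomial.eval_prod]
    refine IsUnit.pow _ ?_
    rw [IsUnit.prod_iff]
    intro c hc
    rw [Finset.mem_filter] at hc
    simp only [Polynomial.eval_sub, Polynomial.eval_X, Polynomial.eval_C, zero_sub]
    apply IsUnit.neg
    apply hR.unit
    rw [← ZMod.intCast_zmod_eq_zero_iff_dvd, hc.2]
    exact hi
  have e : Polynomial.aeval (0 : A) (Ga p R M (i k)) = 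
      algebraMap R A ((Ga p R M (i k)).eval 0) := by
    have := Polynomial.aeval_algebraMap_apply A (0 : R) (Ga p R M (i k))
    rw [map_zero] at this
    rw [this, Polynomial.coe_aeval_eq_eval]
  rw [e] at h
  exact (hu.map (algebraMap R A)).mul_right_eq_zero.1 h

theorem KData.lift (hR : LocHyp p R) {pk : BasePack n p R M} {f : pk.B →ₐ[R] A}
    {ψ : Fin (n - 1) → A} (h : KData pk f ψ) (h0 : ∀ h : 0 < n, f (pk.b.x ⟨0, h⟩) = 0) :
    ∃ Ψ : RingQuot (S1Rel R n p) →ₐ[R] A,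
      (∀ i, Ψ (RingQuot.mkAlgHom R (S1Rel R n p) (kE R i)) = f (pk.b.E i)) ∧
      (∀ r, Ψ (RingQuot.mkAlgHom R (S1Rel R n p) (kPsi R r)) = ψ r) ∧
      (∀ k, Ψ (RingQuot.mkAlgHom R (S1Rel R n p) (kY R k)) = f (pk.b.yy k)) := by
  set F := FreeAlgebra.lift R (genMap pk f ψ) with hF
  have FE : ∀ i, F (kE R i) = f (pk.b.E i) := fun i => by rw [hF, kE, FreeAlgebra.lift_ι_apply]; rfl
  have FP : ∀ r, F (kPsi R r) = ψ r := fun i => by rw [hF, kPsi, FreeAlgebra.lift_ι_apply]; rfl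
  have FY : ∀ k, F (kY R k) = f (pk.b.yy k) := fun i => by
    rw [hF, kY, FreeAlgebra.lift_ι_apply]; rfl
  have hd : ∀ k l i, f (pk.b.d k l) * f (pk.b.E i) = if i k = i l then f (pk.b.E i) else 0 := by
    intro k l i; rw [← map_mul, pk.b.d_E]; split_ifs <;> simp
  have cm : ∀ u v, f u * f v = f v * f u := fun u v => by rw [← map_mul, ← map_mul, mul_comm]
  have hcast : f ((p : ℕ) : pk.B) = (p : A) := map_natCast f p
  have rel : ∀ ⦃a b⦄, S1Rel R n p a b → F a = F b := by
    intro a b hab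
    cases hab with
    | cyc0 hn i hi =>
      rw [map_mul, FY, FE, map_zero, ← map_mul, pk.b.yy_E, map_mul, map_sub, h0 hn]
      simp [hat, hi]
    | cyc1 hn i hi => rw [FE, map_zero]; exact pack_E_zero hR pk f _ (h0 hn) i hi
    | orth i j hij => rw [map_mul, FE, FE, map_zero, ← map_mul, pk.b.orth _ _ hij, map_zero]
    | idem i => rw [map_mul, FE, ← map_mul, pk.b.idem]
    | complete => rw [map_sum, map_one]; simp only [FE]; rw [← map_sum, pk.b.total, map_one]
    | yE k i => rw [map_mul, map_mul, FE, FY, cm]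
    | psiE r i => rw [map_mul, map_mul, FE, FP, FE]; exact (h.mov r).hE i
    | yy k m => rw [map_mul, map_mul, FY, FY, cm]
    | psiyEq r i hi =>
      simp only [map_mul, map_add, map_one, FE, FP, FY]
      rw [h.y1, add_mul, hd, if_pos hi, add_mul, one_mul]
    | psiyNe r i hi =>
      simp only [map_mul, map_add, map_one, FE, FP, FY]
      rw [h.y1, add_mul, hd, if_neg hi, add_zero]
    | ypsiEq r i hi =>
      simp only [map_mul, map_add, map_one, FE, FP, FY]
      rw [h.y2, add_mul, hd, if_pos hi, add_mul, one_mul]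
    | ypsiNe r i hi =>
      simp only [map_mul, map_add, map_one, FE, FP, FY]
      rw [h.y2, add_mul, hd, if_neg hi, add_zero]
    | psiyFar r k hk =>
      simp only [map_mul, FP, FY]
      refine h.y3 r k ?_ ?_
      · intro e; exact hk.1 (by rw [e]; rfl)
      · intro e; exact hk.2 (by rw [e]; rfl)
    | psipsiFar r s hrs =>
      simp only [map_mul, FP]
      rcases hrs with hrs | hrs
      · exact h.far r s hrs
      · exact (h.far s r hrs).symm
    | quadEq r i h1 =>
      simp only [map_mul, map_pow, FP, FE, pow_two, h.sq, map_zero]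
      rw [← map_mul, (pk.b.Q_E _ _ i).1 h1, map_zero]
    | quadRne r i h1 h2 =>
      simp only [map_mul, map_pow, FP, FE, FY, pow_two, h.sq, map_sub]
      rw [← map_mul, (pk.b.Q_E _ _ i).2.1 h1 h2, map_mul, map_sub]
    | quadR0 r i h1 h2 =>
      simp only [map_mul, map_pow, FP, FE, FY, pow_two, h.sq, map_sub, map_add, map_natCast]
      rw [← map_mul, (pk.b.Q_E _ _ i).2.2.1 h1 h2, map_mul, map_sub, map_add, hcast]
    | quadLne r i h1 h2 =>
      simp only [map_mul, map_pow, FP, FE, FY, pow_two, h.sq, map_sub]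
      rw [← map_mul, (pk.b.Q_E _ _ i).2.2.2.1 h1 h2, map_mul, map_sub]
    | quadL0 r i h1 h2 =>
      simp only [map_mul, map_pow, FP, FE, FY, pow_two, h.sq, map_sub, map_add, map_natCast]
      rw [← map_mul, (pk.b.Q_E _ _ i).2.2.2.2.1 h1 h2, map_mul, map_sub, map_add, hcast]
    | quadNone r i h1 h2 h3 =>
      simp only [map_mul, map_pow, FP, FE, FY, pow_two, h.sq]
      rw [← map_mul, (pk.b.Q_E _ _ i).2.2.2.2.2 h1 h2 h3]
    | braidR r hr i h1 h2 =>
      rw [map_mul, map_sub]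
      simp only [map_mul, FP, FE, map_neg]
      rw [h.br r hr, ← map_mul, (pk.b.br_E _ _ _ i).1 h1 h2, map_neg]
    | braidL r hr i h1 h2 =>
      rw [map_mul, map_sub]
      simp only [map_mul, FP, FE]
      rw [h.br r hr, ← map_mul, (pk.b.br_E _ _ _ i).2.1 h1 h2]
    | braidNone r hr i h1 =>
      rw [map_mul, map_sub]
      simp only [map_mul, FP, FE, map_zero]
      rw [h.br r hr, ← map_mul, (pk.b.br_E _ _ _ i).2.2 h1, map_zero]
  refine ⟨RingQuot.liftAlgHom R ⟨F, rel⟩, ?_, ?_, ?_⟩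
  · intro i; rw [RingQuot.liftAlgHom_mkAlgHom_apply, FE]
  · intro i; rw [RingQuot.liftAlgHom_mkAlgHom_apply, FP]
  · intro i; rw [RingQuot.liftAlgHom_mkAlgHom_apply, FY]

end SecP7

section SecP8a

variable {n p : ℕ} [NeZero p] {R : Type} [CommRing R] {A : Type} [Ring A] [Algebra R A]

/-- The relations of the presentation, as equations in an algebra. -/
structure KRel (e : (Fin n → ZMod p) → A) (ψ : Fin (n - 1) → A) (y : Fin n → A) : Prop where
  cyc : ∀ h : 0 < n, y ⟨0, h⟩ = 0
  cyc1 : ∀ (h : 0 < n) i, i ⟨0, h⟩ ≠ 0 → e i = 0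
  orth : ∀ i j, i ≠ j → e i * e j = 0
  idem : ∀ i, e i * e i = e i
  total : ∑ i, e i = 1
  ye : ∀ k i, y k * e i = e i * y k
  pe : ∀ r i, ψ r * e i = e (swapSeq i r) * ψ r
  yy : ∀ k l, y k * y l = y l * y k
  py : ∀ r i, ψ r * y (pR r) * e i =
    y (pL r) * ψ r * e i + if i (pL r) = i (pR r) then e i else 0
  yp : ∀ r i, y (pR r) * ψ r * e i =
    ψ r * y (pL r) * e i + if i (pL r) = i (pR r) then e i else 0
  pyfar : ∀ r k, k ≠ pL r → k ≠ pR r → ψ r * y k = y k * ψ r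
  far : ∀ r t : Fin (n - 1), r.1 + 1 < t.1 → ψ r * ψ t = ψ t * ψ r
  q1 : ∀ r i, i (pL r) = i (pR r) → ψ r * ψ r * e i = 0
  q2 : ∀ r i, i (pR r) = i (pL r) + 1 → i (pR r) ≠ 0 → ψ r * ψ r * e i =
    (y (pL r) - y (pR r)) * e i
  q3 : ∀ r i, i (pR r) = i (pL r) + 1 → i (pR r) = 0 → ψ r * ψ r * e i =
    (y (pL r) + (p : A) - y (pR r)) * e i
  q4 : ∀ r i, i (pL r) = i (pR r) + 1 → i (pL r) ≠ 0 → ψ r * ψ r * e i =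
    (y (pR r) - y (pL r)) * e i
  q5 : ∀ r i, i (pL r) = i (pR r) + 1 → i (pL r) = 0 → ψ r * ψ r * e i =
    (y (pR r) + (p : A) - y (pL r)) * e i
  q6 : ∀ r i, i (pL r) ≠ i (pR r) → i (pR r) ≠ i (pL r) + 1 → i (pL r) ≠ i (pR r) + 1 → 
    ψ r * ψ r * e i = e i
  b1 : ∀ (r : Fin (n - 1)) (hr : r.1 + 1 < n - 1) i, i (pM r hr) = i (pL r) →
    i (pR r) = i (pL r) + 1 →
    (ψ r * ψ ⟨r.1 + 1, hr⟩ * ψ r - ψ ⟨r.1 + 1, hr⟩ * ψ r * ψ ⟨r.1 + 1, hr⟩) * e i = - e i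
  b2 : ∀ (r : Fin (n - 1)) (hr : r.1 + 1 < n - 1) i, i (pM r hr) = i (pL r) →
    i (pL r) = i (pR r) + 1 →
    (ψ r * ψ ⟨r.1 + 1, hr⟩ * ψ r - ψ ⟨r.1 + 1, hr⟩ * ψ r * ψ ⟨r.1 + 1, hr⟩) * e i = e i
  b3 : ∀ (r : Fin (n - 1)) (hr : r.1 + 1 < n - 1) i, ¬ (i (pM r hr) = i (pL r) ∧
    (i (pR r) = i (pL r) + 1 ∨ i (pL r) = i (pR r) + 1)) →
    (ψ r * ψ ⟨r.1 + 1, hr⟩ * ψ r - ψ ⟨r.1 + 1, hr⟩ * ψ r * ψ ⟨r.1 + 1, hr⟩) * e i = 0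

theorem KRel.ext {e : (Fin n → ZMod p) → A} {ψ y} (h : KRel e ψ y) {u v : A}
    (huv : ∀ i, u * e i = v * e i) : u = v := by
  rw [← mul_one u, ← mul_one v, ← h.total, Finset.mul_sum, Finset.mul_sum]
  exact Finset.sum_congr rfl fun i _ => huv i

theorem krel_quot (R : Type) [CommRing R] (n p : ℕ) [NeZero p] :
    KRel (p := p) (fun i => RingQuot.mkAlgHom R (S1Rel R n p) (kE R i))
      (fun r => RingQuot.mkAlgHom R (S1Rel R n p) (kPsi R r))
      (fun k => RingQuot.mkAlgHom R (S1Rel R n p) (kY R k)) := by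
  set F := RingQuot.mkAlgHom R (S1Rel R n p)
  have rel : ∀ {a b}, S1Rel R n p a b → F a = F b := fun h => RingQuot.mkAlgHom_rel R h
  have tot : ∑ i, F (kE R i) = 1 := by rw [← map_sum, rel .complete, map_one]
  refine ⟨?_, ?_, ?_, ?_, tot, ?_, ?_, ?_, ?_, ?_, ?_, ?_, ?_, ?_, ?_, ?_, ?_, ?_, ?_, ?_, ?_⟩
  · intro hn
    rw [← mul_one (F _), ← tot, Finset.mul_sum]
    refine Finset.sum_eq_zero fun i _ => ?_
    by_cases hi : i ⟨0, hn⟩ = 0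
    · rw [← map_mul, rel (.cyc0 hn i hi), map_zero]
    · rw [rel (.cyc1 hn i hi), map_zero, mul_zero]
  · intro hn i hi; rw [rel (.cyc1 hn i hi), map_zero]
  · intro i j hij; simpa only [map_mul, map_zero] using rel (.orth i j hij)
  · intro i; simpa only [map_mul] using rel (.idem i)
  · intro k i; simpa only [map_mul] using rel (.yE k i)
  · intro r i; simpa only [map_mul] using rel (.psiE r i)
  · intro k l; simpa only [map_mul] using rel (.yy k l)
  · intro r i
    split_ifs with h
    · simpa only [map_mul, map_add, map_one, add_mul, one_mul] using rel (.psiyEq r i h)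
    · simpa only [map_mul, add_zero] using rel (.psiyNe r i h)
  · intro r i
    split_ifs with h
    · simpa only [map_mul, map_add, map_one, add_mul, one_mul] using rel (.ypsiEq r i h)
    · simpa only [map_mul, add_zero] using rel (.ypsiNe r i h)
  · intro r k k1 k2
    have : k.1 ≠ r.1 ∧ k.1 ≠ r.1 + 1 :=
      ⟨fun h => k1 (Fin.ext h), fun h => k2 (Fin.ext h)⟩
    simpa only [map_mul] using rel (.psiyFar r k this)
  · intro r t h; simpa only [map_mul] using rel (.psipsiFar r t (Or.inl h))
  · intro r i h; simpa only [map_mul, map_pow, map_zero, pow_two] using rel (.quadEq r i h)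
  · intro r i h h'; simpa only [map_mul, map_pow, map_sub, pow_two] using rel (.quadRne r i h h')
  · intro r i h h'
    simpa only [map_mul, map_pow, map_sub, map_add, map_natCast, pow_two] using
      rel (.quadR0 r i h h')
  · intro r i h h'; simpa only [map_mul, map_pow, map_sub, pow_two] using rel (.quadLne r i h h')
  · intro r i h h'
    simpa only [map_mul, map_pow, map_sub, map_add, map_natCast, pow_two] using
      rel (.quadL0 r i h h')
  · intro r i h h' h''; simpa only [map_mul, map_pow, pow_two] using rel (.quadNone r i h h' h'')
  · intro r hr i h h'
    have := rel (.braidR r hr i h h')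
    rw [map_mul, map_sub] at this
    simpa only [map_mul, map_neg] using this
  · intro r hr i h h'
    have := rel (.braidL r hr i h h')
    rw [map_mul, map_sub] at this
    simpa only [map_mul] using this
  · intro r hr i h
    have := rel (.braidNone r hr i h)
    rw [map_mul, map_sub] at this
    simpa only [map_mul, map_zero] using this

open Polynomial

/-- product of linear factors -/
noncomputable def PP (R : Type) [CommRing R] (cs : Multiset ℤ) : R[X] :=
  (cs.map fun c : ℤ => (X - C (c : R))).prod

theorem PP_comp (cs : Multiset ℤ) (a : ℤ) :
    (PP R cs).comp (X - C (a : R)) = PP R (cs.map (· + a)) := by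
  unfold PP
  rw [multiset_prod_comp, Multiset.map_map, Multiset.map_map]
  congr 1
  refine Multiset.map_congr rfl fun c _ => ?_
  simp only [Function.comp, sub_comp, X_comp, C_comp]
  push_cast
  rw [C_add]; ring

theorem PP_shift (cs : Multiset ℤ) (a : ℤ) (y : A) :
    aeval (y - (a : A)) (PP R cs) = aeval y (PP R (cs.map (· + a))) := by
  rw [← PP_comp, aeval_comp]
  simp

theorem PP_add (cs ds : Multiset ℤ) : PP R (cs + ds) = PP R cs * PP R ds := by
  unfold PP; rw [Multiset.map_add, Multiset.prod_add]

theorem aeval_comm {u v : A} (h : u * v = v * u) (q : R[X]) : aeval u q * v = v * aeval u q := by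
  induction q using Polynomial.induction_on' with
  | add a b ha hb => rw [map_add, add_mul, mul_add, ha, hb]
  | monomial k a =>
    have h2 : Commute (u ^ k) v := Commute.pow_left h k
    rw [aeval_monomial, mul_assoc, h2.eq, ← mul_assoc, ← mul_assoc, Algebra.commutes]

end SecP8a

section SecP8b

variable {n p : ℕ} [NeZero p] {R : Type} [CommRing R] {A : Type} [Ring A] [Algebra R A]
open Polynomial

theorem aeval_inter {u v t : A} (h : u * t = t * v) (q : R[X]) :
    aeval u q * t = t * aeval v q := by
  have hk : ∀ k : ℕ, u ^ k * t = t * v ^ k := by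
    intro k
    induction k with
    | zero => simp
    | succ k ih => rw [pow_succ, pow_succ, mul_assoc, h, ← mul_assoc, ih, mul_assoc]
  induction q using Polynomial.induction_on' with
  | add a b ha hb => rw [map_add, map_add, add_mul, mul_add, ha, hb]
  | monomial k a =>
    rw [aeval_monomial, aeval_monomial, mul_assoc, hk, ← mul_assoc, ← mul_assoc, Algebra.commutes]

theorem kill_aux {y y' e : A} (hc : y * y' = y' * y) (h : R[X]) (a : ℤ) (h0 : aeval y h = 0)
    (h1 : aeval y' h * ((y - (y' - (a : A))) * e) = 0) :
    aeval y' h * aeval (y' - (a : A)) h * e = 0 := by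
  obtain ⟨F, hF⟩ := exists_mvlift (R := R) (fun k : Fin 2 => if k = 0 then y else y') (by
    intro k l
    fin_cases k <;> fin_cases l <;> simp [hc])
  have f0 : F (MvPolynomial.X 0) = y := by rw [hF]; simp
  have f1 : F (MvPolynomial.X 1) = y' := by rw [hF]; simp
  set u : MvPolynomial (Fin 2) R := MvPolynomial.X 0 with hu
  set v : MvPolynomial (Fin 2) R := MvPolynomial.X 1 with hv
  obtain ⟨W, hW⟩ : (u - (v - (a : MvPolynomial (Fin 2) R))) ∣
      aeval u h - aeval (v - (a : MvPolynomial (Fin 2) R)) h := by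
    rw [aeval_def, aeval_def, eval₂_eq_eval_map, eval₂_eq_eval_map]
    exact sub_dvd_eval_sub _ _ _
  have e1 : aeval v h * aeval (v - (a : MvPolynomial (Fin 2) R)) h =
      aeval v h * aeval u h - W * (aeval v h * (u - (v - (a : MvPolynomial (Fin 2) R)))) := by
    linear_combination (- aeval v h) * hW
  have e2 := congrArg F e1
  rw [map_sub, map_mul, map_mul, map_mul, map_mul, map_sub, map_sub, ← aeval_algHom_apply,
    ← aeval_algHom_apply, ← aeval_algHom_apply, map_sub, map_intCast, f0, f1, h0, mul_zero,
    zero_sub] at e2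
  rw [e2, neg_mul, mul_assoc, mul_assoc, h1, mul_zero, neg_zero]

theorem kill_eq {y y' e q : A} (hc : y * y' = y' * y) (he : e * e = e) (hy : y * e = e * y)
    (hy' : y' * e = e * y') (hq1 : q * e = q) (hq2 : e * q = q) (h1 : q * y' = y * q + e)
    (h2 : y' * q = q * y + e) (hqq : q * q = 0) (h : R[X]) (h0 : aeval y h = 0) :
    aeval y' h * e = 0 := by
  have hD : (y - y') * q = - (q * (y - y')) - e - e := by
    rw [sub_mul, mul_sub, h1, h2]; abel
  have i1 : y' * (q * (y - y') + e) = (q * (y - y') + e) * y := by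
    have : y' * (q * (y - y') + e) = (y' * q) * (y - y') + y' * e := by noncomm_ring
    rw [this, h2, hy', add_mul (q * (y - y')), mul_assoc q (y - y') y, sub_mul y y' y, ← hc]
    noncomm_ring
  have i2 : (q * (y - y') + e) * (q * (y - y') + e) = e := by
    have e1 : (q * (y - y') + e) * (q * (y - y') + e) =
      q * ((y - y') * q) * (y - y') + q * ((y - y') * e) + (e * q) * (y - y') + e * e := by
      noncomm_ring
    have e2 : (y - y') * e = e * (y - y') := by rw [sub_mul, mul_sub, hy, hy']
    rw [e1, hD, e2, ← mul_assoc q e, hq1, hq2, he]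
    have e3 : q * (-(q * (y - y')) - e - e) * (y - y') =
      - ((q * q) * (y - y') * (y - y')) - (q * e) * (y - y') - (q * e) * (y - y') := by noncomm_ring
    rw [e3, hqq, hq1]
    noncomm_ring
  rw [← i2, ← mul_assoc, aeval_inter i1, h0, mul_zero, zero_mul]

theorem swapSeq_eq_self (i : Fin n → ZMod p) (r : Fin (n - 1)) (h : i (pL r) = i (pR r)) :
    swapSeq i r = i := by
  funext k
  by_cases h1 : k = pL r
  · rw [h1, swapSeq_L, h]
  by_cases h2 : k = pR r
  · rw [h2, swapSeq_R, h]
  exact swapSeq_far i r h1 h2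

theorem KRel.step {e : (Fin n → ZMod p) → A} {ψ y} (h : KRel e ψ y) (r : Fin (n - 1))
    (cs : Multiset ℤ) (h0 : aeval (y (pL r)) (PP R cs) = 0) :
    aeval (y (pR r)) (PP R (cs + cs.map (· + 0) + cs.map (· + (p : ℤ)) + cs.map (· + (-(p : ℤ))) )) = 0 := by
  set u := y (pL r)
  set v := y (pR r)
  apply h.ext
  intro i
  rw [zero_mul]
  have base : ∀ a ∈ ({0, (p : ℤ), -(p : ℤ)} : Set ℤ),
      aeval v (PP R cs) * aeval (v - (a : A)) (PP R cs) * e i = 0 →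
      aeval v (PP R (cs + cs.map (· + 0) + cs.map (· + (p : ℤ)) + cs.map (· + (-(p : ℤ))) )) * e i = 0 := by
    intro a ha hz
    rw [PP_shift, ← map_mul] at hz
    obtain ⟨g, hg⟩ : PP R cs * PP R (cs.map (· + a)) ∣
        PP R (cs + cs.map (· + 0) + cs.map (· + (p : ℤ)) + cs.map (· + (-(p : ℤ)))) := by
      simp only [PP_add]
      rcases ha with rfl | rfl | rfl
      · exact ⟨PP R (cs.map (· + (p : ℤ))) * PP R (cs.map (· + (-(p : ℤ)))), by ring⟩
      · exact ⟨PP R (cs.map (· + 0)) * PP R (cs.map (· + (-(p : ℤ)))), by ring⟩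
      · exact ⟨PP R (cs.map (· + 0)) * PP R (cs.map (· + (p : ℤ))), by ring⟩
    rw [hg, mul_comm, map_mul, mul_assoc, hz, mul_zero]
  by_cases hi : i (pL r) = i (pR r)
  · apply base 0 (by simp)
    have hsi := swapSeq_eq_self i r hi
    have pe : ψ r * e i = e i * ψ r := by rw [h.pe, hsi]
    have p1 := h.py r i
    have p2 := h.yp r i
    rw [if_pos hi] at p1 p2
    have := kill_eq (q := ψ r * e i) (h.yy (pL r) (pR r)) (h.idem i) (h.ye _ i) (h.ye _ i)
      (by rw [mul_assoc, h.idem]) (by rw [pe, ← mul_assoc, h.idem])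
      (by rw [mul_assoc, ← h.ye, ← mul_assoc, p1, mul_assoc])
      (by rw [← mul_assoc, p2, mul_assoc, mul_assoc, h.ye])
      (by rw [mul_assoc, ← mul_assoc (e i), ← pe, mul_assoc (ψ r), h.idem, ← mul_assoc, h.q1 r i hi])
      (PP R cs) h0
    rw [Int.cast_zero, sub_zero, mul_assoc, this, mul_zero]
  · have hψ : ∀ j, j (pL r) ≠ j (pR r) → aeval v (PP R cs) * (ψ r * e j) = 0 := by
      intro j hj
      have p2 := h.yp r j
      rw [if_neg hj, add_zero] at p2
      have : v * (ψ r * e j) = (ψ r * e j) * u := by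
        rw [← mul_assoc, p2, mul_assoc, h.ye, mul_assoc]
      rw [aeval_inter this, h0, mul_zero]
    have hk : aeval v (PP R cs) * (ψ r * ψ r * e i) = 0 := by
      have hs := hψ (swapSeq i r) (by rw [swapSeq_L, swapSeq_R]; exact fun h => hi h.symm)
      rw [mul_assoc (ψ r), h.pe, ← mul_assoc (ψ r), ← mul_assoc, hs, zero_mul]
    by_cases c1 : i (pR r) = i (pL r) + 1
    · by_cases c2 : i (pR r) = 0
      · rw [h.q3 r i c1 c2] at hk
        apply base p (by simp)
        apply kill_aux (h.yy _ _) _ _ h0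
        rw [← hk]; congr 2; push_cast; abel
      · rw [h.q2 r i c1 c2] at hk
        apply base 0 (by simp)
        apply kill_aux (h.yy _ _) _ _ h0
        rw [← hk]; congr 2; push_cast; abel
    by_cases c3 : i (pL r) = i (pR r) + 1
    · by_cases c2 : i (pL r) = 0
      · rw [h.q5 r i c3 c2] at hk
        apply base (-p) (by simp)
        apply kill_aux (h.yy _ _) _ _ h0
        rw [← neg_eq_zero, ← hk, ← mul_neg, ← neg_mul]; congr 2; push_cast; abel
      · rw [h.q4 r i c3 c2] at hk
        apply base 0 (by simp)
        apply kill_aux (h.yy _ _) _ _ h0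
        rw [← neg_eq_zero, ← hk, ← mul_neg, ← neg_mul]; congr 2; push_cast; abel
    · rw [h.q6 r i hi c1 c3] at hk
      apply base 0 (by simp)
      rw [Int.cast_zero, sub_zero, mul_assoc, hk, mul_zero]

theorem KRel.kill {e : (Fin n → ZMod p) → A} {ψ y} (h : KRel e ψ y) (k : ℕ) : ∀ (hk : k < n),
    ∃ cs : Multiset ℤ, (∀ c ∈ cs, (c : ZMod p) = 0) ∧ aeval (y ⟨k, hk⟩) (PP R cs) = 0 := by
  induction k with
  | zero =>
    intro hk
    refine ⟨{0}, by simp, ?_⟩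
    rw [h.cyc hk]; simp [PP]
  | succ k ih =>
    intro hk
    obtain ⟨cs, h1, h2⟩ := ih (by omega)
    refine ⟨_, ?_, h.step ⟨k, by omega⟩ cs h2⟩
    intro c hc
    simp only [Multiset.mem_add, Multiset.mem_map] at hc
    rcases hc with ((hc | ⟨d, hd, rfl⟩) | ⟨d, hd, rfl⟩) | ⟨d, hd, rfl⟩
    · exact h1 c hc
    · simp [h1 d hd]
    · simp [h1 d hd]
    · simp [h1 d hd]

end SecP8b

section SecP8c

variable {n p : ℕ} [NeZero p] {R : Type} [CommRing R] {A : Type} [Ring A] [Algebra R A]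
open Polynomial

/-- The Jucys-Murphy elements in terms of KLR generators. -/
def xx (e : (Fin n → ZMod p) → A) (y : Fin n → A) (k : Fin n) : A :=
  y k + ∑ i, ((hat k i : ℤ) : A) * e i

theorem KRel.xx_e {e : (Fin n → ZMod p) → A} {ψ y} (h : KRel e ψ y) (k : Fin n) (i) :
    xx e y k * e i = (y k + ((hat k i : ℤ) : A)) * e i := by
  rw [xx, add_mul, add_mul, Finset.sum_mul, Finset.sum_eq_single i]
  · rw [mul_assoc, h.idem]
  · intro j _ hj; rw [mul_assoc, h.orth _ _ hj, mul_zero]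
  · simp

theorem KRel.xx_e' {e : (Fin n → ZMod p) → A} {ψ y} (h : KRel e ψ y) (k : Fin n) (i) :
    xx e y k * e i = e i * (y k + ((hat k i : ℤ) : A)) := by
  rw [h.xx_e, add_mul, mul_add, h.ye, (Int.cast_commute (hat k i) (e i)).eq]

theorem KRel.xx_comm {e : (Fin n → ZMod p) → A} {ψ y} (h : KRel e ψ y) (k l : Fin n) :
    xx e y k * xx e y l = xx e y l * xx e y k := by
  apply h.ext
  intro i
  rw [mul_assoc, mul_assoc, h.xx_e', h.xx_e', ← mul_assoc, ← mul_assoc, h.xx_e', h.xx_e',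
    mul_assoc, mul_assoc]
  congr 1
  have c1 := (Int.cast_commute (hat k i) (y l)).eq
  have c2 := (Int.cast_commute (hat l i) (y k)).eq
  have c3 := (Int.cast_commute (hat l i) ((hat k i : ℤ) : A)).eq
  rw [add_mul, add_mul, mul_add, mul_add, mul_add, mul_add, c1, c2, c3, h.yy]
  abel

theorem KRel.bound {e : (Fin n → ZMod p) → A} {ψ y} (h : KRel e ψ y) :
    ∃ M0 : ℕ, ∀ M, M0 ≤ M → ∀ k j, aeval (xx e y k) (Ga p R M (j k)) * e j = 0 := by
  choose cs h1 h2 using fun k : Fin n => h.kill (R := R) k.1 k.2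
  have key : ∀ (k : Fin n) (a : ZMod p), ∃ M0 : ℕ, ∀ M, M0 ≤ M →
      PP R ((cs k).map (· + (a.val : ℤ))) ∣ Ga p R M a := by
    intro k a
    apply dvd_Ga
    intro c hc
    rw [Multiset.mem_map] at hc
    obtain ⟨d, hd, rfl⟩ := hc
    have := h1 k d hd
    push_cast
    rw [this, zero_add, ZMod.natCast_zmod_val]
  choose N hN using key
  refine ⟨∑ k, ∑ a, N k a, fun M hM k j => ?_⟩
  have le : N k (j k) ≤ M := by
    refine le_trans ?_ hM
    refine le_trans ?_ (Finset.single_le_sum (f := fun k => ∑ a, N k a) (fun _ _ => Nat.zero_le _)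
      (Finset.mem_univ k))
    exact Finset.single_le_sum (f := fun a => N k a) (fun _ _ => Nat.zero_le _)
      (Finset.mem_univ (j k))
  obtain ⟨g, hg⟩ := hN k (j k) M le
  rw [aeval_inter (h.xx_e' k j), hg, map_mul, ← PP_shift]
  have : y k + ((hat k j : ℤ) : A) - (((j k).val : ℤ) : A) = y k := by simp [hat]
  rw [this, h2 k, zero_mul, mul_zero]

theorem KRel.pack (hR : LocHyp p R) {M : ℕ} (pk : BasePack n p R M)
    {e : (Fin n → ZMod p) → A} {ψ y} (h : KRel e ψ y)
    (hM : ∀ k j, aeval (xx e y k) (Ga p R M (j k)) * e j = 0) :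
    ∃ f : pk.B →ₐ[R] A, (∀ k, f (pk.b.x k) = xx e y k) ∧ (∀ i, f (pk.b.E i) = e i) ∧
      (∀ k, f (pk.b.yy k) = y k) ∧ KData pk f ψ ∧ (∀ h : 0 < n, f (pk.b.x ⟨0, h⟩) = 0) := by
  obtain ⟨f, hf⟩ := pk.lift A (xx e y) h.xx_comm (by
    intro k
    apply h.ext
    intro j
    obtain ⟨g, hg⟩ := Ga_dvd (p := p) (R := R) M (j k)
    rw [hg, mul_comm, map_mul, mul_assoc, hM, mul_zero, zero_mul])
  have off : ∀ i j, i ≠ j → f (pk.b.E i) * e j = 0 := by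
    intro i j hij
    obtain ⟨k, hk⟩ := Function.ne_iff.1 hij
    obtain ⟨a, b, hab⟩ := Ga_coprime hR M hk
    have e1 : aeval (xx e y k) (a * Ga p R M (i k) + b * Ga p R M (j k)) = 1 := by
      rw [hab, map_one]
    have e2 : f (pk.b.E i) * aeval (xx e y k) (a * Ga p R M (i k)) = 0 := by
      rw [mul_comm a, ← hf, aeval_algHom_apply, ← map_mul f, mul_comm,
        map_mul (aeval (pk.b.x k)), mul_right_comm, pk.kill, zero_mul, map_zero]
    have e3 : aeval (xx e y k) (b * Ga p R M (j k)) * e j = 0 := by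
      rw [map_mul, mul_assoc, hM, mul_zero]
    calc f (pk.b.E i) * e j = f (pk.b.E i) *
          aeval (xx e y k) (a * Ga p R M (i k) + b * Ga p R M (j k)) * e j := by rw [e1, mul_one]
      _ = f (pk.b.E i) * aeval (xx e y k) (a * Ga p R M (i k)) * e j +
          f (pk.b.E i) * (aeval (xx e y k) (b * Ga p R M (j k)) * e j) := by
        rw [map_add, mul_add, add_mul, mul_assoc _ _ (e j), mul_assoc _ _ (e j)]
      _ = 0 := by rw [e2, e3, zero_mul, mul_zero, add_zero]
  have on : ∀ i, f (pk.b.E i) * e i = e i := by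
    intro i
    have := congrArg (fun t => f t * e i) pk.b.total
    simp only [map_sum, map_one, one_mul, Finset.sum_mul] at this
    rw [Finset.sum_eq_single i] at this
    · exact this
    · intro j _ hj; exact off j i hj
    · simp
  have hE : ∀ i, f (pk.b.E i) = e i := by
    intro i
    rw [← mul_one (f _), ← h.total, Finset.mul_sum, Finset.sum_eq_single i]
    · exact on i
    · intro j _ hj; exact off i j hj.symm
    · simp
  have hy : ∀ k, f (pk.b.yy k) = y k := by
    intro k
    rw [BaseData.yy, BaseData.T, Tm, map_sub, map_sum, hf, xx]
    simp only [map_mul, map_intCast, hE, add_sub_cancel_right]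
  have hd : ∀ k l i, f (pk.b.d k l) * e i = if i k = i l then e i else 0 := by
    intro k l i
    rw [← hE, ← map_mul, pk.b.d_E]; split_ifs <;> simp
  refine ⟨f, hf, hE, hy, ⟨?_, ?_, h.far, ?_⟩, ?_⟩
  · intro r
    have px : ∀ k l i, ψ r * xx e y k * e i = ψ r * y k * e i + ((hat k i : ℤ) : A) * (ψ r * e i) ∧
        xx e y l * ψ r * e i = y l * ψ r * e i +
          ((hat l (swapSeq i r) : ℤ) : A) * (ψ r * e i) := by
      intro k l i
      constructor
      · rw [mul_assoc, h.xx_e, add_mul, mul_add, ← mul_assoc, ← mul_assoc (ψ r) (Int.cast _),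
          (Int.cast_commute (hat k i) (ψ r)).eq.symm, mul_assoc (Int.cast _)]
      · rw [mul_assoc, h.pe, ← mul_assoc, h.xx_e, add_mul, add_mul, mul_assoc, mul_assoc (Int.cast _),
          ← h.pe, ← mul_assoc]
    refine ⟨?_, ?_, ?_, ?_⟩
    · intro i
      simp only [RingHom.coe_coe, hE, h.pe]
    · simp only [RingHom.coe_coe, hf]
      apply h.ext; intro i
      rw [add_mul, (px (pR r) (pR r) i).1, (px (pL r) (pL r) i).2, hd, h.py]
      simp only [hat, swapSeq_L]; abel
    · simp only [RingHom.coe_coe, hf]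
      apply h.ext; intro i
      rw [add_mul, (px (pL r) (pL r) i).1, (px (pR r) (pR r) i).2, hd, h.yp]
      simp only [hat, swapSeq_R]; abel
    · intro k k1 k2
      simp only [RingHom.coe_coe, hf]
      apply h.ext; intro i
      rw [(px k k i).1, (px k k i).2, h.pyfar r k k1 k2]
      simp only [hat, swapSeq_far i r k1 k2]
  · intro r
    apply h.ext; intro i
    have q := pk.b.Q_E (pL r) (pR r) i
    obtain ⟨q1, q2, q3, q4, q5, q6⟩ := q
    by_cases hi : i (pL r) = i (pR r)
    · rw [h.q1 r i hi, ← hE, ← map_mul, q1 hi, map_zero]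
    by_cases c1 : i (pR r) = i (pL r) + 1
    · by_cases c2 : i (pR r) = 0
      · rw [h.q3 r i c1 c2, ← hE, ← map_mul, q3 c1 c2, map_mul, map_sub, map_add, map_natCast,
          hy, hy]
      · rw [h.q2 r i c1 c2, ← hE, ← map_mul, q2 c1 c2, map_mul, map_sub, hy, hy]
    by_cases c3 : i (pL r) = i (pR r) + 1
    · by_cases c2 : i (pL r) = 0
      · rw [h.q5 r i c3 c2, ← hE, ← map_mul, q5 c3 c2, map_mul, map_sub, map_add, map_natCast,
          hy, hy]
      · rw [h.q4 r i c3 c2, ← hE, ← map_mul, q4 c3 c2, map_mul, map_sub, hy, hy]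
    · rw [h.q6 r i hi c1 c3, ← hE, ← map_mul, q6 hi c1 c3]
  · intro r hr
    apply h.ext; intro i
    obtain ⟨b1, b2, b3⟩ := pk.b.br_E (pL r) (pR r) (pM r hr) i
    by_cases c : i (pM r hr) = i (pL r) ∧
      (i (pR r) = i (pL r) + 1 ∨ i (pL r) = i (pR r) + 1)
    · obtain ⟨c0, c | c⟩ := c
      · rw [h.b1 r hr i c0 c, ← hE, ← map_mul, b1 c0 c, map_neg]
      · rw [h.b2 r hr i c0 c, ← hE, ← map_mul, b2 c0 c]
    · rw [h.b3 r hr i c, ← hE, ← map_mul, b3 c, map_zero]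
  · intro hn
    rw [hf]
    apply h.ext; intro i
    rw [h.xx_e, h.cyc hn, zero_add, zero_mul]
    by_cases hi : i ⟨0, hn⟩ = 0
    · simp [hat, hi]
    · rw [h.cyc1 hn i hi, mul_zero]

end SecP8c

section SecP9

variable {n p : ℕ} [NeZero p] {R : Type} [CommRing R] {A : Type} [Ring A] [Algebra R A]
open Polynomial

/-- Coxeter relations. -/
structure SRel (n : ℕ) (s : ℕ → A) : Prop where
  sq : ∀ r, r + 1 < n → s r * s r = 1
  br : ∀ r, r + 2 < n → s r * s (r + 1) * s r = s (r + 1) * s r * s (r + 1)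
  far : ∀ r t, r + 1 < t → t + 1 < n → s r * s t = s t * s r

/-- The Jucys-Murphy elements. -/
def JM (s : ℕ → A) : ℕ → A
  | 0 => 0
  | r + 1 => s r * JM s r * s r + s r

namespace SRel
variable {s : ℕ → A}

theorem hi (h : SRel n s) (k : ℕ) : ∀ t, k < t → t + 1 < n → s t * JM s k = JM s k * s t := by
  induction k with
  | zero => intro t _ _; simp [JM]
  | succ k ih =>
    intro t h1 h2
    have c1 : Commute (s t) (s k) := (h.far k t h1 h2).symm
    have c2 : Commute (s t) (JM s k) := ih t (by omega) h2
    exact (((c1.mul_right c2).mul_right c1).add_right c1).eq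

theorem lo (h : SRel n s) (t k : ℕ) : ∀ (_ : t + 2 + k < n), s t * JM s (t + 2 + k) = JM s (t + 2 + k) * s t := by
  induction k with
  | zero =>
    intro hk
    have hk : t + 2 < n := hk
    have b := h.br t hk
    have c := h.hi t (t + 1) (by omega) hk
    have q0 := h.sq t (by omega)
    have q1 := h.sq (t + 1) hk
    change s t * (s (t + 1) * (s t * JM s t * s t + s t) * s (t + 1) + s (t + 1)) =
      (s (t + 1) * (s t * JM s t * s t + s t) * s (t + 1) + s (t + 1)) * s t
    generalize s t = a at *
    generalize s (t + 1) = b' at *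
    generalize JM s t = l at *
    have e1 : a * (b' * (a * l * a + a) * b' + b') =
        (a * b' * a) * l * a * b' + (a * b' * a) * b' + a * b' := by noncomm_ring
    have e2 : (b' * (a * l * a + a) * b' + b') * a =
        b' * a * l * (a * b' * a) + b' * (a * b' * a) + b' * a := by noncomm_ring
    rw [e1, e2, b]
    have e3 : b' * a * b' * l * a * b' = b' * a * (b' * l) * a * b' := by noncomm_ring
    have e4 : b' * a * l * (b' * a * b') = b' * a * (l * b') * a * b' := by noncomm_ring
    have e5 : b' * a * b' * b' = b' * a * (b' * b') := by noncomm_ring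
    have e6 : b' * (b' * a * b') = (b' * b') * a * b' := by noncomm_ring
    rw [e3, e4, e5, e6, c, q1, one_mul, mul_one]
    abel
  | succ k ih =>
    intro hk
    have c1 : Commute (s t) (s (t + 2 + k)) := h.far t _ (by omega) hk
    have c2 : Commute (s t) (JM s (t + 2 + k)) := ih (by omega)
    exact (((c1.mul_right c2).mul_right c1).add_right c1).eq

theorem comm_lt (h : SRel n s) (k : ℕ) : ∀ m, k < m → m < n → JM s k * JM s m = JM s m * JM s k := by
  induction k with
  | zero => intro m _ _; simp [JM]
  | succ k ih =>
    intro m h1 h2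
    have c1 : Commute (s k) (JM s m) := by
      obtain ⟨d, rfl⟩ := Nat.exists_eq_add_of_le (show k + 2 ≤ m from h1)
      exact h.lo k d h2
    have c2 : Commute (JM s k) (JM s m) := ih m (by omega) h2
    exact (((c1.mul_left c2).mul_left c1).add_left c1).eq

theorem comm (h : SRel n s) (k m : ℕ) (hk : k < n) (hm : m < n) : JM s k * JM s m = JM s m * JM s k := by
  rcases lt_trichotomy k m with h1 | h1 | h1
  · exact h.comm_lt k m h1 hm
  · rw [h1]
  · exact (h.comm_lt m k h1 hk).symm

theorem x1 (h : SRel n s) (r : ℕ) (hr : r + 1 < n) : s r * JM s (r + 1) = JM s r * s r + 1 := by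
  change s r * (s r * JM s r * s r + s r) = _
  rw [mul_add, mul_assoc, ← mul_assoc, h.sq r hr, one_mul]

theorem x2 (h : SRel n s) (r : ℕ) (hr : r + 1 < n) : JM s (r + 1) * s r = s r * JM s r + 1 := by
  change (s r * JM s r * s r + s r) * s r = _
  rw [add_mul, mul_assoc, h.sq r hr, mul_one]

end SRel

theorem kill_s {y y' s : A} (hc : y * y' = y' * y) (h1 : s * y' = y * s + 1)
    (h2 : y' * s = s * y + 1) (hss : s * s = 1) (cs : Multiset ℤ)
    (h0 : aeval y (PP R cs) = 0) : ∃ ds : Multiset ℤ, aeval y' (PP R ds) = 0 := by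
  have hD : (y - y') * s = - (s * (y - y')) - 1 - 1 := by
    rw [sub_mul, mul_sub, h1, h2]; abel
  have i1 : y' * (s * (y - y') + 1) = (s * (y - y') + 1) * y := by
    have : y' * (s * (y - y') + 1) = (y' * s) * (y - y') + y' := by noncomm_ring
    rw [this, h2, add_mul (s * (y - y')), mul_assoc s (y - y') y, sub_mul y y' y, ← hc]
    noncomm_ring
  have i2 : (s * (y - y') + 1) * (s * (y - y') + 1) =
      - ((y - (y' - ((-1 : ℤ) : A))) * (y - (y' - ((1 : ℤ) : A)))) := by
    have e1 : (s * (y - y') + 1) * (s * (y - y') + 1) =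
      s * ((y - y') * s) * (y - y') + s * (y - y') + s * (y - y') + 1 := by
      noncomm_ring
    rw [e1, hD]
    have e3 : s * (-(s * (y - y')) - 1 - 1) * (y - y') =
      - ((s * s) * (y - y') * (y - y')) - s * (y - y') - s * (y - y') := by noncomm_ring
    rw [e3, hss]
    push_cast
    noncomm_ring
  have i3 : aeval y' (PP R cs) * ((s * (y - y') + 1) * (s * (y - y') + 1)) = 0 := by
    rw [← mul_assoc, aeval_inter i1, h0, mul_zero, zero_mul]
  rw [i2, mul_neg, neg_eq_zero] at i3
  have k1 := kill_aux hc _ _ h0 i3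
  rw [PP_shift, ← map_mul, ← PP_add] at k1
  have k2 := kill_aux (e := 1) hc (PP R (cs + cs.map (· + (-1)))) 1
    (by rw [PP_add, map_mul, h0, zero_mul]) (by rw [mul_one]; exact k1)
  rw [PP_shift, mul_one, ← map_mul, ← PP_add] at k2
  exact ⟨_, k2⟩

namespace SRel
variable {s : ℕ → A}

theorem kill (h : SRel n s) (k : ℕ) : ∀ (_ : k < n), ∃ cs : Multiset ℤ, aeval (JM s k) (PP R cs) = 0 := by
  induction k with
  | zero =>
    intro hk
    exact ⟨{0}, by simp [PP, JM]⟩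
  | succ k ih =>
    intro hk
    obtain ⟨cs, h2⟩ := ih (by omega)
    exact kill_s (h.comm k (k + 1) (by omega) hk) (h.x1 k hk) (h.x2 k hk) (h.sq k hk) cs h2

theorem bound (h : SRel n s) : ∃ M0 : ℕ, ∀ M, M0 ≤ M → ∀ k : Fin n, aeval (JM s k.1) (GG p R M) = 0 := by
  choose cs h2 using fun k : Fin n => h.kill (R := R) k.1 k.2
  choose N hN using fun k : Fin n => dvd_GG (p := p) (R := R) (cs k)
  refine ⟨∑ k, N k, fun M hM k => ?_⟩
  have le : N k ≤ M := le_trans (Finset.single_le_sum (f := fun k => N k)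
    (fun _ _ => Nat.zero_le _) (Finset.mem_univ k)) hM
  obtain ⟨g, hg⟩ := hN k M le
  have := h2 k
  rw [PP] at this
  rw [hg, map_mul, this, zero_mul]

theorem pack (h : SRel n s) {M : ℕ} (pk : BasePack n p R M)
    (hM : ∀ k : Fin n, aeval (JM s k.1) (GG p R M) = 0) :
    ∃ f : pk.B →ₐ[R] A, (∀ k, f (pk.b.x k) = JM s k.1) ∧ SData pk f (fun r => s r.1) := by
  obtain ⟨f, hf⟩ := pk.lift A (fun k => JM s k.1) (fun k l => h.comm _ _ k.2 l.2) hM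
  have hr : ∀ r : Fin (n - 1), r.1 + 1 < n := fun r => by have := r.2; omega
  refine ⟨f, hf, ?_, ?_, ?_, ?_, ?_, ?_⟩
  · intro r; rw [hf, hf]; exact h.x1 r.1 (hr r)
  · intro r; rw [hf, hf]; exact h.x2 r.1 (hr r)
  · intro r k k1 k2
    rw [hf]
    have k1' : k.1 ≠ r.1 := fun e => k1 (Fin.ext e)
    have k2' : k.1 ≠ r.1 + 1 := fun e => k2 (Fin.ext e)
    rcases lt_or_gt_of_ne k1' with c | c
    · exact h.hi k.1 r.1 c (hr r)
    · obtain ⟨d, hd⟩ := Nat.exists_eq_add_of_le (show r.1 + 2 ≤ k.1 by omega)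
      have := h.lo r.1 d (by rw [← hd]; exact k.2)
      rw [hd]; exact this
  · intro r; exact h.sq r.1 (hr r)
  · intro r t ht; exact h.far r.1 t.1 ht (hr t)
  · intro r h'; exact h.br r.1 (by omega)

end SRel

end SecP9

section SecP10

/-- adjacent transposition, junk value `1` out of range -/
def adj (n r : ℕ) : Equiv.Perm (Fin n) :=
  if h : r + 1 < n then Equiv.swap ⟨r, by omega⟩ ⟨r + 1, h⟩ else 1

theorem adj_eq (n r : ℕ) (h : r + 1 < n) : adj n r = Equiv.swap ⟨r, by omega⟩ ⟨r + 1, h⟩ :=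
  dif_pos h

theorem srel_perm (R : Type) [CommRing R] (n : ℕ) :
    SRel n (fun r => MonoidAlgebra.of R (Equiv.Perm (Fin n)) (adj n r)) := by
  refine ⟨?_, ?_, ?_⟩
  · intro r hr
    rw [← map_mul, adj_eq n r hr, swap_rel_sq r hr, map_one]
  · intro r hr
    rw [← map_mul, ← map_mul, ← map_mul, ← map_mul, adj_eq n r (by omega), adj_eq n (r + 1) hr]
    congr 1
    exact swap_rel_braid r hr
  · intro r t h1 h2
    rw [← map_mul, ← map_mul, adj_eq n r (by omega), adj_eq n t h2]
    congr 1
    exact swap_rel_far r t h1 h2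

theorem perm_algHom {n : ℕ} {R A : Type} [CommRing R] [Ring A] [Algebra R A] (s : Fin (n - 1) → A)
    (sq : ∀ r, s r * s r = 1)
    (far : ∀ r t : Fin (n - 1), r.1 + 1 < t.1 → s r * s t = s t * s r)
    (br : ∀ (r : Fin (n - 1)) (hr : r.1 + 1 < n - 1),
      s r * s ⟨r.1 + 1, hr⟩ * s r = s ⟨r.1 + 1, hr⟩ * s r * s ⟨r.1 + 1, hr⟩) :
    ∃ Θ : MonoidAlgebra R (Equiv.Perm (Fin n)) →ₐ[R] A, ∀ r : Fin (n - 1),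
      Θ (MonoidAlgebra.of R _ (adj n r.1)) = s r := by
  let u : Fin (n - 1) → Aˣ := fun r => ⟨s r, s r, sq r, sq r⟩
  let v : ℕ → Aˣ := fun r => if h : r < n - 1 then u ⟨r, h⟩ else 1
  have hv : ∀ r (h : r < n - 1), v r = u ⟨r, h⟩ := fun r h => dif_pos h
  obtain ⟨φ, hφ⟩ := perm_lift n v
    (by
      intro r hr
      rw [hv r (by omega)]
      exact Units.ext (sq _))
    (by
      intro r hr
      rw [hv r (by omega), hv (r + 1) (by omega)]
      exact Units.ext (br ⟨r, by omega⟩ (by simp only; omega)))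
    (by
      intro r t h1 h2
      rw [hv r (by omega), hv t (by omega)]
      exact Units.ext (far _ _ h1))
  refine ⟨MonoidAlgebra.lift R A _ ((Units.coeHom A).comp φ), fun r => ?_⟩
  have hr : r.1 + 1 < n := by have := r.2; omega
  rw [MonoidAlgebra.lift_of, adj_eq n r.1 hr, MonoidHom.comp_apply, hφ, hv r.1 r.2]
  rfl

theorem perm_algHom_ext {n : ℕ} {R A : Type} [CommRing R] [Ring A] [Algebra R A]
    (f g : MonoidAlgebra R (Equiv.Perm (Fin n)) →ₐ[R] A)
    (h : ∀ r : Fin (n - 1), f (MonoidAlgebra.of R _ (adj n r.1)) =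
      g (MonoidAlgebra.of R _ (adj n r.1))) : f = g := by
  apply MonoidAlgebra.algHom_ext'
  have := perm_induction (MonoidHom.eqLocusM
    ((f : MonoidAlgebra R (Equiv.Perm (Fin n)) →* A).comp (MonoidAlgebra.of R _))
    ((g : MonoidAlgebra R (Equiv.Perm (Fin n)) →* A).comp (MonoidAlgebra.of R _))) (by
      intro r hr
      have := h ⟨r, by omega⟩
      rw [adj_eq n r hr] at this
      exact this)
  ext x
  have hx : x ∈ (⊤ : Submonoid (Equiv.Perm (Fin n))) := trivial
  rw [← this] at hx
  exact hx
  exact Subsingleton.elim _ _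

theorem quot_algHom_ext {n p : ℕ} [NeZero p] {R A : Type} [CommRing R] [Ring A] [Algebra R A]
    (f g : RingQuot (S1Rel R n p) →ₐ[R] A)
    (hE : ∀ i, f (RingQuot.mkAlgHom R (S1Rel R n p) (kE R i)) =
      g (RingQuot.mkAlgHom R (S1Rel R n p) (kE R i)))
    (hpsi : ∀ r, f (RingQuot.mkAlgHom R (S1Rel R n p) (kPsi R r)) =
      g (RingQuot.mkAlgHom R (S1Rel R n p) (kPsi R r)))
    (hy : ∀ k, f (RingQuot.mkAlgHom R (S1Rel R n p) (kY R k)) =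
      g (RingQuot.mkAlgHom R (S1Rel R n p) (kY R k))) : f = g := by
  apply RingQuot.ringQuot_ext'
  apply FreeAlgebra.hom_ext
  funext t
  cases t with
  | _ => first | exact hE _ | exact hpsi _ | exact hy _

theorem main_equiv {n p : ℕ} [NeZero p] {R : Type} [CommRing R] (hR : LocHyp p R) :
    Nonempty (MonoidAlgebra R (Equiv.Perm (Fin n)) ≃ₐ[R] RingQuot (S1Rel R n p)) := by
  have hk := krel_quot R n p
  obtain ⟨M1, h1⟩ := hk.bound (R := R)
  have hs := srel_perm R n
  obtain ⟨M2, h2⟩ := hs.bound (R := R) (p := p)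
  obtain ⟨pk⟩ := exists_pack hR n (max M1 M2)
  obtain ⟨f, fx, fE, fy, hK, f0⟩ := hk.pack hR pk (h1 _ (le_max_left _ _))
  obtain ⟨g, gx, hS⟩ := hs.pack pk (h2 _ (le_max_right _ _))
  -- the map from the quotient to the group algebra
  obtain ⟨ψ, hl⟩ := link_exists_psi pk g _
  have hKg := hS.toK hl
  obtain ⟨Ψ, ΨE, Ψp, Ψy⟩ := hKg.lift hR (by intro h; rw [gx]; rfl)
  -- the map from the group algebra to the quotient
  obtain ⟨s, hls⟩ : ∃ s, Link pk f s (fun r => RingQuot.mkAlgHom R (S1Rel R n p) (kPsi R r)) :=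
    ⟨_, fun r => rfl⟩
  have hSf := hK.toS hls
  obtain ⟨Θ, hΘ⟩ := perm_algHom (R := R) s hSf.sq hSf.far hSf.br
  -- compatibility with the base ring
  have c1 : Θ.comp g = f := by
    apply pk.ext
    intro k
    obtain ⟨k, hk⟩ := k
    rw [AlgHom.comp_apply, gx]
    induction k with
    | zero => rw [f0 hk]; exact map_zero Θ
    | succ k ih =>
      have := hSf.rec_x ⟨k, by omega⟩
      have e1 : f (pk.b.x ⟨k + 1, hk⟩) = _ := this
      have ih' := ih (by omega)
      have hT := hΘ ⟨k, by omega⟩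
      rw [e1]
      simp only [JM, map_add, map_mul]
      simp only at ih' hT
      rw [ih', hT]
      rfl
  have c2 : Ψ.comp f = g := by
    apply pk.ext
    intro k
    rw [AlgHom.comp_apply, fx, xx, map_add, Ψy, map_sum]
    simp only [map_mul, map_intCast, ΨE]
    rw [BaseData.yy, map_sub, BaseData.T, Tm, map_sum]
    simp only [map_mul, map_intCast, sub_add_cancel]
  have c1' : ∀ b, Θ (g b) = f b := fun b => by rw [← c1]; rfl
  have c2' : ∀ b, Ψ (f b) = g b := fun b => by rw [← c2]; rfl
  refine ⟨AlgEquiv.ofAlgHom Θ Ψ ?_ ?_⟩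
  · apply quot_algHom_ext
    · intro i
      rw [AlgHom.comp_apply, ΨE, c1', fE]; rfl
    · intro r
      rw [AlgHom.comp_apply, Ψp]
      have a1 := congrArg Θ (hl r)
      rw [hΘ, map_sub, map_mul, c1', c1', hls r] at a1
      have a2 := sub_left_injective a1
      have hu : IsUnit (f (pk.b.w (pL r) (pR r))) := (pk.b.w_unit _ _).map f
      exact (hu.mul_right_cancel a2).symm
    · intro k
      rw [AlgHom.comp_apply, Ψy, c1', fy]; rfl
  · apply perm_algHom_ext
    intro r
    rw [AlgHom.comp_apply, hΘ, hls r, map_sub, map_mul, c2', c2', Ψp, ← hl r]; rfl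

end SecP10

/-- for an odd prime `p`, the group algebra `ℤ_(p) S_n` (where
`ℤ_(p)` is any model of the localisation of `ℤ` at the submonoid of integers prime
to `p`) is isomorphic as a `ℤ_(p)`-algebra to the algebra presented by the generators
`f_i, ψ_r, y_k` and the listed relations. -/
theorem symmetric_group_KLR_presentation
    (p : ℕ) (hp : p.Prime) (hodd : Odd p) [NeZero p] (n : ℕ)
    (Zp : Type) [CommRing Zp] [Algebra ℤ Zp] (S : Submonoid ℤ)
    (hS : (S : Set ℤ) = {x : ℤ | ¬(p : ℤ) ∣ x}) [IsLocalization S Zp] :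
    Nonempty (MonoidAlgebra Zp (Equiv.Perm (Fin n)) ≃ₐ[Zp] RingQuot (S1Rel Zp n p)) := by
  exact main_equiv (locHyp_of p hp hodd Zp S hS)

end Paper
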